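/- arXiv:math/9304212 — 2 statements merged into one kernel-verified Lean document; each statement's English description precedes it below -/
import Mathlib

section
/- Let K be an algebraically closed field and let (τ_n) be a Zariski geometry on K such that every Zariski-closed subset of K^n is τ_n-closed. Then every τ_2-closed irreducible subset C of K² of dimension 1 is contained in the zero set {p ∈ K² : f(p) = 0} of some nonzero polynomial f ∈ K[X,Y]. -/
open Topology

/-- A subset of `K^n` is *Zariski-closed* (an affine algebraic set) if it is the common
zero set of a set of polynomials in `n` variables. -/
def ZariskiClosedSet (K : Type*) [Field K] {n : ℕ} (C : Set (Fin n → K)) : Prop :=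
  ∃ S : Set (MvPolynomial (Fin n) K), C = {x | ∀ f ∈ S, MvPolynomial.eval x f = 0}

/-- The Zariski topology on `K^n`: the topology whose closed sets are the affine
algebraic sets. -/
def zariskiTopology (K : Type*) [Field K] (n : ℕ) : TopologicalSpace (Fin n → K) :=
  TopologicalSpace.generateFrom {U | ZariskiClosedSet K Uᶜ}

/-- The dimension of a subset `S` of a topological space: the topological Krull
dimension of `S` with the subspace topology (the maximal length of a chain of
irreducible closed subsets). -/
noncomputable def setKrullDim {X : Type*} (t : TopologicalSpace X) (S : Set X) : WithBot ℕ∞ :=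
  @topologicalKrullDim S (t.induced Subtype.val)

/-- `T` is an irreducible component of `S` (w.r.t. the topology `t`) if `T` is a maximal
irreducible subset of `S`. -/
def IsIrredComponentOf {X : Type*} (t : TopologicalSpace X) (T S : Set X) : Prop :=
  Maximal (fun T => T ⊆ S ∧ @IsIrreducible X t T) T

/-- A *Zariski geometry* on a set `X`: a Noetherian topology on each Cartesian power
`X^n` satisfying axioms (Z0)-(Z3). -/
structure ZariskiGeometry (X : Type*) where
  τ : ∀ n : ℕ, TopologicalSpace (Fin n → X)
  noetherian : ∀ n, @TopologicalSpace.NoetherianSpace (Fin n → X) (τ n)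
  /-- (Z0): every map `X^n → X^m` each of whose coordinates is a constant or a
  coordinate projection is continuous. -/
  Z0_cont : ∀ (n m : ℕ) (g : Fin m → (Fin n ⊕ X)),
    Continuous[τ n, τ m] (fun x i => Sum.elim (fun j => x j) id (g i))
  /-- (Z0): the diagonals are closed. -/
  Z0_diag : ∀ (n : ℕ) (i j : Fin n), IsClosed[τ n] {x | x i = x j}
  /-- (Z1): for a (nonempty) closed `C ⊆ X^n` and a coordinate projection
  `π : X^n → X^k`, there is a proper closed subset `F` of `cl(π C)` with
  `cl(π C) \ F ⊆ π C`. -/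
  Z1 : ∀ (n k : ℕ) (h : k ≤ n) (C : Set (Fin n → X)), IsClosed[τ n] C → C.Nonempty →
    ∃ F : Set (Fin k → X), IsClosed[τ k] F ∧
      F ⊂ closure[τ k] ((fun x => x ∘ Fin.castLE h) '' C) ∧
      closure[τ k] ((fun x => x ∘ Fin.castLE h) '' C) \ F ⊆ (fun x => x ∘ Fin.castLE h) '' C
  /-- (Z2): `X` is irreducible. -/
  Z2_irred : @IrreducibleSpace (Fin 1 → X) (τ 1)
  /-- (Z2): uniform one-dimensionality. -/
  Z2 : ∀ (n : ℕ) (C : Set (Fin (n + 1) → X)), IsClosed[τ (n + 1)] C →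
    ∃ m : ℕ, ∀ a : Fin n → X, {b : X | Fin.snoc a b ∈ C} = Set.univ ∨
      ({b : X | Fin.snoc a b ∈ C}.Finite ∧ {b : X | Fin.snoc a b ∈ C}.ncard ≤ m)
  /-- (Z3) (Dimension theorem): every irreducible component of the intersection of a
  closed irreducible `U ⊆ X^n` with a diagonal has dimension `≥ dim U - 1`. -/
  Z3 : ∀ (n : ℕ) (U : Set (Fin n → X)) (i j : Fin n), IsClosed[τ n] U →
    @IsIrreducible _ (τ n) U →
    ∀ T : Set (Fin n → X), IsIrredComponentOf (τ n) T (U ∩ {x | x i = x j}) →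
      setKrullDim (τ n) U ≤ setKrullDim (τ n) T + 1

/-!
In suitable linear coordinates the vertical direction is not asymptotic to `C` and only finitely
many points of `C` have a vertical or a horizontal tangent. Let `y₁(x), …, yₘ(x)` be the points of
the fibre of `C` over a generic `x`. For all but finitely many `t` the function
`x ↦ ∏ i, (t - yᵢ(x))` has the same zeros as the polynomial `∏ a ∈ A, (x - a)`, where `A` is the set
of abscissas of the points of `C` at height `t`; the tangent conditions make the zeros of both
simple, so their quotient has neither zeros nor poles. Such a function is constant, because
otherwise both it and its inverse would vanish at infinity. Hence `∏ i, (t - yᵢ(x))` is a polynomial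
in `x` for `m` different values of `t`, and by Lagrange interpolation `∏ i, (z - yᵢ(x))` is a
polynomial in `x` and `z`, which vanishes on `C`.

The axioms only give the dimension theorem for diagonals. To intersect with the zero set of a
polynomial, one first shows that a map with Zariski-closed graph can be adjoined as a coordinate
without spoiling irreducibility and dimension; for `a x + b` this comes from the
incidence geometry of lines, through the identity `a x + b = c x + ((a - c) x + b)`.
-/

namespace ZariskiGeometry

open TopologicalSpace

/-! ### Irreducible closed sets and dimension -/

section Irreducible

variable {S T : Type*} [TopologicalSpace S] [TopologicalSpace T]

/-- An irreducible closed subset of a topological space, the analogue of a subvariety. -/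
structure IsIrredClosed (A : Set S) : Prop where
  isClosed : IsClosed A
  isIrreducible : IsIrreducible A

theorem IsIrredClosed.nonempty {A : Set S} (hA : IsIrredClosed A) : A.Nonempty :=
  hA.isIrreducible.nonempty

theorem isIrredClosed_singleton [T1Space S] (a : S) : IsIrredClosed {a} :=
  ⟨isClosed_singleton, isIrreducible_singleton⟩

theorem IsIrredClosed.subset_or_subset {A B C : Set S} (hA : IsIrredClosed A) (hB : IsClosed B)
    (hC : IsClosed C) (h : A ⊆ B ∪ C) : A ⊆ B ∨ A ⊆ C :=
  isPreirreducible_iff_isClosed_union_isClosed.1 hA.isIrreducible.isPreirreducible B C hB hC h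

theorem IsIrredClosed.subset_of_diff_subset {A B F : Set S} (hA : IsIrredClosed A)
    (hB : IsClosed B) (hF : IsClosed F) (hAF : ¬A ⊆ F) (h : A \ F ⊆ B) : A ⊆ B :=
  (hA.subset_or_subset hB hF (by rwa [Set.union_comm, ← Set.sdiff_subset_iff])).resolve_right hAF

theorem IsIrredClosed.closure_image {A : Set S} (hA : IsIrredClosed A) {f : S → T}
    (hf : Continuous f) : IsIrredClosed (closure (f '' A)) :=
  ⟨isClosed_closure, (hA.isIrreducible.image f hf.continuousOn).closure⟩

theorem IsIrredClosed.eq_singleton_of_finite [T1Space S] {A : Set S} (hA : IsIrredClosed A)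
    (hfin : A.Finite) {a : S} (ha : a ∈ A) : A = {a} := by
  have hsub : A ⊆ {a} ∪ A \ {a} := by simp [ha]
  refine (Set.singleton_subset_iff.2 ha).antisymm' ?_
  refine (hA.subset_or_subset isClosed_singleton hfin.sdiff.isClosed hsub).resolve_right ?_
  exact fun h => (h ha).2 rfl

variable [NoetherianSpace S]

theorem exists_isIrredComponentOf {A : Set S} (hA : IsClosed A) {a : S} (ha : a ∈ A) :
    ∃ B, IsIrredClosed B ∧ a ∈ B ∧ IsIrredComponentOf inferInstance B A := by
  obtain ⟨F, hF, hclosed, hirred, rfl⟩ :=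
    NoetherianSpace.exists_finite_set_isClosed_irreducible hA
  obtain ⟨B₀, hB₀, haB₀⟩ := ha
  obtain ⟨B, ⟨hBF, haB⟩, hmax⟩ :=
    (hF.subset (Set.sep_subset F fun B => a ∈ B)).exists_maximal ⟨B₀, hB₀, haB₀⟩
  refine ⟨B, ⟨hclosed B hBF, hirred B hBF⟩, haB,
    ⟨Set.subset_sUnion_of_mem hBF, hirred B hBF⟩, ?_⟩
  rintro B' ⟨hB'F, hB'⟩ hBB'
  lift F to Finset (Set S) using hF
  obtain ⟨B'', hB'', hsub⟩ := isIrreducible_iff_sUnion_isClosed.1 hB' F hclosed hB'F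
  exact hsub.trans (hmax ⟨hB'', hsub (hBB' haB)⟩ (hBB'.trans hsub))

theorem exists_isIrredClosed_subset_closure_image {D : Set S} (hD : IsClosed D) {f : S → T}
    {B F : Set T} (hB : IsIrredClosed B) (hF : IsClosed F) (hBF : ¬B ⊆ F)
    (hsurj : B \ F ⊆ f '' D) : ∃ A, IsIrredClosed A ∧ A ⊆ D ∧ B ⊆ closure (f '' A) := by
  classical
  obtain ⟨𝒞, h𝒞, hclosed, hirred, rfl⟩ :=
    NoetherianSpace.exists_finite_set_isClosed_irreducible hD
  lift 𝒞 to Finset (Set S) using h𝒞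
  have hcover : B ⊆ ⋃ A ∈ 𝒞, closure (f '' A) := by
    refine hB.subset_of_diff_subset (isClosed_biUnion_finset fun _ _ => isClosed_closure) hF hBF
      fun b hb => ?_
    obtain ⟨a, ⟨A, hA, haA⟩, rfl⟩ := hsurj hb
    exact Set.mem_biUnion hA (subset_closure (Set.mem_image_of_mem f haA))
  obtain ⟨z, hz, hBz⟩ := isIrreducible_iff_sUnion_isClosed.1 hB.isIrreducible
    (𝒞.image fun A => closure (f '' A)) (by simp) (by simpa using hcover)
  obtain ⟨A, hA, rfl⟩ := Finset.mem_image.1 hz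
  exact ⟨A, ⟨hclosed A hA, hirred A hA⟩, Set.subset_sUnion_of_mem hA, hBz⟩

theorem exists_isIrredClosed_infinite_image {ι : Type*} {D D₀ : Set S} (hD : IsClosed D)
    (hD₀ : D₀ ⊆ D) {f : S → ι} (hinf : (f '' D₀).Infinite) :
    ∃ A, IsIrredClosed A ∧ A ⊆ D ∧ (f '' (A ∩ D₀)).Infinite := by
  obtain ⟨𝒞, h𝒞, hclosed, hirred, rfl⟩ :=
    NoetherianSpace.exists_finite_set_isClosed_irreducible hD
  by_contra! h
  refine hinf ((h𝒞.biUnion fun A hA =>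
    h A ⟨hclosed A hA, hirred A hA⟩ (Set.subset_sUnion_of_mem hA)).subset ?_)
  rintro _ ⟨a, ha, rfl⟩
  obtain ⟨A, hA, haA⟩ := hD₀ ha
  exact Set.mem_biUnion hA ⟨a, ⟨haA, ha⟩, rfl⟩

end Irreducible

section KrullDim

variable {S T : Type*} [TopologicalSpace S] [TopologicalSpace T]

theorem topologicalKrullDim_le_of_leftInvOn {A : Set S} {B : Set T} {f : S → T} {g : T → S}
    (hf : Continuous f) (hg : Continuous g) (hgf : Set.LeftInvOn g f A) (hAB : Set.MapsTo f A B) :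
    topologicalKrullDim A ≤ topologicalKrullDim B := by
  refine IsInducing.topologicalKrullDim_le (f := hAB.restrict) (.of_comp
    (hf.restrict hAB) (hg.comp continuous_subtype_val) ?_)
  convert! IsInducing.subtypeVal (t := A) using 1
  exact funext fun a => hgf a.2

theorem topologicalKrullDim_mono {A B : Set S} (h : A ⊆ B) :
    topologicalKrullDim A ≤ topologicalKrullDim B :=
  topologicalKrullDim_le_of_leftInvOn continuous_id continuous_id (fun _ _ => rfl) h

theorem topologicalKrullDim_nonneg {A : Set S} (hA : A.Nonempty) : 0 ≤ topologicalKrullDim A := by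
  obtain ⟨a, ha⟩ := hA
  have : Nonempty (IrreducibleCloseds A) :=
    ⟨⟨irreducibleComponent ⟨a, ha⟩, isIrreducible_irreducibleComponent,
      isClosed_irreducibleComponent⟩⟩
  exact Order.krullDim_nonneg

theorem topologicalKrullDim_singleton (a : S) : topologicalKrullDim ({a} : Set S) = 0 :=
  (topologicalKrullDim_zero_of_discreteTopology _).antisymm
    (topologicalKrullDim_nonneg (Set.singleton_nonempty a))

theorem topologicalKrullDim_add_one_le {A B : Set S} (hA : IsIrredClosed A)
    (hB : IsIrredClosed B) (h : A ⊂ B) : topologicalKrullDim A + 1 ≤ topologicalKrullDim B := by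
  have hinc : IsInducing (Set.inclusion h.1) := (IsEmbedding.inclusion h.1).isInducing
  have := Subtype.irreducibleSpace hA.isIrreducible
  have := Subtype.irreducibleSpace hB.isIrreducible
  have : Nonempty (IrreducibleCloseds A) :=
    ⟨⟨Set.univ, IrreducibleSpace.isIrreducible_univ A, isClosed_univ⟩⟩
  let whole : IrreducibleCloseds B :=
    ⟨Set.univ, IrreducibleSpace.isIrreducible_univ B, isClosed_univ⟩
  let incl : IrreducibleCloseds A → IrreducibleCloseds B :=
    IrreducibleCloseds.map (Set.inclusion h.1) hinc.continuous
  have hlt (C : IrreducibleCloseds A) : incl C < whole := by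
    refine lt_of_le_of_ne (fun _ _ => trivial) fun heq => ?_
    obtain ⟨b, hbB, hbA⟩ := Set.exists_of_ssubset h
    have hsub : (incl C : Set B) ⊆ Subtype.val ⁻¹' A :=
      closure_minimal (by rintro _ ⟨a, -, rfl⟩; exact a.2)
        (hA.isClosed.preimage continuous_subtype_val)
    exact hbA (hsub (a := ⟨b, hbB⟩) (by rw [heq]; trivial))
  rw [topologicalKrullDim, topologicalKrullDim, ← Order.krullDim_WithTop]
  refine Order.krullDim_le_of_strictMono
    (WithTop.recTopCoe (C := fun _ => IrreducibleCloseds B) whole incl) fun C D hCD => ?_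
  induction C using WithTop.recTopCoe with
  | top => exact absurd hCD not_top_lt
  | coe C =>
    induction D using WithTop.recTopCoe with
    | top => exact hlt C
    | coe D => exact IrreducibleCloseds.map_strictMono_of_isInducing hinc (WithTop.coe_lt_coe.1 hCD)

/-- The Krull dimension of a subset as a natural number. The empty set and sets of infinite
dimension get the junk value `0`. -/
noncomputable def dim (A : Set S) : ℕ := ((topologicalKrullDim A).unbotD 0).toNat

end KrullDim

/-! ### Cartesian powers and regular functions -/

/-- A type equipped with a fixed Zariski geometry. -/
class HasZariskiGeometry (X : Type*) where
  geometry : ZariskiGeometry X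

open HasZariskiGeometry

variable {X : Type*} [HasZariskiGeometry X] {ι κ μ : Type}

section Powers

variable [Finite ι] [Finite κ]

/-- The topology of the geometry on a power `X^ι` with an arbitrary finite index type, obtained by
enumerating `ι`. -/
noncomputable instance instTopologicalSpacePower : TopologicalSpace (ι → X) :=
  .induced (fun v => v ∘ (Finite.equivFin ι).symm) (geometry.τ (Nat.card ι))

theorem continuous_of_forall_coord_or_const {Φ : (ι → X) → κ → X}
    (h : ∀ k, (∃ i, ∀ v, Φ v k = v i) ∨ ∃ c, ∀ v, Φ v k = c) : Continuous Φ := by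
  have hchoice (k : κ) : ∃ s : ι ⊕ X, ∀ v, Φ v k = Sum.elim (fun j => v j) id s := by
    rcases h k with ⟨i, hi⟩ | ⟨c, hc⟩
    · exact ⟨.inl i, hi⟩
    · exact ⟨.inr c, hc⟩
  choose s hs using hchoice
  let _ := (geometry (X := X)).τ (Nat.card ι)
  let _ := (geometry (X := X)).τ (Nat.card κ)
  refine continuous_induced_rng.2 ?_
  convert! (geometry.Z0_cont (Nat.card ι) (Nat.card κ) fun k =>
    Sum.map (Finite.equivFin ι) id (s ((Finite.equivFin κ).symm k))).comp
    (continuous_induced_dom (f := fun v : ι → X => v ∘ (Finite.equivFin ι).symm)) using 1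
  funext v k
  simp only [Function.comp, hs]
  cases s ((Finite.equivFin κ).symm k) <;> simp

theorem instTopologicalSpacePower_fin (n : ℕ) :
    (instTopologicalSpacePower : TopologicalSpace (Fin n → X)) = geometry.τ n := by
  apply le_antisymm <;> rw [← continuous_id_iff_le]
  · have h := geometry.Z0_cont (X := X) (Nat.card (Fin n)) n fun k => .inl (Finite.equivFin _ k)
    convert! @Continuous.comp _ _ _ instTopologicalSpacePower (geometry.τ _) (geometry.τ _) _ _ h
      continuous_induced_dom using 1
    funext v k
    simp
  · exact continuous_induced_rng.2 (geometry.Z0_cont n (Nat.card (Fin n)) fun k =>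
      .inl ((Finite.equivFin (Fin n)).symm k))

instance : NoetherianSpace (ι → X) := by
  let _ := (geometry (X := X)).τ (Nat.card ι)
  have := (geometry (X := X)).noetherian (Nat.card ι)
  exact IsInducing.noetherianSpace (i := fun v : ι → X => v ∘ (Finite.equivFin ι).symm) ⟨rfl⟩

theorem continuous_reindex (α : κ → ι) : Continuous fun v : ι → X => v ∘ α :=
  continuous_of_forall_coord_or_const fun k => .inl ⟨α k, fun _ => rfl⟩

theorem isClosed_diagonal (i j : ι) : IsClosed {v : ι → X | v i = v j} := by
  have h := (geometry (X := X)).Z0_diag (Nat.card ι) (Finite.equivFin ι i) (Finite.equivFin ι j)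
  rw [← instTopologicalSpacePower_fin] at h
  simpa using h.preimage (continuous_reindex (Finite.equivFin ι).symm)

end Powers

/-- A function `f : X^ι → X` is regular if it can be adjoined as a further coordinate by a
continuous map `X^κ → X^(κ+1)`, for every larger power `X^κ`. Demanding this for all `κ` makes the
class closed under composition, although the topology of `X^(κ+1)` is not the product topology. -/
def IsRegular (f : (ι → X) → X) : Prop :=
  ∀ (κ : Type) [Finite κ] (α : ι → κ),
    Continuous fun (v : κ → X) (o : Option κ) => o.elim (f (v ∘ α)) v

/-- A map between powers of `X` is regular if its coordinate functions are. -/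
def IsRegularMap (Φ : (ι → X) → κ → X) : Prop :=
  ∀ k, IsRegular fun v => Φ v k

theorem isRegular_coord (i : ι) : IsRegular fun v : ι → X => v i := fun _ _ α =>
  continuous_of_forall_coord_or_const fun
    | none => .inl ⟨α i, fun _ => rfl⟩
    | some k => .inl ⟨k, fun _ => rfl⟩

theorem isRegular_const (c : X) : IsRegular fun _ : ι → X => c := fun _ _ _ =>
  continuous_of_forall_coord_or_const fun
    | none => .inr ⟨c, fun _ => rfl⟩
    | some k => .inl ⟨k, fun _ => rfl⟩

theorem IsRegular.comp_reindex {f : (ι → X) → X} (hf : IsRegular f) (α : ι → κ) :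
    IsRegular fun v : κ → X => f (v ∘ α) := fun μ _ β =>
  hf μ (β ∘ α)

theorem isRegularMap_id : IsRegularMap fun v : ι → X => v := isRegular_coord

theorem isRegularMap_reindex (α : κ → ι) : IsRegularMap fun v : ι → X => v ∘ α :=
  fun k => isRegular_coord (α k)

theorem isRegularMap_const (a : κ → X) : IsRegularMap fun _ : ι → X => a :=
  fun k => isRegular_const (a k)

theorem IsRegularMap.sumElim {Φ : (μ → X) → ι → X} {Ψ : (μ → X) → κ → X} (hΦ : IsRegularMap Φ)
    (hΨ : IsRegularMap Ψ) : IsRegularMap fun v => Sum.elim (Φ v) (Ψ v)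
  | .inl i => hΦ i
  | .inr k => hΨ k

theorem isRegularMap_vecEmpty : IsRegularMap fun _ : ι → X => (![] : Fin 0 → X) :=
  fun k => k.elim0

theorem IsRegular.vecCons {n : ℕ} {f : (ι → X) → X} {Φ : (ι → X) → Fin n → X} (hf : IsRegular f)
    (hΦ : IsRegularMap Φ) : IsRegularMap fun v => Matrix.vecCons (f v) (Φ v) :=
  Fin.cases hf hΦ

theorem IsRegular.vec2 {f g : (ι → X) → X} (hf : IsRegular f) (hg : IsRegular g) :
    IsRegularMap fun v => ![f v, g v] :=
  hf.vecCons (hg.vecCons isRegularMap_vecEmpty)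

theorem IsRegularMap.continuous_graph [Finite ι] [Finite κ] {Φ : (ι → X) → κ → X}
    (hΦ : IsRegularMap Φ) :
    Continuous fun v => Sum.elim v (Φ v) := by
  refine Finite.induction_empty_option (P := fun κ => ∀ (_ : Finite κ) (Φ : (ι → X) → κ → X),
    IsRegularMap Φ → Continuous fun v => Sum.elim v (Φ v)) ?_ ?_ ?_ κ ‹_› Φ hΦ
  · intro κ κ' e ih _ Φ hΦ
    convert! (continuous_reindex (Sum.map id e.symm : ι ⊕ κ' → ι ⊕ κ)).comp
      (ih (.of_equiv κ' e.symm) (fun v => Φ v ∘ e) fun k => hΦ (e k)) using 1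
    funext v x
    cases x <;> simp
  · intro _ Φ _
    refine continuous_of_forall_coord_or_const ?_
    rintro (i | ⟨⟨⟩⟩)
    exact .inl ⟨i, fun _ => rfl⟩
  · intro κ _ ih _ Φ hΦ
    convert! (continuous_reindex fun x : ι ⊕ Option κ => Sum.elim (fun i => some (Sum.inl i))
      (fun o => o.elim none fun k => some (Sum.inr k)) x).comp ((hΦ none (ι ⊕ κ) Sum.inl).comp
      (ih inferInstance (fun v => Φ v ∘ some) fun k => hΦ (some k))) using 1
    funext v x
    rcases x with x | _ | x <;> simp [Function.comp_def]

theorem IsRegularMap.continuous [Finite ι] [Finite κ] {Φ : (ι → X) → κ → X}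
    (hΦ : IsRegularMap Φ) : Continuous Φ :=
  (continuous_reindex (Sum.inr : κ → ι ⊕ κ)).comp hΦ.continuous_graph

theorem IsRegular.comp [Finite κ] {f : (κ → X) → X} (hf : IsRegular f) {Φ : (ι → X) → κ → X}
    (hΦ : IsRegularMap Φ) : IsRegular fun v => f (Φ v) := by
  intro μ _ α
  have hgraph := IsRegularMap.continuous_graph (Φ := fun v : μ → X => Φ (v ∘ α))
    fun k => (hΦ k).comp_reindex α
  convert! (continuous_reindex fun o : Option μ => o.map (Sum.inl : μ → μ ⊕ κ)).comp
    ((hf (μ ⊕ κ) Sum.inr).comp hgraph) using 1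
  funext v o
  cases o <;> simp [Function.comp_def]

theorem IsRegularMap.comp [Finite κ] {Φ : (κ → X) → μ → X} (hΦ : IsRegularMap Φ)
    {Ψ : (ι → X) → κ → X} (hΨ : IsRegularMap Ψ) : IsRegularMap fun v => Φ (Ψ v) :=
  fun k => (hΦ k).comp hΨ

theorem IsRegular.isClosed_eq [Finite ι] {f g : (ι → X) → X} (hf : IsRegular f)
    (hg : IsRegular g) : IsClosed {v | f v = g v} :=
  (isClosed_diagonal 0 1).preimage (hf.vec2 hg).continuous

theorem IsRegularMap.isClosed_eq [Finite ι] {Φ Ψ : (ι → X) → κ → X} (hΦ : IsRegularMap Φ)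
    (hΨ : IsRegularMap Ψ) : IsClosed {v | Φ v = Ψ v} := by
  simp only [funext_iff, Set.ofPred_forall]
  exact isClosed_iInter fun k => (hΦ k).isClosed_eq (hΨ k)

instance [Finite ι] : T1Space (ι → X) :=
  ⟨fun a => isRegularMap_id.isClosed_eq (isRegularMap_const a)⟩

section Dimension

variable [Finite ι] [Finite κ]

theorem IsIrredClosed.image_of_leftInverse {A : Set (ι → X)} (hA : IsIrredClosed A)
    {Φ : (ι → X) → κ → X} {Ψ : (κ → X) → ι → X} (hΦ : IsRegularMap Φ) (hΨ : IsRegularMap Ψ)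
    (hinv : Function.LeftInverse Ψ Φ) : IsIrredClosed (Φ '' A) := by
  refine ⟨?_, hA.isIrreducible.image Φ hΦ.continuous.continuousOn⟩
  have himage : Φ '' A = Ψ ⁻¹' A ∩ {w | Φ (Ψ w) = w} := by
    ext w
    constructor
    · rintro ⟨v, hv, rfl⟩
      simpa [hinv v] using hv
    · rintro ⟨hw, hfix⟩
      exact ⟨Ψ w, hw, hfix⟩
  rw [himage]
  exact (hA.isClosed.preimage hΨ.continuous).inter ((hΦ.comp hΨ).isClosed_eq isRegularMap_id)

theorem IsIrredClosed.preimage_of_leftInverse {B : Set (κ → X)} (hB : IsIrredClosed B)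
    {Φ : (ι → X) → κ → X} {Ψ : (κ → X) → ι → X} (hΦ : IsRegularMap Φ) (hΨ : IsRegularMap Ψ)
    (hinv : Function.LeftInverse Ψ Φ) (hBΦ : B ⊆ Set.range Φ) : IsIrredClosed (Φ ⁻¹' B) := by
  refine ⟨hB.isClosed.preimage hΦ.continuous, ?_⟩
  have hpre : Φ ⁻¹' B = Ψ '' B := by
    refine Set.Subset.antisymm (fun v hv => ⟨Φ v, hv, hinv v⟩) ?_
    rintro _ ⟨w, hw, rfl⟩
    obtain ⟨v, rfl⟩ := hBΦ hw
    rwa [hinv v]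
  rw [hpre]
  exact hB.isIrreducible.image Ψ hΨ.continuous.continuousOn

theorem topologicalKrullDim_le_preimage_of_leftInverse {B : Set (κ → X)}
    {Φ : (ι → X) → κ → X} {Ψ : (κ → X) → ι → X} (hΦ : IsRegularMap Φ) (hΨ : IsRegularMap Ψ)
    (hinv : Function.LeftInverse Ψ Φ) (hBΦ : B ⊆ Set.range Φ) :
    topologicalKrullDim B ≤ topologicalKrullDim (Φ ⁻¹' B) := by
  have hfix : Set.LeftInvOn Φ Ψ B := fun w hw => by
    obtain ⟨v, rfl⟩ := hBΦ hw
    rw [hinv v]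
  exact topologicalKrullDim_le_of_leftInvOn hΨ.continuous hΦ.continuous hfix
    fun w hw => by rwa [Set.mem_preimage, hfix hw]

/-- Axiom (Z3), with the diagonal replaced by an equation between regular functions. -/
theorem IsIrredClosed.exists_subset_eqOn_topologicalKrullDim {A : Set (ι → X)}
    (hA : IsIrredClosed A) {a : ι → X} (ha : a ∈ A) {f g : (ι → X) → X} (hf : IsRegular f)
    (hg : IsRegular g) (hfg : f a = g a) : ∃ B, IsIrredClosed B ∧ a ∈ B ∧ B ⊆ A ∧ Set.EqOn f g B ∧
      topologicalKrullDim A ≤ topologicalKrullDim B + 1 := by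
  let e := Finite.equivFin (ι ⊕ Fin 2)
  let Φ : (ι → X) → Fin _ → X := fun v => Sum.elim v ![f v, g v] ∘ e.symm
  let Ψ : (Fin _ → X) → ι → X := fun w => w ∘ e ∘ Sum.inl
  have hΦ : IsRegularMap Φ := fun k =>
    (isRegularMap_id.sumElim (hf.vec2 hg)) (e.symm k)
  have hΨ : IsRegularMap Ψ := isRegularMap_reindex _
  have hinv : Function.LeftInverse Ψ Φ := fun v => by funext i; simp [Φ, Ψ]
  have hΦf (v : ι → X) : Φ v (e (.inr 0)) = f v := by simp [Φ]
  have hΦg (v : ι → X) : Φ v (e (.inr 1)) = g v := by simp [Φ]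
  have hΦA := hA.image_of_leftInverse hΦ hΨ hinv
  obtain ⟨B, hB, haB, hBcomp⟩ := exists_isIrredComponentOf
    (hΦA.isClosed.inter (isClosed_diagonal (e (.inr 0)) (e (.inr 1)))) (a := Φ a)
    ⟨⟨a, ha, rfl⟩, by simp [hΦf, hΦg, hfg]⟩
  have hdim : topologicalKrullDim (Φ '' A) ≤ topologicalKrullDim B + 1 := by
    have h := geometry.Z3 _ (Φ '' A) (e (.inr 0)) (e (.inr 1))
    rw [← instTopologicalSpacePower_fin] at h
    exact h hΦA.isClosed hΦA.isIrreducible B hBcomp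
  have hBΦ : B ⊆ Set.range Φ := fun w hw => Set.image_subset_range Φ A (hBcomp.1.1 hw).1
  refine ⟨Φ ⁻¹' B, hB.preimage_of_leftInverse hΦ hΨ hinv hBΦ, haB, ?_, ?_, ?_⟩
  · intro v hv
    exact hinv.injective.mem_set_image.1 (hBcomp.1.1 hv).1
  · intro v hv
    rw [← hΦf, ← hΦg]
    exact (hBcomp.1.1 hv).2
  · calc topologicalKrullDim A
      _ ≤ topologicalKrullDim (Φ '' A) := topologicalKrullDim_le_of_leftInvOn hΦ.continuous
          hΨ.continuous (hinv.leftInvOn A) (Set.mapsTo_image Φ A)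
      _ ≤ topologicalKrullDim B + 1 := hdim
      _ ≤ topologicalKrullDim (Φ ⁻¹' B) + 1 := by
        gcongr
        exact topologicalKrullDim_le_preimage_of_leftInverse hΦ hΨ hinv hBΦ

theorem IsIrredClosed.exists_subset_eqOn_map_topologicalKrullDim {A : Set (ι → X)}
    (hA : IsIrredClosed A) {a : ι → X} (ha : a ∈ A) {n : ℕ} {Φ Ψ : (ι → X) → Fin n → X}
    (hΦ : IsRegularMap Φ) (hΨ : IsRegularMap Ψ) (hΦΨ : Φ a = Ψ a) :
    ∃ B, IsIrredClosed B ∧ a ∈ B ∧ B ⊆ A ∧ Set.EqOn Φ Ψ B ∧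
      topologicalKrullDim A ≤ topologicalKrullDim B + n := by
  induction n with
  | zero => exact ⟨A, hA, ha, subset_rfl, fun _ _ => Subsingleton.elim _ _, by simp⟩
  | succ n ih =>
    obtain ⟨B, hB, haB, hBA, hBeq, hBdim⟩ :=
      ih (fun i => hΦ i.succ) (fun i => hΨ i.succ) (congrArg Fin.tail hΦΨ)
    obtain ⟨C, hC, haC, hCB, hCeq, hCdim⟩ :=
      hB.exists_subset_eqOn_topologicalKrullDim haB (hΦ 0) (hΨ 0) (congrFun hΦΨ 0)
    refine ⟨C, hC, haC, hCB.trans hBA,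
      fun v hv => funext (Fin.cases (hCeq hv) fun i => congrFun (hBeq (hCB hv)) i), ?_⟩
    calc topologicalKrullDim A
      _ ≤ topologicalKrullDim B + n := hBdim
      _ ≤ topologicalKrullDim C + 1 + n := by gcongr
      _ = topologicalKrullDim C + (n + 1 : ℕ) := by push_cast; ring

theorem IsIrredClosed.topologicalKrullDim_le_card {A : Set (ι → X)} (hA : IsIrredClosed A) :
    topologicalKrullDim A ≤ Nat.card ι := by
  obtain ⟨a, ha⟩ := hA.nonempty
  let e := Finite.equivFin ι
  obtain ⟨B, -, -, -, hBeq, hBdim⟩ := hA.exists_subset_eqOn_map_topologicalKrullDim ha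
    (isRegularMap_reindex e.symm) (isRegularMap_const (a ∘ e.symm)) rfl
  have hBa : B ⊆ {a} := fun v hv => funext fun i => by simpa using congrFun (hBeq hv) (e i)
  calc topologicalKrullDim A
    _ ≤ topologicalKrullDim B + Nat.card ι := hBdim
    _ ≤ topologicalKrullDim ({a} : Set (ι → X)) + Nat.card ι := by
      gcongr
      exact topologicalKrullDim_mono hBa
    _ = Nat.card ι := by rw [topologicalKrullDim_singleton, zero_add]

theorem IsIrredClosed.topologicalKrullDim_eq_dim {A : Set (ι → X)} (hA : IsIrredClosed A) :
    topologicalKrullDim A = dim A := by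
  obtain ⟨d, hd⟩ := WithBot.ne_bot_iff_exists.1
    (lt_of_lt_of_le (WithBot.bot_lt_coe 0) (topologicalKrullDim_nonneg hA.nonempty)).ne'
  have hfinite : d ≤ Nat.card ι := by
    rw [← WithBot.coe_le_coe, hd]
    exact hA.topologicalKrullDim_le_card
  rw [dim, ← hd, WithBot.unbotD_coe]
  exact congrArg _ (ENat.natCast_toNat (hfinite.trans_lt (ENat.natCast_lt_top _)).ne).symm

theorem IsIrredClosed.dim_le_card {A : Set (ι → X)} (hA : IsIrredClosed A) :
    dim A ≤ Nat.card ι := by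
  exact_mod_cast hA.topologicalKrullDim_eq_dim ▸ hA.topologicalKrullDim_le_card

theorem dim_singleton (a : ι → X) : dim {a} = 0 := by
  exact_mod_cast (isIrredClosed_singleton a).topologicalKrullDim_eq_dim ▸
    topologicalKrullDim_singleton a

theorem IsIrredClosed.dim_le_of_leftInvOn {A : Set (ι → X)} {B : Set (κ → X)}
    (hA : IsIrredClosed A) (hB : IsIrredClosed B) {Φ : (ι → X) → κ → X} {Ψ : (κ → X) → ι → X}
    (hΦ : IsRegularMap Φ) (hΨ : IsRegularMap Ψ) (hinv : Set.LeftInvOn Ψ Φ A)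
    (hAB : Set.MapsTo Φ A B) : dim A ≤ dim B := by
  have h := topologicalKrullDim_le_of_leftInvOn hΦ.continuous hΨ.continuous hinv hAB
  rw [hA.topologicalKrullDim_eq_dim, hB.topologicalKrullDim_eq_dim] at h
  exact_mod_cast h

theorem IsIrredClosed.dim_mono {A B : Set (ι → X)} (hA : IsIrredClosed A) (hB : IsIrredClosed B)
    (h : A ⊆ B) : dim A ≤ dim B :=
  hA.dim_le_of_leftInvOn hB isRegularMap_id isRegularMap_id (fun _ _ => rfl) h

theorem IsIrredClosed.dim_strictMono {A B : Set (ι → X)} (hA : IsIrredClosed A)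
    (hB : IsIrredClosed B) (h : A ⊂ B) : dim A < dim B := by
  have h := topologicalKrullDim_add_one_le hA hB h
  rw [hA.topologicalKrullDim_eq_dim, hB.topologicalKrullDim_eq_dim] at h
  exact_mod_cast h

theorem IsIrredClosed.eq_of_subset_of_dim_le {A B : Set (ι → X)} (hA : IsIrredClosed A)
    (hB : IsIrredClosed B) (h : A ⊆ B) (hdim : dim B ≤ dim A) : A = B := by
  by_contra hne
  exact hdim.not_gt (hA.dim_strictMono hB (h.ssubset_of_ne hne))

theorem IsIrredClosed.image_eq_of_dim_le {A : Set (ι → X)} {B : Set (κ → X)}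
    (hA : IsIrredClosed A) (hB : IsIrredClosed B) {Φ : (ι → X) → κ → X} {Ψ : (κ → X) → ι → X}
    (hΦ : IsRegularMap Φ) (hΨ : IsRegularMap Ψ) (hinv : Function.LeftInverse Ψ Φ)
    (hAB : Φ '' A ⊆ B) (hdim : dim B ≤ dim A) : Φ '' A = B := by
  have hΦA := hA.image_of_leftInverse hΦ hΨ hinv
  exact hΦA.eq_of_subset_of_dim_le hB hAB (hdim.trans
    (hA.dim_le_of_leftInvOn hΦA hΦ hΨ (hinv.leftInvOn A) (Set.mapsTo_image Φ A)))

theorem IsIrredClosed.exists_subset_eqOn_map {A : Set (ι → X)} (hA : IsIrredClosed A)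
    {a : ι → X} (ha : a ∈ A) {n : ℕ} {Φ Ψ : (ι → X) → Fin n → X} (hΦ : IsRegularMap Φ)
    (hΨ : IsRegularMap Ψ) (hΦΨ : Φ a = Ψ a) :
    ∃ B, IsIrredClosed B ∧ a ∈ B ∧ B ⊆ A ∧ Set.EqOn Φ Ψ B ∧ dim A ≤ dim B + n := by
  obtain ⟨B, hB, haB, hBA, hBeq, hdim⟩ :=
    hA.exists_subset_eqOn_map_topologicalKrullDim ha hΦ hΨ hΦΨ
  rw [hA.topologicalKrullDim_eq_dim, hB.topologicalKrullDim_eq_dim] at hdim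
  exact ⟨B, hB, haB, hBA, hBeq, by exact_mod_cast hdim⟩

theorem IsIrredClosed.exists_subset_eqOn {A : Set (ι → X)} (hA : IsIrredClosed A) {a : ι → X}
    (ha : a ∈ A) {f g : (ι → X) → X} (hf : IsRegular f) (hg : IsRegular g) (hfg : f a = g a) :
    ∃ B, IsIrredClosed B ∧ a ∈ B ∧ B ⊆ A ∧ Set.EqOn f g B ∧ dim A ≤ dim B + 1 := by
  obtain ⟨B, hB, haB, hBA, hBeq, hdim⟩ := hA.exists_subset_eqOn_map ha (n := 1)
    (Φ := fun v _ => f v) (Ψ := fun v _ => g v) (fun _ => hf) (fun _ => hg) (funext fun _ => hfg)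
  exact ⟨B, hB, haB, hBA, fun v hv => congrFun (hBeq hv) 0, hdim⟩

theorem IsIrredClosed.infinite {A : Set (ι → X)} (hA : IsIrredClosed A) (hdim : 1 ≤ dim A) :
    A.Infinite := by
  intro hfin
  obtain ⟨a, ha⟩ := hA.nonempty
  rw [hA.eq_singleton_of_finite hfin ha, dim_singleton] at hdim
  exact Nat.not_succ_le_zero 0 hdim

theorem IsIrredClosed.one_le_dim {A : Set (ι → X)} (hA : IsIrredClosed A) (hA' : A.Nontrivial) :
    1 ≤ dim A := by
  obtain ⟨a, ha, b, hb, hab⟩ := hA'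
  exact Nat.one_le_of_lt ((isIrredClosed_singleton a).dim_strictMono hA
    ⟨Set.singleton_subset_iff.2 ha, fun h => hab (h hb).symm⟩)

theorem IsIrredClosed.eq_singleton_of_dim_eq_zero {A : Set (ι → X)} (hA : IsIrredClosed A)
    (hdim : dim A = 0) {a : ι → X} (ha : a ∈ A) : A = {a} :=
  ((isIrredClosed_singleton a).eq_of_subset_of_dim_le hA (Set.singleton_subset_iff.2 ha)
    (hdim ▸ Nat.zero_le _)).symm

theorem IsIrredClosed.finite_inter {A B : Set (ι → X)} (hA : IsIrredClosed A) (hdim : dim A ≤ 1)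
    (hB : IsClosed B) (hAB : ¬A ⊆ B) : (A ∩ B).Finite := by
  obtain ⟨𝒞, h𝒞, hclosed, hirred, heq⟩ :=
    NoetherianSpace.exists_finite_set_isClosed_irreducible (hA.isClosed.inter hB)
  rw [heq]
  refine h𝒞.sUnion fun T hT => ?_
  have hTirred : IsIrredClosed T := ⟨hclosed T hT, hirred T hT⟩
  have hTAB : T ⊆ A ∩ B := heq ▸ Set.subset_sUnion_of_mem hT
  have hlt := hTirred.dim_strictMono hA
    ⟨fun v hv => (hTAB hv).1, fun h => hAB fun v hv => (hTAB (h hv)).2⟩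
  obtain ⟨a, ha⟩ := hTirred.nonempty
  rw [hTirred.eq_singleton_of_dim_eq_zero (by lia) ha]
  exact Set.finite_singleton a

theorem IsIrredClosed.exists_ssubset_dim_eq {A : Set (ι → X)} (hA : IsIrredClosed A)
    (hdim : 1 ≤ dim A) {a : ι → X} (ha : a ∈ A) :
    ∃ B, IsIrredClosed B ∧ a ∈ B ∧ B ⊂ A ∧ dim A = dim B + 1 := by
  obtain ⟨b, hb, hba⟩ := (hA.infinite hdim).exists_notMem_finite (Set.finite_singleton a)
  obtain ⟨i, hi⟩ := Function.ne_iff.1 hba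
  obtain ⟨B, hB, haB, hBA, hBeq, hBdim⟩ :=
    hA.exists_subset_eqOn ha (isRegular_coord i) (isRegular_const (a i)) rfl
  have hss : B ⊂ A := ⟨hBA, fun h => hi (hBeq (h hb))⟩
  exact ⟨B, hB, haB, hss, le_antisymm hBdim (hB.dim_strictMono hA hss)⟩

end Dimension

/-! ### Projections and products -/

theorem isRegularMap_sumElim_left (b : κ → X) : IsRegularMap fun a : ι → X => Sum.elim a b :=
  isRegularMap_id.sumElim (isRegularMap_const b)

theorem isRegularMap_sumElim_right (a : ι → X) : IsRegularMap fun b : κ → X => Sum.elim a b :=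
  (isRegularMap_const a).sumElim isRegularMap_id

/-- The Cartesian product of subsets of `X^ι` and `X^κ`, as a subset of `X^(ι ⊕ κ)`. -/
def prod {X : Type*} (A : Set (ι → X)) (B : Set (κ → X)) : Set (ι ⊕ κ → X) :=
  {w | w ∘ Sum.inl ∈ A ∧ w ∘ Sum.inr ∈ B}

theorem prod_univ_univ {X : Type*} :
    prod (Set.univ : Set (ι → X)) (Set.univ : Set (κ → X)) = Set.univ :=
  Set.eq_univ_of_forall fun _ => ⟨trivial, trivial⟩

section Projection

variable [Finite ι] [Finite κ]

/-- The homeomorphism between two powers of `X` induced by a bijection of their index types. -/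
def reindexHomeomorph (e : ι ≃ κ) : (ι → X) ≃ₜ (κ → X) where
  toEquiv := e.arrowCongr (Equiv.refl X)
  continuous_toFun := continuous_reindex e.symm
  continuous_invFun := continuous_reindex e

theorem exists_closure_image_inl_diff_subset {A : Set (κ ⊕ ι → X)} (hA : IsClosed A)
    (hne : A.Nonempty) : ∃ F, IsClosed F ∧ ¬closure ((fun v => v ∘ Sum.inl) '' A) ⊆ F ∧
      closure ((fun v => v ∘ Sum.inl) '' A) \ F ⊆ (fun v => v ∘ Sum.inl) '' A := by
  let e := ((Finite.equivFin κ).sumCongr (Finite.equivFin ι)).trans finSumFinEquiv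
  let h := reindexHomeomorph (X := X) e
  let hκ := reindexHomeomorph (X := X) (Finite.equivFin κ)
  have hle : Nat.card κ ≤ Nat.card κ + Nat.card ι := Nat.le_add_right _ _
  have himage : (fun v : Fin _ → X => v ∘ Fin.castLE hle) '' (h '' A) =
      hκ '' ((fun v => v ∘ Sum.inl) '' A) := by
    rw [Set.image_image, Set.image_image]
    refine Set.image_congr fun v _ => funext fun k => congrArg v ?_
    change e.symm (Fin.castAdd _ k) = _
    simp [e]
  have hZ1 := (geometry (X := X)).Z1 _ _ hle (h '' A)
  rw [← instTopologicalSpacePower_fin, ← instTopologicalSpacePower_fin, himage,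
    ← hκ.image_closure] at hZ1
  obtain ⟨F, hF, hssubset, hdiff⟩ := hZ1 (h.isClosedMap A hA) (hne.image h)
  refine ⟨hκ ⁻¹' F, hF.preimage hκ.continuous, fun hsub => hssubset.2 (Set.image_subset_iff.2 hsub),
    fun w hw => ?_⟩
  exact (hκ.injective.mem_set_image).1 (hdiff ⟨Set.mem_image_of_mem _ hw.1, hw.2⟩)

theorem IsRegularMap.exists_closure_image_diff_subset {Φ : (ι → X) → κ → X} (hΦ : IsRegularMap Φ)
    {A : Set (ι → X)} (hA : IsClosed A) (hne : A.Nonempty) :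
    ∃ F, IsClosed F ∧ ¬closure (Φ '' A) ⊆ F ∧ closure (Φ '' A) \ F ⊆ Φ '' A := by
  let G : Set (κ ⊕ ι → X) := {w | w ∘ Sum.inr ∈ A} ∩ {w | w ∘ Sum.inl = Φ (w ∘ Sum.inr)}
  have hG : IsClosed G := (hA.preimage (continuous_reindex Sum.inr)).inter
    ((isRegularMap_reindex _).isClosed_eq (hΦ.comp (isRegularMap_reindex _)))
  have himage : (fun w => w ∘ Sum.inl) '' G = Φ '' A := by
    ext u
    constructor
    · rintro ⟨w, ⟨hw, hgraph⟩, rfl⟩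
      exact ⟨_, hw, hgraph.symm⟩
    · rintro ⟨v, hv, rfl⟩
      exact ⟨Sum.elim (Φ v) v, ⟨hv, rfl⟩, rfl⟩
  have hGne : G.Nonempty := (himage ▸ hne.image Φ).of_image
  exact himage ▸ exists_closure_image_inl_diff_subset hG hGne

theorem setOf_apply_mem_eq_univ_or_finite {D : Set (κ → X)} (hD : IsClosed D) {Φ : X → κ → X}
    (hΦ : IsRegularMap fun v : Unit → X => Φ (v ())) :
    {t | Φ t ∈ D} = Set.univ ∨ {t | Φ t ∈ D}.Finite := by
  have hcont : Continuous fun v : Fin 1 → X => Φ (v 0) :=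
    (hΦ.comp (isRegularMap_reindex fun _ => 0)).continuous
  have hZ2 := (geometry (X := X)).Z2 0
  rw [← instTopologicalSpacePower_fin] at hZ2
  obtain ⟨m, hm⟩ := hZ2 _ (hD.preimage hcont)
  exact (hm ![]).imp id And.left

theorem exists_setOf_eq_univ_or_ncard_le {D : Set (Fin 2 → X)} (hD : IsClosed D) :
    ∃ m : ℕ, ∀ x, {y | ![x, y] ∈ D} = Set.univ ∨
      {y | ![x, y] ∈ D}.Finite ∧ {y | ![x, y] ∈ D}.ncard ≤ m := by
  have hZ2 := (geometry (X := X)).Z2 1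
  rw [← instTopologicalSpacePower_fin] at hZ2
  obtain ⟨m, hm⟩ := hZ2 _ hD
  refine ⟨m, fun x => ?_⟩
  have hsnoc (y : X) : (Fin.snoc ![x] y : Fin 2 → X) = ![x, y] := by
    funext i
    fin_cases i <;> rfl
  simpa only [hsnoc] using hm ![x]

theorem IsIrredClosed.prod_subset_or_subset {A : Set (ι → X)} {B : Set (κ → X)}
    (hA : IsIrredClosed A) (hB : IsIrredClosed B) {D E : Set (ι ⊕ κ → X)} (hD : IsClosed D)
    (hE : IsClosed E) (h : prod A B ⊆ D ∪ E) : prod A B ⊆ D ∨ prod A B ⊆ E := by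
  let slices (D : Set (ι ⊕ κ → X)) : Set (κ → X) := ⋂ a ∈ A, {b | Sum.elim a b ∈ D}
  have hclosed {D : Set (ι ⊕ κ → X)} (hD : IsClosed D) : IsClosed (slices D) :=
    isClosed_biInter fun a _ => hD.preimage (isRegularMap_sumElim_right a).continuous
  have hprod {D : Set (ι ⊕ κ → X)} (hBD : B ⊆ slices D) : prod A B ⊆ D := fun w hw => by
    simpa using Set.mem_iInter₂.1 (hBD hw.2) _ hw.1
  refine (hB.subset_or_subset (hclosed hD) (hclosed hE) fun b hb => ?_).imp hprod hprod
  have hcont := (isRegularMap_sumElim_left (ι := ι) b).continuous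
  refine (hA.subset_or_subset (hD.preimage hcont) (hE.preimage hcont)
    fun a ha => h ⟨ha, hb⟩).imp ?_ ?_ <;> exact fun hsub => Set.mem_iInter₂.2 fun a ha => hsub ha

theorem IsIrredClosed.prod {A : Set (ι → X)} {B : Set (κ → X)} (hA : IsIrredClosed A)
    (hB : IsIrredClosed B) : IsIrredClosed (prod A B) := by
  obtain ⟨a, ha⟩ := hA.nonempty
  obtain ⟨b, hb⟩ := hB.nonempty
  exact ⟨(hA.isClosed.preimage (continuous_reindex _)).inter
    (hB.isClosed.preimage (continuous_reindex _)), ⟨Sum.elim a b, ha, hb⟩,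
    isPreirreducible_iff_isClosed_union_isClosed.2 fun _ _ hD hE =>
      hA.prod_subset_or_subset hB hD hE⟩

theorem IsIrredClosed.dim_singleton_prod {B : Set (κ → X)} (hB : IsIrredClosed B) (a : ι → X) :
    dim (ZariskiGeometry.prod {a} B) = dim B := by
  have hprod := (isIrredClosed_singleton a).prod hB
  apply le_antisymm
  · refine hprod.dim_le_of_leftInvOn hB (isRegularMap_reindex Sum.inr)
      (isRegularMap_sumElim_right a) ?_ fun w hw => hw.2
    rintro w ⟨hw, -⟩
    rw [← Set.mem_singleton_iff.1 hw]
    exact Sum.elim_comp_inl_inr w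
  · exact hB.dim_le_of_leftInvOn hprod (isRegularMap_sumElim_right a)
      (isRegularMap_reindex Sum.inr) (fun _ _ => rfl) fun b hb => ⟨rfl, hb⟩

theorem IsIrredClosed.dim_add_dim_le_dim_prod {A : Set (ι → X)} {B : Set (κ → X)}
    (hA : IsIrredClosed A) (hB : IsIrredClosed B) :
    dim A + dim B ≤ dim (ZariskiGeometry.prod A B) := by
  induction hn : dim A generalizing A with
  | zero =>
    obtain ⟨a, ha⟩ := hA.nonempty
    rw [hA.eq_singleton_of_dim_eq_zero hn ha, hB.dim_singleton_prod, zero_add]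
  | succ n ih =>
    obtain ⟨a, ha⟩ := hA.nonempty
    obtain ⟨b, hb⟩ := hB.nonempty
    obtain ⟨A', hA', -, hssubset, hdim⟩ := hA.exists_ssubset_dim_eq (hn ▸ Nat.le_add_left 1 n) ha
    obtain ⟨a', ha', hna'⟩ := Set.exists_of_ssubset hssubset
    have hlt := (hA'.prod hB).dim_strictMono (hA.prod hB)
      ⟨fun w hw => ⟨hssubset.1 hw.1, hw.2⟩,
        fun h => hna' (h (show Sum.elim a' b ∈ _ from ⟨ha', hb⟩)).1⟩
    have := ih hA' (by omega)
    omega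

theorem IsIrredClosed.dim_prod_le {A : Set (ι → X)} {B : Set (κ → X)} (hA : IsIrredClosed A)
    (hB : IsIrredClosed B) : dim (ZariskiGeometry.prod A B) ≤ dim A + dim B := by
  induction hn : dim A using Nat.strong_induction_on generalizing A with
  | _ n ih =>
    obtain ⟨a, ha⟩ := hA.nonempty
    obtain ⟨b, hb⟩ := hB.nonempty
    by_cases hsub : A ⊆ {a}
    · rw [hsub.antisymm (Set.singleton_subset_iff.2 ha), hB.dim_singleton_prod]
      exact Nat.le_add_left _ _
    obtain ⟨c, hc, hca⟩ := Set.not_subset.1 hsub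
    obtain ⟨i, hi⟩ := Function.ne_iff.1 hca
    obtain ⟨S, hS, -, hSA, hSeq, hSdim⟩ := (hA.prod hB).exists_subset_eqOn
      (a := Sum.elim a b) ⟨ha, hb⟩ (isRegular_coord (.inl i)) (isRegular_const (a i)) rfl
    let A' := closure ((fun w => w ∘ Sum.inl) '' S)
    have hA' : IsIrredClosed A' := hS.closure_image (continuous_reindex _)
    have hA'A : A' ⊆ A ∩ {v | v i = a i} := by
      refine closure_minimal ?_
        (hA.isClosed.inter ((isRegular_coord i).isClosed_eq (isRegular_const _)))
      rintro _ ⟨w, hw, rfl⟩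
      exact ⟨(hSA hw).1, hSeq hw⟩
    have hlt := hA'.dim_strictMono hA ⟨fun v hv => (hA'A hv).1, fun h => hi (hA'A (h hc)).2⟩
    have hle := ih _ (hn ▸ hlt) hA' rfl
    have hmono := hS.dim_mono (hA'.prod hB)
      fun w hw => ⟨subset_closure (Set.mem_image_of_mem _ hw), (hSA hw).2⟩
    omega

theorem IsIrredClosed.dim_prod {A : Set (ι → X)} {B : Set (κ → X)} (hA : IsIrredClosed A)
    (hB : IsIrredClosed B) : dim (ZariskiGeometry.prod A B) = dim A + dim B :=
  (hA.dim_prod_le hB).antisymm (hA.dim_add_dim_le_dim_prod hB)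

theorem isIrredClosed_univ_unit : IsIrredClosed (Set.univ : Set (Unit → X)) := by
  have h := (geometry (X := X)).Z2_irred
  rw [← instTopologicalSpacePower_fin] at h
  have hfin : IsIrredClosed (Set.univ : Set (Fin 1 → X)) := ⟨isClosed_univ, h.isIrreducible_univ⟩
  rw [← (reindexHomeomorph (Equiv.ofUnique (Fin 1) Unit)).surjective.range_eq, ← Set.image_univ]
  exact hfin.image_of_leftInverse (isRegularMap_reindex _) (isRegularMap_reindex _)
    (reindexHomeomorph (Equiv.ofUnique (Fin 1) Unit)).left_inv

theorem dim_univ_unit [Nontrivial X] : dim (Set.univ : Set (Unit → X)) = 1 :=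
  le_antisymm (by simpa using (isIrredClosed_univ_unit (X := X)).dim_le_card)
    (isIrredClosed_univ_unit.one_le_dim Set.nontrivial_univ)

theorem isIrredClosed_univ : IsIrredClosed (Set.univ : Set (ι → X)) := by
  have of_equiv {ι κ : Type} [Finite ι] [Finite κ] (e : ι ≃ κ)
      (h : IsIrredClosed (Set.univ : Set (ι → X))) : IsIrredClosed (Set.univ : Set (κ → X)) := by
    rw [← (reindexHomeomorph e).surjective.range_eq, ← Set.image_univ]
    exact h.image_of_leftInverse (isRegularMap_reindex _) (isRegularMap_reindex _)
      (reindexHomeomorph e).left_inv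
  refine Finite.induction_empty_option
    (P := fun ι => ∀ (_ : Finite ι), IsIrredClosed (Set.univ : Set (ι → X))) ?_ ?_ ?_ ι ‹_›
  · intro ι κ e ih _
    have := Finite.of_equiv κ e.symm
    exact of_equiv e (ih this)
  · intro _
    rw [Set.univ_unique]
    exact isIrredClosed_singleton _
  · intro ι _ ih _
    have h := (ih inferInstance).prod isIrredClosed_univ_unit
    exact of_equiv (Equiv.optionEquivSumPUnit ι).symm (by simpa only [prod_univ_univ] using h)

theorem dim_univ [Nontrivial X] : dim (Set.univ : Set (ι → X)) = Nat.card ι := by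
  have le_of_equiv {ι κ : Type} [Finite ι] [Finite κ] (e : ι ≃ κ) :
      dim (Set.univ : Set (ι → X)) ≤ dim (Set.univ : Set (κ → X)) :=
    isIrredClosed_univ.dim_le_of_leftInvOn isIrredClosed_univ (isRegularMap_reindex _)
      (isRegularMap_reindex _) ((reindexHomeomorph e).left_inv.leftInvOn _) (Set.mapsTo_univ _ _)
  refine isIrredClosed_univ.dim_le_card.antisymm (Finite.induction_empty_option
    (P := fun ι => ∀ (_ : Finite ι), Nat.card ι ≤ dim (Set.univ : Set (ι → X))) ?_ ?_ ?_ ι ‹_›)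
  · intro ι κ e ih _
    have := Finite.of_equiv κ e.symm
    exact Nat.card_congr e ▸ (ih this).trans (le_of_equiv e)
  · intro _
    simp
  · intro ι _ ih _
    calc Nat.card (Option ι) = Nat.card ι + 1 := Finite.card_option
      _ ≤ dim (Set.univ : Set (ι → X)) + dim (Set.univ : Set (Unit → X)) := by
        rw [dim_univ_unit]
        exact Nat.add_le_add_right (ih inferInstance) 1
      _ = dim (Set.univ : Set (ι ⊕ Unit → X)) := by
        rw [← isIrredClosed_univ.dim_prod isIrredClosed_univ_unit, prod_univ_univ]
      _ ≤ _ := le_of_equiv (Equiv.optionEquivSumPUnit ι).symm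

theorem IsIrredClosed.eq_univ_of_card_le_dim {A : Set (ι → X)} (hA : IsIrredClosed A)
    (hdim : Nat.card ι ≤ dim A) : A = Set.univ :=
  hA.eq_of_subset_of_dim_le isIrredClosed_univ (Set.subset_univ A)
    (isIrredClosed_univ.dim_le_card.trans hdim)

theorem infinite_of_nontrivial [Nontrivial X] : Infinite X := by
  have h : (Set.univ : Set (Unit → X)).Infinite :=
    isIrredClosed_univ.infinite dim_univ_unit.ge
  exact (Equiv.funUnique Unit X).infinite_iff.1 (Set.infinite_univ_iff.1 h)

theorem IsIrredClosed.dim_le_dim_closure_image {A : Set (ι → X)} (hA : IsIrredClosed A)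
    {Φ : (ι → X) → κ → X} (hΦ : IsRegularMap Φ) (hinj : Set.InjOn Φ A) :
    dim A ≤ dim (closure (Φ '' A)) := by
  induction hn : dim A generalizing A with
  | zero => exact Nat.zero_le _
  | succ n ih =>
    obtain ⟨a, ha⟩ := hA.nonempty
    obtain ⟨B, hB, -, hssubset, hdim⟩ := hA.exists_ssubset_dim_eq (hn ▸ Nat.le_add_left 1 n) ha
    have hle := ih hB (hinj.mono hssubset.1) (by omega)
    have hne : ¬closure (Φ '' A) ⊆ closure (Φ '' B) := fun h => hssubset.2 <| by
      obtain ⟨F, hF, hBF, hdiff⟩ := hΦ.exists_closure_image_diff_subset hB.isClosed hB.nonempty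
      refine hA.subset_of_diff_subset hB.isClosed (hF.preimage hΦ.continuous) (fun hAF => ?_) ?_
      · exact hBF (closure_minimal (Set.image_subset_iff.2 (hssubset.1.trans hAF)) hF)
      · rintro v ⟨hv, hvF⟩
        obtain ⟨v', hv', heq⟩ := hdiff ⟨h (subset_closure (Set.mem_image_of_mem Φ hv)), hvF⟩
        rwa [← hinj (hssubset.1 hv') hv heq]
    have hlt := (hB.closure_image hΦ.continuous).dim_strictMono (hA.closure_image hΦ.continuous)
      ⟨closure_mono (Set.image_mono hssubset.1), hne⟩
    omega

theorem IsIrredClosed.dim_closure_image_le {A : Set (ι → X)} (hA : IsIrredClosed A)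
    {Φ : (ι → X) → κ → X} (hΦ : IsRegularMap Φ) : dim (closure (Φ '' A)) ≤ dim A := by
  induction hn : dim (closure (Φ '' A)) generalizing A with
  | zero => exact Nat.zero_le _
  | succ n ih =>
    obtain ⟨F, hF, hAF, hdiff⟩ := hΦ.exists_closure_image_diff_subset hA.isClosed hA.nonempty
    obtain ⟨b, hb, hbF⟩ := Set.not_subset.1 hAF
    obtain ⟨B, hB, hbB, hssubset, hdim⟩ := (hA.closure_image hΦ.continuous).exists_ssubset_dim_eq
      (hn ▸ Nat.le_add_left 1 n) hb
    obtain ⟨A', hA', hA'A, hBA'⟩ := exists_isIrredClosed_subset_closure_image (f := Φ)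
      (hA.isClosed.inter (hB.isClosed.preimage hΦ.continuous)) hB hF (fun h => hbF (h hbB)) <| by
        rintro w ⟨hw, hwF⟩
        obtain ⟨v, hv, rfl⟩ := hdiff ⟨hssubset.1 hw, hwF⟩
        exact ⟨v, ⟨hv, hw⟩, rfl⟩
    have hclosure : closure (Φ '' A') = B := (closure_minimal
      (Set.image_subset_iff.2 fun v hv => (hA'A hv).2) hB.isClosed).antisymm hBA'
    have hle := ih hA' (by rw [hclosure]; omega)
    have hlt := hA'.dim_strictMono hA ⟨fun v hv => (hA'A hv).1, fun h => hssubset.2 <|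
      hclosure ▸ closure_mono (Set.image_mono h)⟩
    omega

theorem IsIrredClosed.finite_compl_image {A : Set (ι → X)} (hA : IsIrredClosed A)
    {f : (ι → X) → X} (hf : IsRegular f) (hnontriv : (f '' A).Nontrivial) : (f '' A)ᶜ.Finite := by
  let Φ : (ι → X) → Unit → X := fun v _ => f v
  have hΦ : IsRegularMap Φ := fun _ => hf
  have hdense : closure (Φ '' A) = Set.univ := by
    refine (hA.closure_image hΦ.continuous).eq_univ_of_card_le_dim ?_
    rw [Nat.card_unique]
    refine (hA.closure_image hΦ.continuous).one_le_dim (Set.Nontrivial.mono ?_ subset_closure)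
    obtain ⟨_, ⟨a, ha, rfl⟩, _, ⟨b, hb, rfl⟩, hab⟩ := hnontriv
    exact ⟨Φ a, ⟨a, ha, rfl⟩, Φ b, ⟨b, hb, rfl⟩, fun h => hab (congrFun h ())⟩
  obtain ⟨F, hF, hAF, hdiff⟩ := hΦ.exists_closure_image_diff_subset hA.isClosed hA.nonempty
  rw [hdense] at hAF hdiff
  rcases setOf_apply_mem_eq_univ_or_finite hF (Φ := fun t _ => t) isRegularMap_id with h | h
  · exact (hAF fun v _ => Set.eq_univ_iff_forall.1 h (v ())).elim
  · refine h.subset fun t ht => by_contra fun htF => ht ?_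
    obtain ⟨v, hv, heq⟩ := hdiff (a := fun _ => t) ⟨trivial, htF⟩
    exact ⟨v, hv, congrFun heq ()⟩

theorem IsIrredClosed.infinite_image {A : Set (ι → X)} (hA : IsIrredClosed A)
    {f : (ι → X) → X} (hf : IsRegular f) (hnontriv : (f '' A).Nontrivial) : (f '' A).Infinite := by
  have : Nontrivial X := let ⟨x, _, y, _, hxy⟩ := hnontriv; ⟨x, y, hxy⟩
  have := infinite_of_nontrivial (X := X)
  exact compl_compl (f '' A) ▸ (hA.finite_compl_image hf hnontriv).infinite_compl

theorem IsIrredClosed.subset_of_finite_exceptions {A : Set (ι → X)} (hA : IsIrredClosed A)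
    {f : (ι → X) → X} (hf : IsRegular f) (hnontriv : (f '' A).Nontrivial) {F : Set X}
    (hF : F.Finite) {D : Set (ι → X)} (hD : IsClosed D) (h : ∀ v ∈ A, f v ∉ F → v ∈ D) :
    A ⊆ D := by
  have hclosed : IsClosed (⋃ x ∈ F, {v | f v = x}) :=
    hF.isClosed_biUnion fun x _ => hf.isClosed_eq (isRegular_const x)
  refine hA.subset_of_diff_subset hD hclosed (fun hsub => ?_) fun v hv => h v hv.1 fun hvF =>
    hv.2 (Set.mem_biUnion hvF rfl)
  exact hA.infinite_image hf hnontriv (hF.subset <| Set.image_subset_iff.2 fun v hv => by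
    simpa using hsub hv)

end Projection

/-! ### Addition and multiplication are regular -/

section PrincipalComponent

variable [Finite ι] [Finite κ]

/-- `M` is the unique largest irreducible closed subset of dimension at least `d` of `G`. -/
structure IsPrincipalComponent (d : ℕ) (M G : Set (ι → X)) : Prop where
  isIrredClosed : IsIrredClosed M
  subset : M ⊆ G
  le_dim : d ≤ dim M
  subset_of_le_dim : ∀ T, IsIrredClosed T → T ⊆ G → d ≤ dim T → T ⊆ M

theorem exists_isPrincipalComponent_of_bijOn [Nontrivial X] {G : Set (ι → X)} (hG : IsClosed G)
    {Φ : (ι → X) → κ → X} (hΦ : IsRegularMap Φ) (hbij : Set.BijOn Φ G Set.univ) :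
    ∃ M, IsPrincipalComponent (Nat.card κ) M G := by
  obtain ⟨M, hM, hMG, hdense⟩ := exists_isIrredClosed_subset_closure_image hG isIrredClosed_univ
    isClosed_empty (Set.univ_nonempty.not_subset_empty) (Set.sdiff_subset.trans hbij.surjOn)
  rw [Set.univ_subset_iff] at hdense
  refine ⟨M, hM, hMG, ?_, fun T hT hTG hTdim => ?_⟩
  · simpa only [hdense, dim_univ] using hM.dim_closure_image_le hΦ
  have hTdense : closure (Φ '' T) = Set.univ :=
    (hT.closure_image hΦ.continuous).eq_univ_of_card_le_dim
      (hTdim.trans (hT.dim_le_dim_closure_image hΦ (hbij.injOn.mono hTG)))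
  obtain ⟨F, hF, hMF, hdiff⟩ := hΦ.exists_closure_image_diff_subset hM.isClosed hM.nonempty
  rw [hdense] at hMF hdiff
  refine hT.subset_of_diff_subset hM.isClosed (hF.preimage hΦ.continuous) (fun hTF => hMF ?_) ?_
  · exact hTdense ▸ closure_minimal (Set.image_subset_iff.2 hTF) hF
  · rintro v ⟨hv, hvF⟩
    obtain ⟨v', hv', heq⟩ := hdiff ⟨trivial, hvF⟩
    rwa [← hbij.injOn (hMG hv') (hTG hv) heq]

theorem IsPrincipalComponent.mapsTo {d : ℕ} {M G : Set (ι → X)} (hM : IsPrincipalComponent d M G)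
    (hG : IsClosed G) {T : Set (κ → X)} (hT : IsIrredClosed T) (hdim : d ≤ dim T)
    {Φ : (κ → X) → ι → X} (hΦ : IsRegularMap Φ) (hinj : Set.InjOn Φ T) (hTG : Set.MapsTo Φ T G) :
    Set.MapsTo Φ T M := fun _ hv =>
  hM.subset_of_le_dim _ (hT.closure_image hΦ.continuous)
    (closure_minimal hTG.image_subset hG) (hdim.trans (hT.dim_le_dim_closure_image hΦ hinj))
    (subset_closure (Set.mem_image_of_mem Φ hv))

theorem IsIrredClosed.apply_mem_of_leftInvOn {S : Set (ι → X)} (hS : IsIrredClosed S)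
    (hdim : Nat.card κ ≤ dim S) {Φ : (ι → X) → κ → X} {Ψ : (κ → X) → ι → X} (hΦ : IsRegularMap Φ)
    (hΨ : IsRegularMap Ψ) (hinv : Set.LeftInvOn Ψ Φ S) (u : κ → X) : Ψ u ∈ S := by
  have hdense : closure (Φ '' S) = Set.univ :=
    (hS.closure_image hΦ.continuous).eq_univ_of_card_le_dim
      (hdim.trans (hS.dim_le_dim_closure_image hΦ hinv.injOn))
  have hsub : closure (Φ '' S) ⊆ Ψ ⁻¹' S := by
    refine closure_minimal ?_ (hS.isClosed.preimage hΨ.continuous)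
    rintro _ ⟨v, hv, rfl⟩
    rwa [Set.mem_preimage, hinv hv]
  exact hsub (hdense ▸ Set.mem_univ u)

end PrincipalComponent

/-- Every Zariski-closed set is closed in the fixed Zariski geometry on the field `K`. -/
class RefinesZariski (K : Type*) [Field K] [HasZariskiGeometry K] : Prop where
  isClosed_of_zariskiClosedSet : ∀ (n : ℕ) (C : Set (Fin n → K)), ZariskiClosedSet K C →
    IsClosed[geometry.τ n] C

variable {K : Type*} [Field K] [HasZariskiGeometry K]

/-- The set of `(c, x, b, y)` with `y = c x + b`: the point `(x, y)` lies on the line with slope `c`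
and intercept `b`. -/
def mulAddGraph (K : Type*) [Field K] : Set (Fin 4 → K) := {v | v 3 = v 0 * v 1 + v 2}

/-- `Y` is an irreducible closed four-dimensional set of quintuples `(c, x, y, x', y')` such that
`(x, y)` and `(x', y')` lie on a common line of slope `c`, and it meets `x = x'`. -/
structure IsSlopeVariety (Y : Set (Fin 5 → K)) : Prop where
  isIrredClosed : IsIrredClosed Y
  four_le_dim : 4 ≤ dim Y
  sub_eq : ∀ w ∈ Y, w 2 - w 4 = w 0 * (w 1 - w 3)
  exists_eq : ∃ w ∈ Y, w 1 = w 3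

section MulAddGraph

theorem mulAddGraph_ext {K : Type*} [Field K] {u v : Fin 4 → K} (hu : u ∈ mulAddGraph K)
    (hv : v ∈ mulAddGraph K) (h₀ : u 0 = v 0) (h₁ : u 1 = v 1) (h₂ : u 2 = v 2) : u = v := by
  have hu : u 3 = u 0 * u 1 + u 2 := hu
  have hv : v 3 = v 0 * v 1 + v 2 := hv
  funext i
  fin_cases i <;> grind

theorem IsSlopeVariety.diagonal_mem {Y : Set (Fin 5 → K)} (hY : IsSlopeVariety Y) (c x y : K) :
    ![c, x, y, x, y] ∈ Y := by
  obtain ⟨w, hw, hwx⟩ := hY.exists_eq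
  obtain ⟨S, hS, -, hSY, hSeq, hSdim⟩ := hY.isIrredClosed.exists_subset_eqOn hw
    (isRegular_coord 1) (isRegular_coord 3) hwx
  have hmem := hS.apply_mem_of_leftInvOn (κ := Fin 3) (Φ := fun w => w ∘ ![0, 1, 2])
    (Ψ := fun u => u ∘ ![0, 1, 2, 1, 2]) ?_ (isRegularMap_reindex _) (isRegularMap_reindex _)
    ?_ ![c, x, y]
  · convert hSY hmem
    funext i
    fin_cases i <;> rfl
  · have := hY.four_le_dim
    simp only [Nat.card_fin]
    omega
  · intro w hw
    have hx : w 1 = w 3 := hSeq hw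
    have hy := hY.sub_eq w (hSY hw)
    funext i
    fin_cases i <;> simp <;> grind

theorem IsSlopeVariety.zero_slope_mem {Y : Set (Fin 5 → K)} (hY : IsSlopeVariety Y) (x y x' : K) :
    ![0, x, y, x', y] ∈ Y := by
  obtain ⟨S, hS, -, hSY, hSeq, hSdim⟩ := hY.isIrredClosed.exists_subset_eqOn
    (hY.diagonal_mem 0 x y) (isRegular_coord 0) (isRegular_const 0) rfl
  have hmem := hS.apply_mem_of_leftInvOn (κ := Fin 3) (Φ := fun w => w ∘ ![1, 2, 3])
    (Ψ := fun u => Matrix.vecCons 0 (u ∘ ![0, 1, 2, 1])) ?_ (isRegularMap_reindex _)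
    ((isRegular_const 0).vecCons (isRegularMap_reindex _)) ?_ ![x, y, x']
  · convert hSY hmem
    funext i
    fin_cases i <;> rfl
  · have := hY.four_le_dim
    simp only [Nat.card_fin]
    omega
  · intro w hw
    have hzero : w 0 = 0 := hSeq hw
    have hy := hY.sub_eq w (hSY hw)
    funext i
    fin_cases i <;> simp <;> grind

variable [RefinesZariski K]

theorem isClosed_setOf_eval_eq_zero {n : ℕ} (p : MvPolynomial (Fin n) K) :
    IsClosed {v | MvPolynomial.eval v p = 0} := by
  rw [instTopologicalSpacePower_fin]
  exact RefinesZariski.isClosed_of_zariskiClosedSet n _ ⟨{p}, by simp⟩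

theorem isClosed_mulAddGraph : IsClosed (mulAddGraph K) := by
  have h := isClosed_setOf_eval_eq_zero (.X 3 - (.X 0 * .X 1 + .X 2) : MvPolynomial (Fin 4) K)
  simpa [sub_eq_zero, mulAddGraph] using h

theorem exists_isPrincipalComponent_mulAddGraph :
    ∃ M, IsPrincipalComponent 3 M (mulAddGraph K) := by
  have hbij : Set.BijOn (fun v : Fin 4 → K => v ∘ ![0, 1, 2]) (mulAddGraph K) Set.univ := by
    refine ⟨Set.mapsTo_univ _ _, fun u hu v hv huv => ?_, fun w _ => ?_⟩
    · exact mulAddGraph_ext hu hv (congrFun huv 0) (congrFun huv 1) (congrFun huv 2)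
    · refine ⟨![w 0, w 1, w 2, w 0 * w 1 + w 2], rfl, ?_⟩
      funext i
      fin_cases i <;> rfl
  simpa using
    exists_isPrincipalComponent_of_bijOn isClosed_mulAddGraph (isRegularMap_reindex _) hbij

variable {M : Set (Fin 4 → K)}

theorem IsPrincipalComponent.exists_isSlopeVariety
    (hM : IsPrincipalComponent 3 M (mulAddGraph K)) : ∃ Y : Set (Fin 5 → K), IsSlopeVariety Y := by
  obtain ⟨m, hm⟩ := hM.isIrredClosed.nonempty
  obtain ⟨T, hT, hmT, hTM, hTeq, hTdim⟩ :=
    (hM.isIrredClosed.prod hM.isIrredClosed).exists_subset_eqOn_map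
    (a := Sum.elim m m) ⟨hm, hm⟩ (isRegularMap_reindex ![.inl 0, .inl 2])
    (isRegularMap_reindex ![.inr 0, .inr 2]) (by funext i; fin_cases i <;> rfl)
  have hslope {v} (hv : v ∈ T) : v (.inl 0) = v (.inr 0) := congrFun (hTeq hv) 0
  have hintercept {v} (hv : v ∈ T) : v (.inl 2) = v (.inr 2) := congrFun (hTeq hv) 1
  have hleft {v} (hv : v ∈ T) : v (.inl 3) = v (.inl 0) * v (.inl 1) + v (.inl 2) :=
    hM.subset (hTM hv).1
  have hright {v} (hv : v ∈ T) : v (.inr 3) = v (.inr 0) * v (.inr 1) + v (.inr 2) :=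
    hM.subset (hTM hv).2
  let α : Fin 5 → Fin 4 ⊕ Fin 4 := ![.inl 0, .inl 1, .inl 3, .inr 1, .inr 3]
  have hinj : Set.InjOn (fun v : Fin 4 ⊕ Fin 4 → K => v ∘ α) T := by
    intro u hu v hv huv
    have h₀ : u (.inl 0) = v (.inl 0) := congrFun huv 0
    have h₁ : u (.inl 1) = v (.inl 1) := congrFun huv 1
    have h₃ : u (.inl 3) = v (.inl 3) := congrFun huv 2
    have h₁' : u (.inr 1) = v (.inr 1) := congrFun huv 3
    have h₃' : u (.inr 3) = v (.inr 3) := congrFun huv 4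
    funext i
    rcases i with i | i <;> fin_cases i <;> grind
  refine ⟨closure ((fun v => v ∘ α) '' T), hT.closure_image (continuous_reindex α), ?_, ?_,
    Sum.elim m m ∘ α, subset_closure ⟨_, hmT, rfl⟩, rfl⟩
  · have := hT.dim_le_dim_closure_image (isRegularMap_reindex α) hinj
    rw [hM.isIrredClosed.dim_prod hM.isIrredClosed] at hTdim
    have := hM.le_dim
    omega
  · have hclosed := isClosed_setOf_eval_eq_zero
      (.X 2 - .X 4 - .X 0 * (.X 1 - .X 3) : MvPolynomial (Fin 5) K)
    simp only [map_sub, map_mul, MvPolynomial.eval_X, sub_eq_zero] at hclosed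
    refine closure_minimal ?_ hclosed
    rintro _ ⟨v, hv, rfl⟩
    change v (.inl 3) - v (.inr 3) = v (.inl 0) * (v (.inl 1) - v (.inr 1))
    grind

theorem IsPrincipalComponent.abscissa_zero_mem (hM : IsPrincipalComponent 3 M (mulAddGraph K))
    (c b : K) : ![c, 0, b, b] ∈ M := by
  obtain ⟨Y, hY⟩ := hM.exists_isSlopeVariety
  -- The roles of slope and abscissa are exchanged: `y - y' = c x` once `x' = 0`.
  obtain ⟨S, hS, hmem, hSY, hSeq, hSdim⟩ := hY.isIrredClosed.exists_subset_eqOn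
    (hY.zero_slope_mem c b 0) (isRegular_coord 3) (isRegular_const 0) rfl
  have hdim : 3 ≤ dim S := by
    have := hY.four_le_dim
    omega
  convert! hM.mapsTo isClosed_mulAddGraph hS hdim (isRegularMap_reindex ![1, 0, 4, 2]) ?_ ?_ hmem
    using 1
  · funext i
    fin_cases i <;> rfl
  · intro u hu v hv huv
    have h₁ : u 1 = v 1 := congrFun huv 0
    have h₀ : u 0 = v 0 := congrFun huv 1
    have h₄ : u 4 = v 4 := congrFun huv 2
    have h₂ : u 2 = v 2 := congrFun huv 3
    have h₃ : u 3 = v 3 := (hSeq hu).trans (hSeq hv).symm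
    funext i
    fin_cases i <;> assumption
  · intro w hw
    have hsub := hY.sub_eq w (hSY hw)
    have hzero : w 3 = 0 := hSeq hw
    change w 2 = w 1 * w 0 + w 4
    linear_combination hsub - w 0 * hzero

theorem IsPrincipalComponent.slope_zero_mem (hM : IsPrincipalComponent 3 M (mulAddGraph K))
    (x b : K) : ![0, x, b, b] ∈ M := by
  convert! hM.mapsTo isClosed_mulAddGraph hM.isIrredClosed hM.le_dim
    (isRegularMap_reindex ![1, 0, 2, 3]) ?_ ?_ (hM.abscissa_zero_mem x b) using 1
  · funext i
    fin_cases i <;> rfl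
  · intro u hu v hv huv
    exact mulAddGraph_ext (hM.subset hu) (hM.subset hv) (congrFun huv 1) (congrFun huv 0)
      (congrFun huv 2)
  · intro w hw
    have : w 3 = w 0 * w 1 + w 2 := hM.subset hw
    change w 3 = w 1 * w 0 + w 2
    grind

theorem IsPrincipalComponent.finite_compl_setOf_mem
    (hM : IsPrincipalComponent 3 M (mulAddGraph K)) (x b : K) {i : Fin 4} (hi : i = 2 ∨ i = 3)
    {f : K → Fin 4 → K} (hf : ∀ v ∈ mulAddGraph K, v 1 = x → v i = b → v = f (v 0)) :
    {c | f c ∈ M}ᶜ.Finite := by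
  obtain ⟨T, hT, -, hTM, hTeq, hTdim⟩ := hM.isIrredClosed.exists_subset_eqOn_map
    (hM.slope_zero_mem x b) (isRegularMap_reindex ![1, i]) (isRegularMap_const ![x, b])
    (by rcases hi with rfl | rfl <;> funext j <;> fin_cases j <;> rfl)
  have hTf {v} (hv : v ∈ T) : v = f (v 0) :=
    hf v (hM.subset (hTM hv)) (congrFun (hTeq hv) 0) (congrFun (hTeq hv) 1)
  have hdim : 1 ≤ dim T := by
    have := hM.le_dim
    omega
  have hinj : Set.InjOn (fun v : Fin 4 → K => v 0) T := fun u hu v hv huv => by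
    rw [hTf hu, hTf hv, show u 0 = v 0 from huv]
  refine (hT.finite_compl_image (isRegular_coord 0)
    ((hT.infinite hdim).image hinj).nontrivial).subset (Set.compl_subset_compl.2 ?_)
  rintro _ ⟨v, hv, rfl⟩
  rw [Set.mem_ofPred_eq, ← hTf hv]
  exact hTM hv

-- The identity behind this is `a x + b = c x + ((a - c) x + b)`, where `a - c` is obtained from
-- `a = c * 1 + (a - c)`.
theorem IsPrincipalComponent.mem_of_mem_of_mem_of_mem
    (hM : IsPrincipalComponent 3 M (mulAddGraph K)) {a b c x : K} (h₁ : ![c, 1, a - c, a] ∈ M)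
    (h₂ : ![a - c, x, b, (a - c) * x + b] ∈ M)
    (h₃ : ![c, x, (a - c) * x + b, a * x + b] ∈ M) : ![a, x, b, a * x + b] ∈ M := by
  let A₁ (i : Fin 4) : (Fin 4 ⊕ Fin 4) ⊕ Fin 4 := .inl (.inl i)
  let A₂ (i : Fin 4) : (Fin 4 ⊕ Fin 4) ⊕ Fin 4 := .inl (.inr i)
  let A₃ (i : Fin 4) : (Fin 4 ⊕ Fin 4) ⊕ Fin 4 := .inr i
  have hMM := hM.isIrredClosed.prod hM.isIrredClosed
  obtain ⟨T, hT, hmT, hTM, hTeq, hTdim⟩ := (hMM.prod hM.isIrredClosed).exists_subset_eqOn_map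
    (a := Sum.elim (Sum.elim _ _) _) ⟨⟨h₁, h₂⟩, h₃⟩
    (isRegularMap_reindex ![A₁ 0, A₁ 1, A₂ 0, A₃ 0, A₃ 1, A₃ 2])
    ((isRegular_const c).vecCons ((isRegular_const 1).vecCons
      (isRegularMap_reindex ![A₁ 2, A₁ 0, A₂ 1, A₂ 3])))
    (by funext i; fin_cases i <;> rfl)
  have hdim : 3 ≤ dim T := by
    rw [hMM.dim_prod hM.isIrredClosed, hM.isIrredClosed.dim_prod hM.isIrredClosed] at hTdim
    have := hM.le_dim
    omega
  have hT₁ {v} (hv : v ∈ T) : v (A₁ 3) = v (A₁ 0) * v (A₁ 1) + v (A₁ 2) := hM.subset (hTM hv).1.1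
  have hT₂ {v} (hv : v ∈ T) : v (A₂ 3) = v (A₂ 0) * v (A₂ 1) + v (A₂ 2) := hM.subset (hTM hv).1.2
  have hT₃ {v} (hv : v ∈ T) : v (A₃ 3) = v (A₃ 0) * v (A₃ 1) + v (A₃ 2) := hM.subset (hTM hv).2
  have hrel {v} (hv : v ∈ T) : v (A₁ 0) = c ∧ v (A₁ 1) = 1 ∧ v (A₂ 0) = v (A₁ 2) ∧
      v (A₃ 0) = v (A₁ 0) ∧ v (A₃ 1) = v (A₂ 1) ∧ v (A₃ 2) = v (A₂ 3) :=
    ⟨congrFun (hTeq hv) 0, congrFun (hTeq hv) 1, congrFun (hTeq hv) 2, congrFun (hTeq hv) 3,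
      congrFun (hTeq hv) 4, congrFun (hTeq hv) 5⟩
  convert! hM.mapsTo isClosed_mulAddGraph hT hdim
    (isRegularMap_reindex ![A₁ 3, A₂ 1, A₂ 2, A₃ 3]) ?_ ?_ hmT using 1
  · funext i
    fin_cases i <;> rfl
  · intro u hu v hv huv
    have e₁ : u (A₁ 3) = v (A₁ 3) := congrFun huv 0
    have e₂ : u (A₂ 1) = v (A₂ 1) := congrFun huv 1
    have e₃ : u (A₂ 2) = v (A₂ 2) := congrFun huv 2
    funext i
    rcases i with (i | i) | i <;> fin_cases i <;> grind
  · intro v hv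
    change v (A₃ 3) = v (A₁ 3) * v (A₂ 1) + v (A₂ 2)
    grind

theorem isPrincipalComponent_mulAddGraph :
    IsPrincipalComponent 3 (mulAddGraph K) (mulAddGraph K) := by
  obtain ⟨M, hM⟩ := exists_isPrincipalComponent_mulAddGraph (K := K)
  suffices h : mulAddGraph K ⊆ M from hM.subset.antisymm h ▸ hM
  intro v hv
  have hv : v 3 = v 0 * v 1 + v 2 := hv
  have hfin₁ : {c | ![c, 1, v 0 - c, v 0] ∈ M}ᶜ.Finite :=
    hM.finite_compl_setOf_mem 1 (v 0) (.inr rfl) fun w (hw : w 3 = _) h₁ h₃ => by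
      funext i; fin_cases i <;> simp <;> grind
  have hfin₂ : {c | ![c, v 1, v 2, c * v 1 + v 2] ∈ M}ᶜ.Finite :=
    hM.finite_compl_setOf_mem (v 1) (v 2) (.inl rfl) fun w (hw : w 3 = _) h₁ h₂ => by
      funext i; fin_cases i <;> simp <;> grind
  have hfin₃ : {c | ![c, v 1, v 3 - c * v 1, v 3] ∈ M}ᶜ.Finite :=
    hM.finite_compl_setOf_mem (v 1) (v 3) (.inr rfl) fun w (hw : w 3 = _) h₁ h₃ => by
      funext i; fin_cases i <;> simp <;> grind
  have := infinite_of_nontrivial (X := K)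
  obtain ⟨c, hc⟩ := ((hfin₁.union
    (hfin₂.preimage (sub_right_injective (b := v 0)).injOn)).union hfin₃).infinite_compl.nonempty
  simp only [Set.mem_compl_iff, Set.mem_union, not_or, Set.mem_preimage, not_not,
    Set.mem_ofPred_eq] at hc
  obtain ⟨⟨h₁, h₂⟩, h₃⟩ := hc
  rw [show v = ![v 0, v 1, v 2, v 0 * v 1 + v 2] by funext i; fin_cases i <;> simp [hv]]
  refine hM.mem_of_mem_of_mem_of_mem h₁ h₂ ?_
  convert! h₃ using 1
  funext i
  fin_cases i <;> simp <;> grind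

end MulAddGraph

section Graph

/-- The graph of a function of `n` variables, the value being the last coordinate. -/
def graph {n : ℕ} (f : (Fin n → X) → X) : Set (Fin (n + 1) → X) :=
  {z | z (Fin.last n) = f (z ∘ Fin.castSucc)}

variable {n : ℕ} {f : (Fin n → X) → X} [Finite κ]

theorem IsIrredClosed.exists_prod_graph (hf : IsIrredClosed (graph f)) (hdim : n ≤ dim (graph f))
    (α : Fin n → κ) {B : Set (κ → X)} (hB : IsIrredClosed B) {v : κ → X} (hv : v ∈ B) :
    ∃ T : Set (κ ⊕ Fin (n + 1) → X), IsIrredClosed T ∧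
      Sum.elim v (Fin.snoc (v ∘ α) (f (v ∘ α)) : Fin (n + 1) → X) ∈ T ∧
      (∀ z ∈ T, z (.inr (Fin.last n)) = f (z ∘ .inl ∘ α)) ∧
      closure ((fun z => z ∘ .inl) '' T) = B := by
  have hsnoc : (Fin.snoc (v ∘ α) (f (v ∘ α)) : Fin (n + 1) → X) ∘ Fin.castSucc = v ∘ α :=
    Fin.init_snoc _ _
  have hmem : (Fin.snoc (v ∘ α) (f (v ∘ α)) : Fin (n + 1) → X) ∈ graph f :=
    (Fin.snoc_last _ _).trans (congrArg f hsnoc.symm)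
  obtain ⟨T, hT, hvT, hTB, hTeq, hTdim⟩ := (hB.prod hf).exists_subset_eqOn_map
    (a := Sum.elim v _) ⟨hv, hmem⟩ (isRegularMap_reindex (Sum.inl ∘ α))
    (isRegularMap_reindex (Sum.inr ∘ Fin.castSucc)) hsnoc.symm
  have hTf {z} (hz : z ∈ T) : z (.inr (Fin.last n)) = f (z ∘ .inl ∘ α) := by
    rw [show z ∘ Sum.inl ∘ α = z ∘ Sum.inr ∘ Fin.castSucc from hTeq hz]
    exact (hTB hz).2
  refine ⟨T, hT, hvT, @hTf, (hT.closure_image (continuous_reindex _)).eq_of_subset_of_dim_le hB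
    (closure_minimal (Set.image_subset_iff.2 fun z hz => (hTB hz).1) hB.isClosed) ?_⟩
  have hinj : Set.InjOn (fun z : κ ⊕ Fin (n + 1) → X => z ∘ Sum.inl) T := by
    intro y hy z hz (hyz : y ∘ Sum.inl = z ∘ Sum.inl)
    have hα : y ∘ Sum.inl ∘ α = z ∘ Sum.inl ∘ α := congrArg (· ∘ α) hyz
    funext i
    rcases i with k | i
    · exact congrFun hyz k
    · refine Fin.lastCases ?_ (fun j => ?_) i
      · rw [hTf hy, hTf hz, hα]
      · exact (congrFun (hTeq hy) j).symm.trans ((congrFun hα j).trans (congrFun (hTeq hz) j))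
  have := hT.dim_le_dim_closure_image (isRegularMap_reindex Sum.inl) hinj
  rw [hB.dim_prod hf] at hTdim
  omega

theorem IsIrredClosed.elim_mem_of_mem_closure (hf : IsIrredClosed (graph f))
    (hdim : n ≤ dim (graph f)) {α : Fin n → κ} {t : Set (Option κ → X)} (ht : IsIrredClosed t)
    (htf : ∀ z ∈ t, z none = f (z ∘ some ∘ α)) {v : κ → X}
    (hv : v ∈ closure ((fun z => z ∘ some) '' t)) :
    (fun o : Option κ => o.elim (f (v ∘ α)) v) ∈ t := by
  obtain ⟨T, hT, hvT, hTf, hdense⟩ :=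
    hf.exists_prod_graph hdim α (ht.closure_image (continuous_reindex _)) hv
  obtain ⟨F, hF, hnot, hdiff⟩ :=
    (isRegularMap_reindex some).exists_closure_image_diff_subset ht.isClosed ht.nonempty
  let θ : Option κ → κ ⊕ Fin (n + 1) := fun o => o.elim (.inr (Fin.last n)) .inl
  have hTt : T ⊆ (fun z => z ∘ θ) ⁻¹' t := by
    refine hT.subset_of_diff_subset (ht.isClosed.preimage (continuous_reindex θ))
      (hF.preimage (continuous_reindex .inl)) (fun h => hnot ?_) ?_
    · rw [← hdense]
      exact closure_minimal (Set.image_subset_iff.2 h) hF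
    · rintro z ⟨hz, hzF⟩
      obtain ⟨y, hy, hyz : y ∘ some = z ∘ .inl⟩ :=
        hdiff ⟨hdense ▸ subset_closure (Set.mem_image_of_mem _ hz), hzF⟩
      suffices z ∘ θ = y by rwa [Set.mem_preimage, this]
      funext o
      rcases o with _ | k
      · exact (hTf z hz).trans ((congrArg (fun w => f (w ∘ α)) hyz.symm).trans (htf y hy).symm)
      · exact (congrFun hyz k).symm
  convert! Set.mem_preimage.1 (hTt hvT) using 1
  funext o
  rcases o with _ | k
  · exact (Fin.snoc_last (α := fun _ => X) _ _).symm
  · rfl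

theorem isRegular_of_isIrredClosed_graph (hf : IsIrredClosed (graph f))
    (hdim : n ≤ dim (graph f)) : IsRegular f := by
  intro κ _ α
  rw [continuous_iff_isClosed]
  intro D hD
  let β : Fin (n + 1) → Option κ := Fin.snoc (some ∘ α) none
  have hβ : β ∘ Fin.castSucc = some ∘ α := Fin.init_snoc _ _
  have hβlast : β (Fin.last n) = none := Fin.snoc_last _ _
  have hmem (z : Option κ → X) : z ∘ β ∈ graph f ↔ z none = f (z ∘ some ∘ α) := by
    simp only [graph, Set.mem_ofPred_eq, Function.comp_assoc, hβ, Function.comp_apply, hβlast]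
  obtain ⟨S, hS, hclosed, hirred, hunion⟩ := NoetherianSpace.exists_finite_set_isClosed_irreducible
    (hD.inter (hf.isClosed.preimage (continuous_reindex β)))
  have htf {t} (ht : t ∈ S) {z} (hz : z ∈ t) : z none = f (z ∘ some ∘ α) :=
    (hmem z).1 (hunion.symm.subset ⟨t, ht, hz⟩).2
  have hpre : (fun (v : κ → X) (o : Option κ) => o.elim (f (v ∘ α)) v) ⁻¹' D =
      ⋃ t ∈ S, closure ((fun z => z ∘ some) '' t) := by
    ext v
    simp only [Set.mem_iUnion₂, Set.mem_preimage]
    constructor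
    · intro hv
      obtain ⟨t, ht, hvt⟩ := hunion.subset ⟨hv, (hmem _).2 rfl⟩
      exact ⟨t, ht, subset_closure ⟨_, hvt, rfl⟩⟩
    · rintro ⟨t, ht, hv⟩
      exact (hunion.symm.subset ⟨t, ht, hf.elim_mem_of_mem_closure hdim
        ⟨hclosed t ht, hirred t ht⟩ (fun _ => htf ht) hv⟩).1
  rw [hpre]
  exact hS.isClosed_biUnion fun _ _ => isClosed_closure

end Graph

section Polynomial

variable [RefinesZariski K]

theorem isRegular_mulAdd : IsRegular fun v : Fin 3 → K => v 0 * v 1 + v 2 :=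
  have h : IsPrincipalComponent 3 (mulAddGraph K) (mulAddGraph K) :=
    isPrincipalComponent_mulAddGraph
  isRegular_of_isIrredClosed_graph h.isIrredClosed h.le_dim

theorem IsRegular.mul_add {f g h : (ι → K) → K} (hf : IsRegular f) (hg : IsRegular g)
    (hh : IsRegular h) : IsRegular fun v => f v * g v + h v :=
  isRegular_mulAdd.comp (hf.vecCons (hg.vec2 hh))

theorem IsRegular.mul {f g : (ι → K) → K} (hf : IsRegular f) (hg : IsRegular g) :
    IsRegular fun v => f v * g v := by
  simpa using hf.mul_add hg (isRegular_const 0)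

theorem IsRegular.add {f g : (ι → K) → K} (hf : IsRegular f) (hg : IsRegular g) :
    IsRegular fun v => f v + g v := by
  simpa using hf.mul_add (isRegular_const 1) hg

theorem IsRegular.neg {f : (ι → K) → K} (hf : IsRegular f) : IsRegular fun v => -f v := by
  simpa using hf.mul (isRegular_const (-1))

theorem IsRegular.sub {f g : (ι → K) → K} (hf : IsRegular f) (hg : IsRegular g) :
    IsRegular fun v => f v - g v := by
  simpa [sub_eq_add_neg] using hf.add hg.neg

theorem IsRegular.finsetProd {α : Type*} {f : α → (ι → K) → K} (s : Finset α)
    (hf : ∀ a ∈ s, IsRegular (f a)) : IsRegular fun v => ∏ a ∈ s, f a v := by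
  simp only [← Finset.prod_apply]
  exact Finset.prod_induction f IsRegular (fun _ _ => IsRegular.mul) (isRegular_const 1) hf

theorem isRegular_eval (p : MvPolynomial ι K) :
    IsRegular fun v : ι → K => MvPolynomial.eval v p := by
  induction p using MvPolynomial.induction_on with
  | C a => simpa using isRegular_const a
  | add p q hp hq => simpa using hp.add hq
  | mul_X p i hp => simpa using hp.mul (isRegular_coord i)

end Polynomial

/-! ### Cones and limit points -/

/-- The point `(e, v, s)` of `X^ι × X^κ × X`. Over a field, `X^κ × X` is thought of as homogeneous
coordinates: for `s ≠ 0` it represents `(e, s⁻¹ • v)`, for `s = 0` the point at infinity in the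
direction `v` over `e`. -/
def conePoint {X : Type*} (e : ι → X) (v : κ → X) (s : X) : (ι ⊕ κ) ⊕ Unit → X :=
  Sum.elim (Sum.elim e v) fun _ => s

theorem conePoint_eta {X : Type*} (w : (ι ⊕ κ) ⊕ Unit → X) :
    conePoint (w ∘ Sum.inl ∘ Sum.inl) (w ∘ Sum.inl ∘ Sum.inr) (w (Sum.inr ())) = w := by
  funext i
  rcases i with (_ | _) | _ <;> rfl

theorem IsRegularMap.conePoint {Φ : (μ → X) → ι → X} {Ψ : (μ → X) → κ → X} {f : (μ → X) → X}
    (hΦ : IsRegularMap Φ) (hΨ : IsRegularMap Ψ) (hf : IsRegular f) :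
    IsRegularMap fun v => conePoint (Φ v) (Ψ v) (f v) :=
  (hΦ.sumElim hΨ).sumElim fun _ => hf

theorem isRegularMap_conePoint_const (s : X) : IsRegularMap fun a : ι ⊕ κ → X =>
    conePoint (a ∘ Sum.inl) (a ∘ Sum.inr) s :=
  (isRegularMap_reindex _).conePoint (isRegularMap_reindex _) (isRegular_const s)

theorem comp_inl_conePoint {X : Type*} (a : ι ⊕ κ → X) (s : X) :
    conePoint (a ∘ Sum.inl) (a ∘ Sum.inr) s ∘ Sum.inl = a :=
  Sum.elim_comp_inl_inr a

section Smul

variable [RefinesZariski K]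

theorem IsRegularMap.smul {Φ : (μ → K) → κ → K} {f : (μ → K) → K} (hf : IsRegular f)
    (hΦ : IsRegularMap Φ) : IsRegularMap fun v => f v • Φ v :=
  fun k => hf.mul (hΦ k)

theorem isRegularMap_coneMap : IsRegularMap fun w : (ι ⊕ κ) ⊕ Unit → K =>
    conePoint (w ∘ Sum.inl ∘ Sum.inl) (w (Sum.inr ()) • w ∘ Sum.inl ∘ Sum.inr) (w (Sum.inr ())) :=
  (isRegularMap_reindex _).conePoint (.smul (isRegular_coord _) (isRegularMap_reindex _))
    (isRegular_coord _)

end Smul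

section Cone

variable [Finite ι] [Finite κ]

/-- The relative cone over a subset of `K^ι × K^κ`: the closure of the set of all points
`(e, s • v, s)` with `(e, v) ∈ A`. -/
def cone (A : Set (ι ⊕ κ → K)) : Set ((ι ⊕ κ) ⊕ Unit → K) :=
  closure ((fun w => conePoint (w ∘ Sum.inl ∘ Sum.inl)
    (w (Sum.inr ()) • w ∘ Sum.inl ∘ Sum.inr) (w (Sum.inr ()))) '' prod A Set.univ)

theorem isClosed_cone (A : Set (ι ⊕ κ → K)) : IsClosed (cone A) :=
  isClosed_closure

theorem conePoint_mem_cone {A : Set (ι ⊕ κ → K)} {a : ι ⊕ κ → K} (ha : a ∈ A) (s : K) :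
    conePoint (a ∘ Sum.inl) (s • a ∘ Sum.inr) s ∈ cone A :=
  subset_closure ⟨Sum.elim a fun _ => s, ⟨ha, trivial⟩, rfl⟩

theorem cone_subset {A : Set (ι ⊕ κ → K)} {D : Set ((ι ⊕ κ) ⊕ Unit → K)} (hD : IsClosed D)
    (h : ∀ a ∈ A, ∀ s : K, conePoint (a ∘ Sum.inl) (s • a ∘ Sum.inr) s ∈ D) : cone A ⊆ D := by
  refine closure_minimal ?_ hD
  rintro _ ⟨w, hw, rfl⟩
  exact h _ hw.1 _

theorem comp_inl_mem_closure_of_mem_cone {A : Set (ι ⊕ κ → K)} {w : (ι ⊕ κ) ⊕ Unit → K}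
    (hw : w ∈ cone A) : w ∘ Sum.inl ∘ Sum.inl ∈ closure ((fun a => a ∘ Sum.inl) '' A) :=
  cone_subset (isClosed_closure.preimage (continuous_reindex (Sum.inl ∘ Sum.inl)))
    (fun _ ha _ => subset_closure (Set.mem_image_of_mem _ ha)) hw

theorem conePoint_zero_mem_cone {A : Set (ι ⊕ κ → K)} {e : ι → K}
    (he : e ∈ closure ((fun a => a ∘ Sum.inl) '' A)) : conePoint e 0 0 ∈ cone A := by
  have hreg : IsRegularMap fun e : ι → K => (conePoint e 0 0 : (ι ⊕ κ) ⊕ Unit → K) :=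
    isRegularMap_id.conePoint (isRegularMap_const 0) (isRegular_const 0)
  refine closure_minimal ?_ ((isClosed_cone A).preimage hreg.continuous) he
  rintro _ ⟨a, ha, rfl⟩
  simpa using conePoint_mem_cone ha 0

variable [RefinesZariski K]

theorem conePoint_smul_mem_cone {A : Set (ι ⊕ κ → K)} {e : ι → K} {v : κ → K} {s : K} (c : K)
    (h : conePoint e v s ∈ cone A) : conePoint e (c • v) (c * s) ∈ cone A := by
  have hreg : IsRegularMap fun w : (ι ⊕ κ) ⊕ Unit → K =>
      conePoint (w ∘ Sum.inl ∘ Sum.inl) (c • w ∘ Sum.inl ∘ Sum.inr) (c * w (Sum.inr ())) :=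
    (isRegularMap_reindex _).conePoint (.smul (isRegular_const c) (isRegularMap_reindex _))
      ((isRegular_const c).mul (isRegular_coord _))
  refine cone_subset ((isClosed_cone A).preimage hreg.continuous) (fun a ha s => ?_) h
  change conePoint (a ∘ Sum.inl) (c • s • a ∘ Sum.inr) (c * s) ∈ cone A
  exact mul_smul c s (a ∘ Sum.inr) ▸ conePoint_mem_cone ha (c * s)

theorem IsIrredClosed.cone {A : Set (ι ⊕ κ → K)} (hA : IsIrredClosed A) :
    IsIrredClosed (cone A) :=
  (hA.prod isIrredClosed_univ).closure_image isRegularMap_coneMap.continuous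

theorem IsIrredClosed.dim_cone {A : Set (ι ⊕ κ → K)} (hA : IsIrredClosed A) :
    dim (ZariskiGeometry.cone A) = dim A + 1 := by
  apply le_antisymm
  · rw [← dim_univ_unit (X := K), ← hA.dim_prod isIrredClosed_univ]
    exact (hA.prod isIrredClosed_univ).dim_closure_image_le isRegularMap_coneMap
  · let Φ : (ι ⊕ κ → K) → (ι ⊕ κ) ⊕ Unit → K := fun a => conePoint (a ∘ Sum.inl) (a ∘ Sum.inr) 1
    have hΦA : IsIrredClosed (Φ '' A) := hA.image_of_leftInverse (isRegularMap_conePoint_const 1)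
      (isRegularMap_reindex Sum.inl) (comp_inl_conePoint · 1)
    have hle : dim A ≤ dim (Φ '' A) := hA.dim_le_of_leftInvOn hΦA (isRegularMap_conePoint_const 1)
      (isRegularMap_reindex Sum.inl) (fun a _ => comp_inl_conePoint a 1)
      (Set.mapsTo_image Φ A)
    refine hle.trans_lt (hΦA.dim_strictMono hA.cone ⟨?_, fun h => ?_⟩)
    · rintro _ ⟨a, ha, rfl⟩
      simpa using conePoint_mem_cone ha 1
    · obtain ⟨a, ha⟩ := hA.nonempty
      obtain ⟨b, -, hb⟩ := h (conePoint_mem_cone ha 0)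
      exact one_ne_zero (congrFun hb (Sum.inr ()))

theorem IsIrredClosed.subset_of_cone_eq {A B : Set (ι ⊕ κ → K)} (hB : IsIrredClosed B)
    (hA : IsIrredClosed A) (h : ZariskiGeometry.cone B = ZariskiGeometry.cone A) : B ⊆ A := by
  have hprod := hB.prod (isIrredClosed_univ (X := K) (ι := Unit))
  obtain ⟨F, hF, hAF, hdiff⟩ := (isRegularMap_coneMap (K := K)).exists_closure_image_diff_subset
    (hA.prod isIrredClosed_univ).isClosed (hA.prod isIrredClosed_univ).nonempty
  have hpre := hF.preimage (isRegularMap_coneMap (K := K) (ι := ι) (κ := κ)).continuous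
  have hzero : IsClosed {w : (ι ⊕ κ) ⊕ Unit → K | w (Sum.inr ()) = 0} :=
    (isRegular_coord _).isClosed_eq (isRegular_const 0)
  suffices ZariskiGeometry.prod B Set.univ ⊆ ZariskiGeometry.prod A (Set.univ : Set (Unit → K)) from
    fun b hb => (this (a := Sum.elim b 0) ⟨hb, trivial⟩).1
  refine hprod.subset_of_diff_subset (hA.prod isIrredClosed_univ).isClosed (hpre.union hzero) ?_ ?_
  · intro hsub
    rcases hprod.subset_or_subset hpre hzero hsub with hsub | hsub
    · exact hAF (h.symm.subset.trans (closure_minimal (Set.image_subset_iff.2 hsub) hF))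
    · obtain ⟨b, hb⟩ := hB.nonempty
      exact one_ne_zero (hsub (a := Sum.elim b fun _ => (1 : K)) ⟨hb, trivial⟩)
  · rintro w ⟨hw, hwn⟩
    obtain ⟨w', hw', heq⟩ := hdiff
      ⟨h.subset (subset_closure ⟨w, hw, rfl⟩), fun hwF => hwn (.inl hwF)⟩
    have hs : w' (Sum.inr ()) = w (Sum.inr ()) := congrFun heq (Sum.inr ())
    suffices w' = w from this ▸ hw'
    funext i
    rcases i with (i | k) | _
    · exact congrFun heq (Sum.inl (Sum.inl i))
    · have hk : w' (Sum.inr ()) * w' (Sum.inl (Sum.inr k)) =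
          w (Sum.inr ()) * w (Sum.inl (Sum.inr k)) := congrFun heq (Sum.inl (Sum.inr k))
      exact mul_left_cancel₀ (fun h0 => hwn (.inr h0)) (hs ▸ hk)
    · exact hs

theorem IsIrredClosed.elim_mem_of_conePoint_one_mem_cone {A : Set (ι ⊕ κ → K)}
    (hA : IsIrredClosed A) {e : ι → K} {v : κ → K}
    (h : conePoint e v 1 ∈ ZariskiGeometry.cone A) : Sum.elim e v ∈ A := by
  obtain ⟨T, hT, hmem, hTA, hTeq, hTdim⟩ := hA.cone.exists_subset_eqOn h
    (isRegular_coord (Sum.inr ())) (isRegular_const 1) rfl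
  let Φ : (ι ⊕ κ → K) → (ι ⊕ κ) ⊕ Unit → K := fun a => conePoint (a ∘ Sum.inl) (a ∘ Sum.inr) 1
  have hΦ {w} (hw : w ∈ T) : Φ (w ∘ Sum.inl) = w := by
    have h1 : w (Sum.inr ()) = 1 := hTeq hw
    rw [← conePoint_eta w, h1]
    rfl
  have hslice : IsIrredClosed (Φ ⁻¹' T) := hT.preimage_of_leftInverse
    (isRegularMap_conePoint_const 1) (isRegularMap_reindex Sum.inl) (comp_inl_conePoint · 1)
    fun w hw => ⟨_, hΦ hw⟩
  have hdim : dim T ≤ dim (Φ ⁻¹' T) := hT.dim_le_of_leftInvOn hslice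
    (isRegularMap_reindex Sum.inl) (isRegularMap_conePoint_const 1) (fun w hw => hΦ hw)
    fun w hw => (hΦ hw).symm ▸ hw
  refine hslice.subset_of_cone_eq hA (hslice.cone.eq_of_subset_of_dim_le hA.cone ?_ ?_) hmem
  · exact cone_subset (isClosed_cone A) fun a ha s => by
      simpa using conePoint_smul_mem_cone s (hTA ha)
  · rw [hslice.dim_cone]
    omega

-- Cut the cone at the vertex over `e` by the coordinate `i`: the cut has positive dimension and
-- lies over the single point `e`, so it contains a point other than the vertex.
theorem IsIrredClosed.exists_elim_mem_or_conePoint_zero_mem_cone {A : Set (ι ⊕ κ → K)}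
    (hA : IsIrredClosed A) (hdim : 1 ≤ dim A) (i : ι) {e : ι → K}
    (he : e ∈ closure ((fun a => a ∘ Sum.inl) '' A))
    (hfin : {x ∈ closure ((fun a => a ∘ Sum.inl) '' A) | x i = e i}.Finite) :
    (∃ v, Sum.elim e v ∈ A) ∨
      ∃ v k, v k = 1 ∧ conePoint e v 0 ∈ ZariskiGeometry.cone A := by
  obtain ⟨T, hT, hmem, hTA, hTeq, hTdim⟩ := hA.cone.exists_subset_eqOn
    (conePoint_zero_mem_cone he) (isRegular_coord (Sum.inl (Sum.inl i))) (isRegular_const (e i)) rfl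
  have hbase : (fun w => w ∘ Sum.inl ∘ Sum.inl) '' T ⊆
      {x ∈ closure ((fun a => a ∘ Sum.inl) '' A) | x i = e i} := by
    rintro _ ⟨w, hw, rfl⟩
    exact ⟨comp_inl_mem_closure_of_mem_cone (hTA hw), hTeq hw⟩
  have hsingleton :=
    (hT.closure_image (continuous_reindex (Sum.inl ∘ Sum.inl))).eq_singleton_of_finite
      (hfin.subset (closure_minimal hbase hfin.isClosed)) (subset_closure ⟨_, hmem, rfl⟩)
  rw [hA.dim_cone] at hTdim
  obtain ⟨w, hw, hne⟩ := (hT.infinite (by omega)).exists_notMem_finite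
    (Set.finite_singleton (conePoint e 0 0))
  have hwe : w ∘ Sum.inl ∘ Sum.inl = e :=
    hsingleton.subset (subset_closure (Set.mem_image_of_mem (fun w => w ∘ Sum.inl ∘ Sum.inl) hw))
  rw [← conePoint_eta w, hwe] at hw hne
  set v := w ∘ Sum.inl ∘ Sum.inr
  set s := w (Sum.inr ())
  by_cases hs : s = 0
  · rw [hs] at hw hne
    obtain ⟨k, hk⟩ := Function.ne_iff.1 fun hv : v = 0 => hne (hv ▸ rfl)
    exact .inr ⟨(v k)⁻¹ • v, k, inv_mul_cancel₀ hk, by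
      simpa using conePoint_smul_mem_cone (v k)⁻¹ (hTA hw)⟩
  · refine .inl ⟨s⁻¹ • v, hA.elim_mem_of_conePoint_one_mem_cone ?_⟩
    simpa [hs] using conePoint_smul_mem_cone s⁻¹ (hTA hw)

end Cone

theorem IsIrredClosed.dim_le_one_of_finite [Finite ι] {A : Set (ι → X)} (hA : IsIrredClosed A)
    {a : ι → X} (ha : a ∈ A) {f : (ι → X) → X} (hf : IsRegular f)
    (hfin : {v ∈ A | f v = f a}.Finite) : dim A ≤ 1 := by
  obtain ⟨T, hT, -, hTA, hTeq, hTdim⟩ := hA.exists_subset_eqOn ha hf (isRegular_const (f a)) rfl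
  by_contra hdim
  exact hT.infinite (by omega) (hfin.subset fun v hv => ⟨hTA hv, hTeq hv⟩)

/-! ### Functions without zeros and poles -/

theorem vec2_eta {X : Type*} (v : Fin 2 → X) : ![v 0, v 1] = v :=
  FinVec.etaExpand_eq v

section Pole

variable [RefinesZariski K]

theorem IsIrredClosed.finite_setOf_conePoint_zero_mem_cone {A : Set (Unit ⊕ Unit → K)}
    (hA : IsIrredClosed A) (hdim : dim A ≤ 1) :
    {z | conePoint (fun _ => z) (fun _ => 1) 0 ∈ ZariskiGeometry.cone A}.Finite := by
  have hreg : IsRegularMap fun v : Unit → K =>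
      (conePoint (fun _ => v ()) (fun _ => 1) 0 : (Unit ⊕ Unit) ⊕ Unit → K) :=
    isRegularMap_id.conePoint (isRegularMap_const _) (isRegular_const 0)
  refine (setOf_apply_mem_eq_univ_or_finite hA.cone.isClosed hreg).resolve_left fun h => ?_
  have hplane : (fun u : Unit ⊕ Unit → K => conePoint (u ∘ Sum.inl) (u ∘ Sum.inr) 0) '' Set.univ =
      ZariskiGeometry.cone A := by
    refine isIrredClosed_univ.image_eq_of_dim_le hA.cone (isRegularMap_conePoint_const 0)
      (isRegularMap_reindex Sum.inl) (comp_inl_conePoint · 0) ?_ ?_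
    · rintro _ ⟨u, -, rfl⟩
      have hu := conePoint_smul_mem_cone (u (Sum.inr ()))
        (Set.eq_univ_iff_forall.1 h (u (Sum.inl ())))
      convert! hu using 1
      funext i
      rcases i with (_ | _) | _ <;> simp [conePoint]
    · rw [hA.dim_cone, dim_univ, Nat.card_sum, Nat.card_unique]
      omega
  obtain ⟨a, ha⟩ := hA.nonempty
  obtain ⟨u, -, hu⟩ := hplane.symm.subset (conePoint_mem_cone ha 1)
  exact zero_ne_one (congrFun hu (Sum.inr ()))

theorem IsIrredClosed.conePoint_zero_one_zero_mem_cone {A : Set (Unit ⊕ Unit → K)}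
    (hA : IsIrredClosed A) (hnontriv : ((fun a => a (Sum.inl ())) '' A).Nontrivial)
    (hzero : ∀ a ∈ A, a (Sum.inl ()) ≠ 0) :
    conePoint (fun _ => 0) (fun _ => 1) 0 ∈ ZariskiGeometry.cone A := by
  have hproj := hA.closure_image (continuous_reindex Sum.inl)
  have hdense : closure ((fun a => a ∘ Sum.inl) '' A) = Set.univ := by
    refine hproj.eq_univ_of_card_le_dim ?_
    rw [Nat.card_unique]
    obtain ⟨_, ⟨a, ha, rfl⟩, _, ⟨b, hb, rfl⟩, hab⟩ := hnontriv
    exact hproj.one_le_dim ⟨_, subset_closure ⟨a, ha, rfl⟩, _, subset_closure ⟨b, hb, rfl⟩,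
      fun h => hab (congrFun h ())⟩
  obtain ⟨v, hv⟩ | ⟨v, k, hk, hv⟩ := hA.exists_elim_mem_or_conePoint_zero_mem_cone
    (hA.one_le_dim (Set.nontrivial_of_image _ _ hnontriv)) () (e := fun _ => 0) (hdense ▸ trivial)
    ((Set.finite_singleton 0).subset fun e he => funext fun _ => he.2)
  · exact (hzero _ hv rfl).elim
  · rwa [show v = fun _ => 1 from funext fun _ => hk] at hv

-- `T` is the part of the cone over `A` near infinity: the cone is cut where the homogenized second
-- coordinate is `1`, which turns the homogenizing coordinate into its inverse.
theorem IsIrredClosed.exists_pole_of_unit_sum_unit {A : Set (Unit ⊕ Unit → K)}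
    (hA : IsIrredClosed A) (hdim : dim A ≤ 1)
    (hnontriv : ((fun a => a (Sum.inl ())) '' A).Nontrivial)
    (hzero : ∀ a ∈ A, a (Sum.inl ()) ≠ 0) :
    ∃ T : Set (Fin 2 → K), IsIrredClosed T ∧ 1 ≤ dim T ∧ 0 ∈ T ∧ {v ∈ T | v 1 = 0}.Finite ∧
      ∀ v ∈ T, v 1 ≠ 0 → Sum.elim (fun _ => v 0) (fun _ => (v 1)⁻¹) ∈ A := by
  obtain ⟨T, hT, hmem, hTA, hTeq, hTdim⟩ := hA.cone.exists_subset_eqOn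
    (hA.conePoint_zero_one_zero_mem_cone hnontriv hzero)
    (isRegular_coord (Sum.inl (Sum.inr ()))) (isRegular_const 1) rfl
  let Φ : (Fin 2 → K) → (Unit ⊕ Unit) ⊕ Unit → K :=
    fun v => conePoint (fun _ => v 0) (fun _ => 1) (v 1)
  have hΦ : IsRegularMap Φ := IsRegularMap.conePoint (isRegularMap_reindex fun _ => 0)
    (isRegularMap_const _) (isRegular_coord 1)
  let ψ : Fin 2 → (Unit ⊕ Unit) ⊕ Unit := ![Sum.inl (Sum.inl ()), Sum.inr ()]
  have hψΦ (v : Fin 2 → K) : Φ v ∘ ψ = v := funext fun i => by fin_cases i <;> rfl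
  have hΦψ {w} (hw : w ∈ T) : Φ (w ∘ ψ) = w := by
    funext i
    rcases i with (_ | _) | _
    · rfl
    · exact (hTeq hw).symm
    · rfl
  have hslice : IsIrredClosed (Φ ⁻¹' T) := hT.preimage_of_leftInverse hΦ (isRegularMap_reindex ψ)
    hψΦ fun w hw => ⟨_, hΦψ hw⟩
  have hle : dim T ≤ dim (Φ ⁻¹' T) := hT.dim_le_of_leftInvOn hslice (isRegularMap_reindex ψ) hΦ
    (fun w hw => hΦψ hw) fun w hw => (hΦψ hw).symm ▸ hw
  have hAdim : 1 ≤ dim A := hA.one_le_dim (Set.nontrivial_of_image _ _ hnontriv)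
  rw [hA.dim_cone] at hTdim
  refine ⟨Φ ⁻¹' T, hslice, by omega, hmem, ?_, fun v hv hv0 => ?_⟩
  · refine ((hA.finite_setOf_conePoint_zero_mem_cone hdim).image fun z => ![z, 0]).subset ?_
    rintro v ⟨hv, hv0⟩
    exact ⟨v 0, hv0 ▸ hTA hv, hv0 ▸ vec2_eta v⟩
  · apply hA.elim_mem_of_conePoint_one_mem_cone
    convert! conePoint_smul_mem_cone (v 1)⁻¹ (hTA hv) using 1
    funext i
    rcases i with (_ | _) | _ <;> simp [conePoint, hv0]

theorem IsIrredClosed.exists_pole {H : Set (Fin 2 → K)} (hH : IsIrredClosed H) (hdim : dim H ≤ 1)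
    (hnontriv : ((fun v => v 1) '' H).Nontrivial) (hzero : ∀ v ∈ H, v 1 ≠ 0) :
    ∃ T : Set (Fin 2 → K), IsIrredClosed T ∧ 1 ≤ dim T ∧ 0 ∈ T ∧ {v ∈ T | v 1 = 0}.Finite ∧
      ∀ v ∈ T, v 1 ≠ 0 → ![(v 1)⁻¹, v 0] ∈ H := by
  let swap : Fin 2 → Unit ⊕ Unit := ![Sum.inr (), Sum.inl ()]
  let unswap : Unit ⊕ Unit → Fin 2 := Sum.elim (fun _ => 1) fun _ => 0
  have hinv : Function.LeftInverse (fun v : Fin 2 → K => v ∘ unswap) fun w => w ∘ swap :=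
    fun w => funext fun i => by rcases i with _ | _ <;> rfl
  have hinv' (v : Fin 2 → K) : (v ∘ unswap) ∘ swap = v := funext fun i => by fin_cases i <;> rfl
  let A : Set (Unit ⊕ Unit → K) := (fun w => w ∘ swap) ⁻¹' H
  have hA : IsIrredClosed A := hH.preimage_of_leftInverse (isRegularMap_reindex _)
    (isRegularMap_reindex _) hinv fun v _ => ⟨_, hinv' v⟩
  have hAdim : dim A ≤ 1 := (hA.dim_le_of_leftInvOn hH (isRegularMap_reindex _)
    (isRegularMap_reindex _) (hinv.leftInvOn _) fun _ hw => hw).trans hdim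
  have hAnontriv : ((fun a => a (Sum.inl ())) '' A).Nontrivial := by
    refine hnontriv.mono ?_
    rintro _ ⟨v, hv, rfl⟩
    exact ⟨v ∘ unswap, by rwa [Set.mem_preimage, hinv'], rfl⟩
  obtain ⟨T, hT, hTdim, hmem, hfin, hTA⟩ :=
    hA.exists_pole_of_unit_sum_unit hAdim hAnontriv fun a ha => hzero _ ha
  refine ⟨T, hT, hTdim, hmem, hfin, fun v hv hv0 => ?_⟩
  convert! Set.mem_preimage.1 (hTA v hv hv0) using 1
  funext i
  fin_cases i <;> rfl

theorem IsIrredClosed.exists_subset_prod_eqOn_one {T T' : Set (Fin 2 → X)} (hT : IsIrredClosed T)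
    (hT' : IsIrredClosed T') (hdim : 1 ≤ dim T) (hdim' : 1 ≤ dim T') {t t' : Fin 2 → X}
    (ht : t ∈ T) (ht' : t' ∈ T') (htt' : t 1 = t' 1) (hfin : {v ∈ T | v 1 = t 1}.Finite)
    (hfin' : {v ∈ T' | v 1 = t 1}.Finite) :
    ∃ R ⊆ ZariskiGeometry.prod T T', IsIrredClosed R ∧ Sum.elim t t' ∈ R ∧
      (∀ w ∈ R, w (Sum.inl 1) = w (Sum.inr 1)) ∧
      ((fun w => w (Sum.inl 1)) '' R).Nontrivial := by
  obtain ⟨R, hR, hmem, hRT, hReq, hRdim⟩ := (hT.prod hT').exists_subset_eqOn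
    (a := Sum.elim t t') ⟨ht, ht'⟩ (isRegular_coord (Sum.inl 1)) (isRegular_coord (Sum.inr 1)) htt'
  refine ⟨R, hRT, hR, hmem, hReq, Set.not_subsingleton_iff.1 fun hsub => ?_⟩
  rw [hT.dim_prod hT'] at hRdim
  refine hR.infinite (by omega) (((hfin.prod hfin').image fun p => Sum.elim p.1 p.2).subset ?_)
  intro w hw
  have h1 : w (Sum.inl 1) = t 1 := hsub ⟨w, hw, rfl⟩ ⟨_, hmem, rfl⟩
  exact ⟨(w ∘ Sum.inl, w ∘ Sum.inr), ⟨⟨(hRT hw).1, h1⟩, (hRT hw).2, (hReq hw).symm.trans h1⟩,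
    Sum.elim_comp_inl_inr w⟩

-- Both `n` and `n⁻¹` would take the value `0` at infinity.
theorem exists_eq_const_of_no_zeros_no_poles {H H' : Set (Fin 2 → K)} (hH : IsIrredClosed H)
    (hH' : IsIrredClosed H') (hdim : dim H ≤ 1) (hdim' : dim H' ≤ 1) {F : Set K} (hF : F.Finite)
    {n : K → K} (hn : ∀ x ∉ F, ∀ z, ![x, z] ∈ H ↔ z = n x)
    (hn' : ∀ x ∉ F, ∀ z, ![x, z] ∈ H' ↔ z = (n x)⁻¹) (hzero : ∀ v ∈ H, v 1 ≠ 0)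
    (hzero' : ∀ v ∈ H', v 1 ≠ 0) : ∃ c, ∀ x ∉ F, n x = c := by
  have := infinite_of_nontrivial (X := K)
  by_contra! hconst
  obtain ⟨a, ha⟩ := hF.infinite_compl.nonempty
  obtain ⟨b, hb, hab⟩ := hconst (n a)
  obtain ⟨T, hT, hTdim, hT0, hTfin, hTH⟩ := hH.exists_pole hdim ⟨_, ⟨_, (hn a ha _).2 rfl, rfl⟩,
    _, ⟨_, (hn b hb _).2 rfl, rfl⟩, hab.symm⟩ hzero
  obtain ⟨T', hT', hTdim', hT0', hTfin', hTH'⟩ := hH'.exists_pole hdim' ⟨_,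
    ⟨_, (hn' a ha _).2 rfl, rfl⟩, _, ⟨_, (hn' b hb _).2 rfl, rfl⟩,
    fun h => hab (inv_injective h).symm⟩ hzero'
  obtain ⟨R, hRT, hR, hR0, hReq, hRnontriv⟩ :=
    hT.exists_subset_prod_eqOn_one hT' hTdim hTdim' hT0 hT0' rfl hTfin hTfin'
  have hsub : R ⊆ {w | w (Sum.inl 0) * w (Sum.inr 0) = 1} := by
    refine hR.subset_of_finite_exceptions (isRegular_coord (Sum.inl 1)) hRnontriv
      ((hF.image fun x => x⁻¹).insert 0)
      (((isRegular_coord _).mul (isRegular_coord _)).isClosed_eq (isRegular_const 1)) ?_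
    intro w hw hwF
    have hω : w (Sum.inl 1) ≠ 0 := fun h => hwF (.inl h)
    have hx : (w (Sum.inl 1))⁻¹ ∉ F := fun h => hwF (.inr ⟨_, h, inv_inv _⟩)
    have hz : w (Sum.inl 0) = n (w (Sum.inl 1))⁻¹ := (hn _ hx _).1 (hTH _ (hRT hw).1 hω)
    have hz' : w (Sum.inr 0) = (n (w (Sum.inl 1))⁻¹)⁻¹ := by
      refine (hn' _ hx _).1 ?_
      rw [hReq w hw] at hω ⊢
      exact hTH' _ (hRT hw).2 hω
    have hne : n (w (Sum.inl 1))⁻¹ ≠ 0 := hzero _ ((hn _ hx _).2 rfl)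
    change w (Sum.inl 0) * w (Sum.inr 0) = 1
    rw [hz, hz', mul_inv_cancel₀ hne]
  simpa using hsub hR0

end Pole

/-! ### Asymptotic and tangent cones -/

section ConeMaps

variable [RefinesZariski K]

theorem isRegularMap_projectiveClosureMap : IsRegularMap fun w : ι ⊕ Unit → K =>
    Sum.elim (w (Sum.inr ()) • w ∘ Sum.inl) (w ∘ Sum.inr) :=
  (IsRegularMap.smul (isRegular_coord _) (isRegularMap_reindex _)).sumElim (isRegularMap_reindex _)

theorem isRegularMap_secantConeMap : IsRegularMap fun w : (ι ⊕ ι) ⊕ Unit → K =>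
    Sum.elim (w ∘ Sum.inl)
      (w (Sum.inr ()) • (w ∘ Sum.inl ∘ Sum.inr - w ∘ Sum.inl ∘ Sum.inl)) :=
  (isRegularMap_reindex _).sumElim
    (.smul (isRegular_coord _) fun _ => (isRegular_coord _).sub (isRegular_coord _))

end ConeMaps

/-- The projective closure of `C`, as the closure in `K^ι × K` of the points `(s • p, s)` with
`p ∈ C`. -/
def projectiveClosure [Finite ι] (C : Set (ι → K)) : Set (ι ⊕ Unit → K) :=
  closure ((fun w => Sum.elim (w (Sum.inr ()) • w ∘ Sum.inl) (w ∘ Sum.inr)) '' prod C Set.univ)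

/-- The directions in which `C` goes to infinity: the part of its projective closure on the
hyperplane at infinity. -/
def asymptoticCone [Finite ι] (C : Set (ι → K)) : Set (ι → K) :=
  {w | Sum.elim w 0 ∈ projectiveClosure C}

/-- The closure of the set of all `(p, q, s • (q - p))` with `p, q ∈ C`. -/
def secantCone [Finite ι] (C : Set (ι → K)) : Set ((ι ⊕ ι) ⊕ ι → K) :=
  closure ((fun w : (ι ⊕ ι) ⊕ Unit → K => Sum.elim (w ∘ Sum.inl)
    (w (Sum.inr ()) • (w ∘ Sum.inl ∘ Sum.inr - w ∘ Sum.inl ∘ Sum.inl))) ''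
      prod (prod C C) Set.univ)

/-- The limit directions of secants of `C` both of whose end points tend to `q`. -/
def tangentCone [Finite ι] (C : Set (ι → K)) (q : ι → K) : Set (ι → K) :=
  {w | Sum.elim (Sum.elim q q) w ∈ secantCone C}

section Cones

variable [Finite ι] {C : Set (ι → K)}

theorem isClosed_projectiveClosure : IsClosed (projectiveClosure C) :=
  isClosed_closure

theorem smul_mem_projectiveClosure {p : ι → K} (hp : p ∈ C) (s : K) :
    Sum.elim (s • p) (fun _ => s) ∈ projectiveClosure C :=
  subset_closure ⟨Sum.elim p fun _ => s, ⟨hp, trivial⟩, rfl⟩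

theorem projectiveClosure_subset {D : Set (ι ⊕ Unit → K)} (hD : IsClosed D)
    (h : ∀ p ∈ C, ∀ s : K, Sum.elim (s • p) (fun _ => s) ∈ D) : projectiveClosure C ⊆ D := by
  refine closure_minimal ?_ hD
  rintro _ ⟨w, ⟨hw, -⟩, rfl⟩
  exact h _ hw _

theorem isClosed_asymptoticCone : IsClosed (asymptoticCone C) :=
  isClosed_projectiveClosure.preimage (isRegularMap_sumElim_left 0).continuous

theorem zero_mem_asymptoticCone (hC : C.Nonempty) : 0 ∈ asymptoticCone C := by
  obtain ⟨p, hp⟩ := hC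
  convert! smul_mem_projectiveClosure hp 0 using 1
  rw [zero_smul]
  rfl

theorem smul_mem_secantCone {p q : ι → K} (hp : p ∈ C) (hq : q ∈ C) (s : K) :
    Sum.elim (Sum.elim p q) (s • (q - p)) ∈ secantCone C :=
  subset_closure ⟨Sum.elim (Sum.elim p q) fun _ => s, ⟨⟨hp, hq⟩, trivial⟩, rfl⟩

theorem secantCone_subset {D : Set ((ι ⊕ ι) ⊕ ι → K)} (hD : IsClosed D)
    (h : ∀ p ∈ C, ∀ q ∈ C, ∀ s : K, Sum.elim (Sum.elim p q) (s • (q - p)) ∈ D) :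
    secantCone C ⊆ D := by
  refine closure_minimal ?_ hD
  rintro _ ⟨w, ⟨⟨hp, hq⟩, -⟩, rfl⟩
  have hmem := h _ hp _ hq (w (Sum.inr ()))
  rwa [Sum.elim_comp_inl_inr] at hmem

theorem isClosed_secantCone : IsClosed (secantCone C) :=
  isClosed_closure

theorem isClosed_tangentCone (q : ι → K) : IsClosed (tangentCone C q) :=
  isClosed_secantCone.preimage (isRegularMap_sumElim_right _).continuous

theorem isClosed_setOf_mem_tangentCone (w : ι → K) : IsClosed {q | w ∈ tangentCone C q} :=
  isClosed_secantCone.preimage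
    ((isRegularMap_id.sumElim isRegularMap_id).sumElim (isRegularMap_const w)).continuous

theorem IsIrredClosed.mem_tangentCone [Finite μ] {D : Set (μ → K)} (hD : IsIrredClosed D)
    {Φ Ψ Θ : (μ → K) → ι → K} (hΦ : IsRegularMap Φ) (hΨ : IsRegularMap Ψ) (hΘ : IsRegularMap Θ)
    (hΦC : ∀ w ∈ D, Φ w ∈ C) (hΨC : ∀ w ∈ D, Ψ w ∈ C) (hne : ¬Set.EqOn Φ Ψ D)
    (hΘsecant : ∀ w ∈ D, Φ w ≠ Ψ w → ∃ s : K, Θ w = s • (Ψ w - Φ w)) {w : μ → K} (hw : w ∈ D)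
    (hΦΨ : Φ w = Ψ w) : Θ w ∈ tangentCone C (Φ w) := by
  have hsub : D ⊆ {w | Sum.elim (Sum.elim (Φ w) (Ψ w)) (Θ w) ∈ secantCone C} := by
    refine hD.subset_of_diff_subset
      (isClosed_secantCone.preimage ((hΦ.sumElim hΨ).sumElim hΘ).continuous)
      (hΦ.isClosed_eq hΨ) (fun h => hne fun w hw => h hw) ?_
    rintro w ⟨hw, hwne⟩
    obtain ⟨s, hs⟩ := hΘsecant w hw hwne
    rw [Set.mem_ofPred_eq, hs]
    exact smul_mem_secantCone (hΦC w hw) (hΨC w hw) s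
  have h := hsub hw
  rwa [Set.mem_ofPred_eq, ← hΦΨ] at h

variable [RefinesZariski K]

theorem IsIrredClosed.exists_notMem_asymptoticCone (hC : IsIrredClosed C)
    (hdim : dim C < Nat.card ι) : ∃ w, w ∉ asymptoticCone C := by
  by_contra! hall
  have hprod := hC.prod (isIrredClosed_univ (X := K) (ι := Unit))
  have hclosure : IsIrredClosed (projectiveClosure C) :=
    hprod.closure_image isRegularMap_projectiveClosureMap.continuous
  have hle : dim (projectiveClosure C) ≤ dim C + 1 := by
    rw [← dim_univ_unit (X := K), ← hC.dim_prod isIrredClosed_univ]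
    exact hprod.dim_closure_image_le isRegularMap_projectiveClosureMap
  have hinfinity : (fun w : ι → K => Sum.elim w 0) '' Set.univ = projectiveClosure C := by
    refine isIrredClosed_univ.image_eq_of_dim_le hclosure (isRegularMap_sumElim_left 0)
      (isRegularMap_reindex Sum.inl) (fun w => rfl) ?_ ?_
    · rintro _ ⟨w, -, rfl⟩
      exact hall w
    · rw [dim_univ]
      exact hle.trans hdim
  obtain ⟨p, hp⟩ := hC.nonempty
  obtain ⟨w, -, hw⟩ := hinfinity.symm.subset (smul_mem_projectiveClosure hp 1)
  exact zero_ne_one (congrFun hw (Sum.inr ()))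

theorem IsIrredClosed.exists_notMem_tangentCone (hC : IsIrredClosed C) (hdim_pos : 1 ≤ dim C)
    (hdim : dim C < Nat.card ι) : ∃ q ∈ C, ∃ w, w ∉ tangentCone C q := by
  by_contra! hall
  have hprod := (hC.prod hC).prod (isIrredClosed_univ (X := K) (ι := Unit))
  have hsecant : IsIrredClosed (secantCone C) :=
    hprod.closure_image isRegularMap_secantConeMap.continuous
  have hle : dim (secantCone C) ≤ dim C + dim C + 1 := by
    rw [← dim_univ_unit (X := K), ← hC.dim_prod hC, ← (hC.prod hC).dim_prod isIrredClosed_univ]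
    exact hprod.dim_closure_image_le isRegularMap_secantConeMap
  have hdiag : (fun w : ι ⊕ ι → K => Sum.elim (Sum.elim (w ∘ Sum.inl) (w ∘ Sum.inl))
      (w ∘ Sum.inr)) '' ZariskiGeometry.prod C Set.univ = secantCone C := by
    refine (hC.prod isIrredClosed_univ).image_eq_of_dim_le hsecant
      (((isRegularMap_reindex _).sumElim (isRegularMap_reindex _)).sumElim (isRegularMap_reindex _))
      (isRegularMap_reindex (Sum.map Sum.inl id)) (fun w => ?_) ?_ ?_
    · funext i
      rcases i with _ | _ <;> rfl
    · rintro _ ⟨w, ⟨hw, -⟩, rfl⟩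
      exact hall _ hw _
    · rw [hC.dim_prod isIrredClosed_univ, dim_univ]
      omega
  obtain ⟨p, hp, q, hq, hpq⟩ := (hC.infinite hdim_pos).nontrivial
  obtain ⟨w, -, hw⟩ := hdiag.symm.subset (smul_mem_secantCone hp hq 0)
  exact hpq (funext fun i =>
    (congrFun hw (Sum.inl (Sum.inl i))).symm.trans (congrFun hw (Sum.inl (Sum.inr i))))

theorem smul_mem_tangentCone {q w : ι → K} (c : K) (hw : w ∈ tangentCone C q) :
    c • w ∈ tangentCone C q := by
  have hreg : IsRegularMap fun u : (ι ⊕ ι) ⊕ ι → K => Sum.elim (u ∘ Sum.inl) (c • u ∘ Sum.inr) :=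
    (isRegularMap_reindex _).sumElim (.smul (isRegular_const c) (isRegularMap_reindex _))
  refine secantCone_subset (isClosed_secantCone.preimage hreg.continuous) (fun p hp q hq s => ?_) hw
  have h := smul_mem_secantCone hp hq (c * s)
  rwa [mul_smul] at h

theorem smul_mem_tangentCone_iff {q w : ι → K} {c : K} (hc : c ≠ 0) :
    c • w ∈ tangentCone C q ↔ w ∈ tangentCone C q :=
  ⟨fun h => by simpa only [inv_smul_smul₀ hc] using smul_mem_tangentCone c⁻¹ h,
    smul_mem_tangentCone c⟩

theorem isRegularMap_linearMap (L : (ι → K) →ₗ[K] κ → K) : IsRegularMap L := by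
  classical
  have := Fintype.ofFinite ι
  intro k
  have h (v : ι → K) : MvPolynomial.eval v (L.toMatrix'.toMvPolynomial k) = L v k := by
    rw [Matrix.toMvPolynomial_eval_eq_apply, LinearMap.toMatrix'_mulVec]
  simpa only [h] using isRegular_eval (L.toMatrix'.toMvPolynomial k)

theorem map_mem_asymptoticCone [Finite κ] {C : Set (κ → K)} (L : (ι → K) →ₗ[K] κ → K) {w : ι → K}
    (hw : w ∈ asymptoticCone (L ⁻¹' C)) : L w ∈ asymptoticCone C := by
  have hreg : IsRegularMap fun u : ι ⊕ Unit → K => Sum.elim (L (u ∘ Sum.inl)) (u ∘ Sum.inr) :=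
    ((isRegularMap_linearMap L).comp (isRegularMap_reindex _)).sumElim (isRegularMap_reindex _)
  refine projectiveClosure_subset (isClosed_projectiveClosure.preimage hreg.continuous)
    (fun p hp s => ?_) hw
  have h := smul_mem_projectiveClosure (Set.mem_preimage.1 hp) s
  rwa [← L.map_smul] at h

theorem map_mem_tangentCone [Finite κ] {C : Set (κ → K)} (L : (ι → K) →ₗ[K] κ → K) {q w : ι → K}
    (hw : w ∈ tangentCone (L ⁻¹' C) q) : L w ∈ tangentCone C (L q) := by
  have hL {α : ι → (ι ⊕ ι) ⊕ ι} : IsRegularMap fun u : (ι ⊕ ι) ⊕ ι → K => L (u ∘ α) :=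
    (isRegularMap_linearMap L).comp (isRegularMap_reindex α)
  refine secantCone_subset (isClosed_secantCone.preimage
    ((hL (α := Sum.inl ∘ Sum.inl).sumElim (hL (α := Sum.inl ∘ Sum.inr))).sumElim
      (hL (α := Sum.inr))).continuous) (fun p hp q hq s => ?_) hw
  have h := smul_mem_secantCone (Set.mem_preimage.1 hp) (Set.mem_preimage.1 hq) s
  rwa [← map_sub, ← L.map_smul] at h

end Cones

/-! ### Enumerating the fibres of a curve -/

/-- The vertical fibre of a subset of the plane over `x`. -/
def fibre {X : Type*} (C : Set (Fin 2 → X)) (x : X) : Set X := {y | ![x, y] ∈ C}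

theorem mem_fibre_iff {X : Type*} {C : Set (Fin 2 → X)} {v : Fin 2 → X} :
    v 1 ∈ fibre C (v 0) ↔ v ∈ C := by
  rw [fibre, Set.mem_ofPred_eq, vec2_eta]

theorem infinite_setOf_exists_injective {X : Type*} {C : Set (Fin 2 → X)} {m : ℕ}
    (hfin : ∀ x, (fibre C x).Finite)
    (hm : {x | m ≤ (fibre C x).ncard}.Infinite) :
    ((fun v => v (Sum.inl ())) '' {v : Unit ⊕ Fin m → X |
      (∀ i, v (Sum.inr i) ∈ fibre C (v (Sum.inl ()))) ∧
        Function.Injective (v ∘ Sum.inr)}).Infinite := by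
  refine hm.mono fun x hx => ?_
  have := (hfin x).fintype
  obtain ⟨y⟩ := Function.Embedding.nonempty_of_card_le (α := Fin m) (β := fibre C x)
    (by rwa [Fintype.card_fin, ← Nat.card_eq_fintype_card, Nat.card_coe_set_eq])
  exact ⟨Sum.elim (fun _ => x) fun i => y i, ⟨fun i => (y i).2,
    Subtype.val_injective.comp y.injective⟩, rfl⟩

/-- `E` is an irreducible curve of tuples `(x, y₁, …, yₘ)` such that `y₁, …, yₘ` lie in the fibre
of `C` over `x` and, outside the finite set `F` of values of `x`, enumerate it without repetition.
-/
structure IsFibreEnumeration (C : Set (Fin 2 → X)) {m : ℕ} (E : Set (Unit ⊕ Fin m → X))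
    (F : Set X) : Prop where
  isIrredClosed : IsIrredClosed E
  dim_le_one : dim E ≤ 1
  finite : F.Finite
  mem_fibre : ∀ v ∈ E, ∀ i, v (Sum.inr i) ∈ fibre C (v (Sum.inl ()))
  exists_mem : ∀ x ∉ F, ∃ v ∈ E, v (Sum.inl ()) = x
  injective : ∀ v ∈ E, v (Sum.inl ()) ∉ F → Function.Injective (v ∘ Sum.inr)
  fibre_subset : ∀ v ∈ E, v (Sum.inl ()) ∉ F → fibre C (v (Sum.inl ())) ⊆ Set.range (v ∘ Sum.inr)

section Fibre

variable {C : Set (Fin 2 → X)} {m : ℕ}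

theorem isClosed_setOf_mem_fibre (hC : IsClosed C) :
    IsClosed {v : Unit ⊕ Fin m → X | ∀ i, v (Sum.inr i) ∈ fibre C (v (Sum.inl ()))} := by
  rw [Set.ofPred_forall]
  exact isClosed_iInter fun i =>
    hC.preimage ((isRegular_coord (Sum.inl ())).vec2 (isRegular_coord (Sum.inr i))).continuous

theorem IsIrredClosed.finite_setOf_not_injective {E : Set (Unit ⊕ Fin m → X)}
    (hE : IsIrredClosed E) (hdim : dim E ≤ 1) {v : Unit ⊕ Fin m → X} (hv : v ∈ E)
    (hinj : Function.Injective (v ∘ Sum.inr)) :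
    {u ∈ E | ¬Function.Injective (u ∘ Sum.inr)}.Finite := by
  have hcollision (i j : Fin m) (hij : i ≠ j) :
      (E ∩ {u | u (Sum.inr i) = u (Sum.inr j)}).Finite :=
    hE.finite_inter hdim (isClosed_diagonal _ _) fun h => hij (hinj (h hv))
  refine (Set.finite_iUnion fun i => Set.finite_iUnion fun j => Set.finite_iUnion
    (hcollision i j)).subset ?_
  rintro u ⟨hu, hninj⟩
  obtain ⟨i, j, heq, hij⟩ := Function.not_injective_iff.1 hninj
  exact Set.mem_iUnion.2 ⟨i, Set.mem_iUnion.2 ⟨j, Set.mem_iUnion.2 ⟨hij, hu, heq⟩⟩⟩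

theorem IsIrredClosed.nontrivial_image_of_finite_fibre (hC : IsIrredClosed C) (hdim : 1 ≤ dim C)
    (hfin : ∀ x, (fibre C x).Finite) : ((fun v => v 0) '' C).Nontrivial := by
  by_contra hconst
  obtain ⟨q, hq⟩ := hC.nonempty
  refine hC.infinite hdim (((hfin (q 0)).image fun y => ![q 0, y]).subset fun v hv => ?_)
  have hv₀ : v 0 = q 0 := Set.not_nontrivial_iff.1 hconst ⟨v, hv, rfl⟩ ⟨q, hq, rfl⟩
  have heta : ![q 0, v 1] = v := hv₀ ▸ vec2_eta v
  exact ⟨v 1, hv₀ ▸ mem_fibre_iff.2 hv, heta⟩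

variable [Nontrivial X]

theorem exists_generic_ncard_fibre (hC : IsClosed C) (hfin : ∀ x, (fibre C x).Finite) :
    ∃ m, {x | m < (fibre C x).ncard}.Finite ∧ {x | m ≤ (fibre C x).ncard}.Infinite := by
  classical
  have := infinite_of_nontrivial (X := X)
  obtain ⟨M, hM⟩ := exists_setOf_eq_univ_or_ncard_le hC
  have hle (x : X) : (fibre C x).ncard ≤ M :=
    ((hM x).resolve_left fun h => Set.infinite_univ (h.subst (hfin x))).2
  have hbound : ∃ m, {x | m < (fibre C x).ncard}.Finite :=
    ⟨M, Set.finite_empty.subset fun x hx => (hle x).not_gt hx⟩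
  refine ⟨Nat.find hbound, Nat.find_spec hbound, ?_⟩
  rcases h : Nat.find hbound with _ | k
  · simpa using Set.infinite_univ
  · exact Nat.find_min hbound (h ▸ k.lt_succ_self)

theorem exists_isFibreEnumeration (hC : IsClosed C) (hfin : ∀ x, (fibre C x).Finite) :
    ∃ (m : ℕ) (E : Set (Unit ⊕ Fin m → X)) (F : Set X), IsFibreEnumeration C E F := by
  obtain ⟨m, hlt, hle⟩ := exists_generic_ncard_fibre hC hfin
  obtain ⟨E, hE, hEC, hinf⟩ := exists_isIrredClosed_infinite_image
    (isClosed_setOf_mem_fibre hC) (fun _ hv => hv.1) (infinite_setOf_exists_injective hfin hle)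
  obtain ⟨v, hv, -, hinj⟩ : (E ∩ _).Nonempty := hinf.nonempty.of_image
  have hdim : dim E ≤ 1 := by
    refine hE.dim_le_one_of_finite hv (isRegular_coord (Sum.inl ()))
      ((Set.Finite.pi' fun _ => (hfin (v (Sum.inl ()))).insert (v (Sum.inl ()))).subset ?_)
    rintro u ⟨hu, hux⟩ (_ | i)
    · exact Or.inl hux
    · exact Or.inr (hux ▸ hEC hu i)
  have hnontriv : ((fun v => v (Sum.inl ())) '' E).Nontrivial :=
    hinf.nontrivial.mono (Set.image_mono Set.inter_subset_left)
  have hninj := (hE.finite_setOf_not_injective hdim hv hinj).image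
    fun v => v (Sum.inl ())
  have hinjOff {u} (hu : u ∈ E) (hux : u (Sum.inl ()) ∉ (fun v => v (Sum.inl ())) ''
      {u ∈ E | ¬Function.Injective (u ∘ Sum.inr)}) : Function.Injective (u ∘ Sum.inr) :=
    by_contra fun h => hux ⟨u, ⟨hu, h⟩, rfl⟩
  refine ⟨m, E, _, hE, hdim, (hlt.union
    (hE.finite_compl_image (isRegular_coord (Sum.inl ())) hnontriv)).union hninj,
    fun _ hu => hEC hu, fun x hx => ?_, fun u hu hux => hinjOff hu fun h => hux (Or.inr h),
    fun u hu hux => ?_⟩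
  · exact not_not.1 fun h => hx (Or.inl (Or.inr h))
  · have hcard : (Set.range (u ∘ Sum.inr)).ncard = m := by
      rw [← Nat.card_coe_set_eq,
        Nat.card_range_of_injective (hinjOff hu fun h => hux (Or.inr h)), Nat.card_fin]
    have hfibre_le : (fibre C (u (Sum.inl ()))).ncard ≤ m :=
      not_lt.1 fun h => hux (Or.inl (Or.inl h))
    exact (Set.eq_of_subset_of_ncard_le (Set.range_subset_iff.2 (hEC hu))
      (hfibre_le.trans hcard.ge) (hfin _)).ge

end Fibre

namespace IsFibreEnumeration

variable {C : Set (Fin 2 → X)} {m : ℕ} {E : Set (Unit ⊕ Fin m → X)} {F : Set X}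

theorem range_eq_fibre (hE : IsFibreEnumeration C E F) {v : Unit ⊕ Fin m → X} (hv : v ∈ E)
    (hx : v (Sum.inl ()) ∉ F) : Set.range (v ∘ Sum.inr) = fibre C (v (Sum.inl ())) :=
  (Set.range_subset_iff.2 (hE.mem_fibre v hv)).antisymm (hE.fibre_subset v hv hx)

theorem prod_eq_finprod_fibre {M : Type*} [CommMonoid M] (hE : IsFibreEnumeration C E F)
    {v : Unit ⊕ Fin m → X} (hv : v ∈ E) (hx : v (Sum.inl ()) ∉ F) (g : X → M) :
    ∏ i, g (v (Sum.inr i)) = ∏ᶠ y ∈ fibre C (v (Sum.inl ())), g y := by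
  rw [← hE.range_eq_fibre hv hx, finprod_mem_range (hE.injective v hv hx),
    finprod_eq_prod_of_fintype]
  rfl

theorem infinite_image [Nontrivial X] (hE : IsFibreEnumeration C E F) :
    ((fun v => v (Sum.inl ())) '' E).Infinite := by
  have := infinite_of_nontrivial (X := X)
  exact hE.finite.infinite_compl.mono hE.exists_mem

theorem finite_setOf_eq [Nontrivial X] (hE : IsFibreEnumeration C E F) (x : X) :
    {v ∈ E | v (Sum.inl ()) = x}.Finite := by
  refine hE.isIrredClosed.finite_inter hE.dim_le_one
    ((isRegular_coord (Sum.inl ())).isClosed_eq (isRegular_const x)) fun h => ?_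
  obtain ⟨_, ⟨a, ha, rfl⟩, _, ⟨b, hb, rfl⟩, hab⟩ := hE.infinite_image.nontrivial
  exact hab ((h ha).trans (h hb).symm)

theorem exists_eq_of_mem_fibre [Nontrivial X] (hE : IsFibreEnumeration C E F)
    (hC : IsIrredClosed C) (hdim : 1 ≤ dim C) (hfin : ∀ x, (fibre C x).Finite)
    {v : Unit ⊕ Fin m → X} (hv : v ∈ E) {y : X} (hy : y ∈ fibre C (v (Sum.inl ()))) :
    ∃ i, v (Sum.inr i) = y := by
  have hdimE := hE.isIrredClosed.one_le_dim (Set.nontrivial_of_image _ _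
    hE.infinite_image.nontrivial)
  obtain ⟨R, hR, hvR, hRprod, hRx, hRdim⟩ := (hE.isIrredClosed.prod hC).exists_subset_eqOn
    (a := Sum.elim v ![v (Sum.inl ()), y]) ⟨hv, hy⟩ (isRegular_coord (Sum.inl (Sum.inl ())))
    (isRegular_coord (Sum.inr 0)) rfl
  rw [hE.isIrredClosed.dim_prod hC] at hRdim
  have hRC (w) (hw : w ∈ R) : w (Sum.inr 1) ∈ fibre C (w (Sum.inl (Sum.inl ()))) := by
    have hx : w (Sum.inl (Sum.inl ())) = w (Sum.inr 0) := hRx hw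
    exact hx ▸ mem_fibre_iff.2 (hRprod hw).2
  have hnontriv : ((fun w => w (Sum.inl (Sum.inl ()))) '' R).Nontrivial := by
    by_contra hconst
    refine hR.infinite (by lia) ((Set.Finite.pi' fun _ =>
      (hfin (v (Sum.inl ()))).insert (v (Sum.inl ()))).subset fun w hw => ?_)
    have hx : w (Sum.inl (Sum.inl ())) = v (Sum.inl ()) :=
      Set.not_nontrivial_iff.1 hconst ⟨w, hw, rfl⟩ ⟨_, hvR, rfl⟩
    rintro ((_ | i) | k)
    · exact Or.inl hx
    · exact Or.inr (hx ▸ hE.mem_fibre _ (hRprod hw).1 i)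
    · fin_cases k
      exacts [Or.inl ((hRx hw).symm.trans hx), Or.inr (hx ▸ hRC w hw)]
  have hclosed : IsClosed (⋃ i : Fin m, {w : (Unit ⊕ Fin m) ⊕ Fin 2 → X |
      w (Sum.inl (Sum.inr i)) = w (Sum.inr 1)}) :=
    isClosed_iUnion_of_finite fun i => isClosed_diagonal _ _
  have hRsub := hR.subset_of_finite_exceptions (isRegular_coord (Sum.inl (Sum.inl ()))) hnontriv
    hE.finite hclosed fun w hw hwF => Set.mem_iUnion.2 (hE.fibre_subset _ (hRprod hw).1 hwF
      (hRC w hw))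
  obtain ⟨i, hi⟩ := Set.mem_iUnion.1 (hRsub hvR)
  exact ⟨i, hi⟩

end IsFibreEnumeration

/-! ### Quotients of regular functions along an enumeration of the fibres -/

/-- The tuple `(x, y₁, …, yₘ)` underlying `(x, z, y₁, …, yₘ)`. -/
def dropQuotient {X : Type*} {m : ℕ} (w : Fin 2 ⊕ Fin m → X) : Unit ⊕ Fin m → X :=
  w ∘ Sum.map (fun _ => 0) id

/-- `D` is an irreducible curve of tuples `(x, z, y₁, …, yₘ)` over `E` on which `z` represents
the quotient `β / α`; it may carry information about `z` where `α` and `β` vanish together. -/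
structure IsQuotientCurve {m : ℕ} (E : Set (Unit ⊕ Fin m → K))
    (α β : (Unit ⊕ Fin m → K) → K) (D : Set (Fin 2 ⊕ Fin m → K)) : Prop where
  isIrredClosed : IsIrredClosed D
  dim_le_one : dim D ≤ 1
  nontrivial : ((fun w => w (Sum.inl 0)) '' D).Nontrivial
  dropQuotient_mem : ∀ w ∈ D, dropQuotient w ∈ E
  mul_eq : ∀ w ∈ D, w (Sum.inl 1) * α (dropQuotient w) = β (dropQuotient w)

/-- The closure of the set of pairs `(x, z)` occurring in a curve of tuples `(x, z, y₁, …, yₘ)`. -/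
def quotientGraph {m : ℕ} (D : Set (Fin 2 ⊕ Fin m → K)) : Set (Fin 2 → K) :=
  closure ((fun w => w ∘ Sum.inl) '' D)

section QuotientCurve

variable {C : Set (Fin 2 → K)} {m : ℕ} {E : Set (Unit ⊕ Fin m → K)} {F : Set K}
  {α β : (Unit ⊕ Fin m → K) → K} {D : Set (Fin 2 ⊕ Fin m → K)}

theorem eq_of_dropQuotient_eq {X : Type*} {m : ℕ} {u w : Fin 2 ⊕ Fin m → X}
    (h : dropQuotient u = dropQuotient w) (hz : u (Sum.inl 1) = w (Sum.inl 1)) : u = w := by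
  funext k
  rcases k with k | i
  · fin_cases k
    exacts [congrFun h (Sum.inl ()), hz]
  · exact congrFun h (Sum.inr i)

theorem dropQuotient_elim {X : Type*} {m : ℕ} (v : Unit ⊕ Fin m → X) (z : X) :
    dropQuotient (Sum.elim ![v (Sum.inl ()), z] (v ∘ Sum.inr)) = v := by
  funext k
  rcases k with _ | _ <;> rfl

theorem isRegularMap_dropQuotient {m : ℕ} :
    IsRegularMap (dropQuotient : (Fin 2 ⊕ Fin m → X) → Unit ⊕ Fin m → X) :=
  isRegularMap_reindex _

theorem IsQuotientCurve.isIrredClosed_quotientGraph (hD : IsQuotientCurve E α β D) :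
    IsIrredClosed (quotientGraph D) :=
  hD.isIrredClosed.closure_image (continuous_reindex _)

theorem IsQuotientCurve.dim_quotientGraph_le_one (hD : IsQuotientCurve E α β D) :
    dim (quotientGraph D) ≤ 1 :=
  (hD.isIrredClosed.dim_closure_image_le (isRegularMap_reindex _)).trans hD.dim_le_one

variable [RefinesZariski K]

theorem exists_isQuotientCurve (hE : IsFibreEnumeration C E F) (hα : IsRegular α)
    (hβ : IsRegular β) {B : Set K} (hB : B.Finite)
    (hα₀ : ∀ v ∈ E, v (Sum.inl ()) ∉ B → α v ≠ 0) :
    ∃ D, IsQuotientCurve E α β D := by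
  let S := dropQuotient ⁻¹' E ∩ {w | w (Sum.inl 1) * α (dropQuotient w) = β (dropQuotient w)}
  have hS : IsClosed S :=
    (hE.isIrredClosed.isClosed.preimage isRegularMap_dropQuotient.continuous).inter
      (((isRegular_coord _).mul (hα.comp isRegularMap_dropQuotient)).isClosed_eq
        (hβ.comp isRegularMap_dropQuotient))
  have hinf : ((fun w => w (Sum.inl 0)) '' S).Infinite := by
    refine (hE.infinite_image.sdiff hB).mono ?_
    rintro _ ⟨⟨v, hv, rfl⟩, hvB⟩
    refine ⟨Sum.elim ![v (Sum.inl ()), β v / α v] (v ∘ Sum.inr), ⟨?_, ?_⟩, rfl⟩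
    · rwa [Set.mem_preimage, dropQuotient_elim]
    · rw [Set.mem_ofPred_eq, dropQuotient_elim]
      exact div_mul_cancel₀ _ (hα₀ v hv hvB)
  obtain ⟨D, hD, hDE, hDinf⟩ := exists_isIrredClosed_infinite_image hS subset_rfl hinf
  have hDx : ((fun w => w (Sum.inl 0)) '' D).Infinite :=
    hDinf.mono (Set.image_mono Set.inter_subset_left)
  obtain ⟨_, ⟨a, ha, rfl⟩, haB⟩ := (hDx.sdiff hB).nonempty
  have hdim : dim D ≤ 1 := by
    refine hD.dim_le_one_of_finite ha (isRegular_coord (Sum.inl 0)) (Set.Finite.of_finite_image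
      (f := dropQuotient) ((hE.finite_setOf_eq (a (Sum.inl 0))).subset ?_) fun u hu w hw h => ?_)
    · exact Set.image_subset_iff.2 fun u hu => ⟨(hDE hu.1).1, hu.2⟩
    · refine eq_of_dropQuotient_eq h (mul_right_cancel₀ (hα₀ _ (hDE hu.1).1 ?_) ?_)
      · rwa [show dropQuotient u (Sum.inl ()) = a (Sum.inl 0) from hu.2]
      · exact (hDE hu.1).2.trans (h ▸ (hDE hw.1).2.symm)
  exact ⟨D, hD, hdim, hDx.nontrivial, fun w hw => (hDE hw).1, fun w hw => (hDE hw).2⟩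

namespace IsQuotientCurve

theorem exists_elim_mem (hD : IsQuotientCurve E α β D)
    (hE : ∀ v ∈ E, ∀ i, v (Sum.inr i) ∈ fibre C (v (Sum.inl ())))
    (hC : ![0, 1] ∉ asymptoticCone C) {e : Fin 2 → K} (he : e ∈ quotientGraph D) :
    ∃ y, Sum.elim e y ∈ D := by
  have hfin : {p ∈ quotientGraph D | p 0 = e 0}.Finite := by
    refine hD.isIrredClosed_quotientGraph.finite_inter hD.dim_quotientGraph_le_one
      ((isRegular_coord 0).isClosed_eq (isRegular_const (e 0))) fun h => ?_
    obtain ⟨_, ⟨a, ha, rfl⟩, _, ⟨b, hb, rfl⟩, hab⟩ := hD.nontrivial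
    exact hab ((h (subset_closure ⟨a, ha, rfl⟩)).trans (h (subset_closure ⟨b, hb, rfl⟩)).symm)
  refine (hD.isIrredClosed.exists_elim_mem_or_conePoint_zero_mem_cone
    (hD.isIrredClosed.one_le_dim (Set.nontrivial_of_image _ _ hD.nontrivial)) 0 he
      hfin).resolve_right ?_
  rintro ⟨y, i, hyi, hy⟩
  let toProjective (w : (Fin 2 ⊕ Fin m) ⊕ Unit → K) : Fin 2 ⊕ Unit → K := Sum.elim
    ![w (Sum.inr ()) * w (Sum.inl (Sum.inl 0)), w (Sum.inl (Sum.inr i))] (w ∘ Sum.inr)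
  have hcont : Continuous toProjective := (IsRegularMap.sumElim (IsRegular.vec2
    ((isRegular_coord _).mul (isRegular_coord _)) (isRegular_coord _))
      (isRegularMap_reindex _)).continuous
  have hsub : cone D ⊆ toProjective ⁻¹' projectiveClosure C := by
    refine cone_subset (isClosed_projectiveClosure.preimage hcont) fun w hw s => ?_
    have hp : ![w (Sum.inl 0), w (Sum.inr i)] ∈ C := hE _ (hD.dropQuotient_mem w hw) i
    rw [Set.mem_preimage]
    convert! smul_mem_projectiveClosure hp s using 1
    funext k
    rcases k with k | _
    · fin_cases k <;> rfl
    · rfl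
  have hmem : Sum.elim ![0 * e 0, y i] (fun _ => 0) ∈ projectiveClosure C := hsub hy
  rw [zero_mul, hyi] at hmem
  exact hC hmem

theorem vec_mem_quotientGraph_iff (hD : IsQuotientCurve E α β D)
    (hE : ∀ v ∈ E, ∀ i, v (Sum.inr i) ∈ fibre C (v (Sum.inl ())))
    (hC : ![0, 1] ∉ asymptoticCone C) {n : K → K}
    (hn : ∀ v ∈ E, v (Sum.inl ()) ∉ F → α v ≠ 0 ∧ β v = n (v (Sum.inl ())) * α v) {x : K}
    (hxF : x ∉ F) (hxD : x ∈ (fun w => w (Sum.inl 0)) '' D) (z : K) :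
    ![x, z] ∈ quotientGraph D ↔ z = n x := by
  have heq (w) (hw : w ∈ D) (hwF : w (Sum.inl 0) ∉ F) : w (Sum.inl 1) = n (w (Sum.inl 0)) := by
    obtain ⟨hα, hβ⟩ := hn _ (hD.dropQuotient_mem w hw) hwF
    exact mul_right_cancel₀ hα ((hD.mul_eq w hw).trans hβ)
  constructor
  · intro h
    obtain ⟨y, hy⟩ := hD.exists_elim_mem hE hC h
    exact heq _ hy hxF
  · rintro rfl
    obtain ⟨w, hw, rfl⟩ := hxD
    refine subset_closure ⟨w, hw, ?_⟩
    rw [← heq w hw hxF]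
    exact (vec2_eta _).symm

end IsQuotientCurve

end QuotientCurve

/-! ### The product over a fibre -/

/-- The line `y = t` meets `C` exactly in the points `(a, t)` with `a ∈ A`, and `C` has neither a
vertical nor a horizontal tangent at any of them. -/
structure IsTransversalLevel (C : Set (Fin 2 → K)) (t : K) (A : Finset K) : Prop where
  mem_iff : ∀ a, a ∈ A ↔ ![a, t] ∈ C
  vertical_notMem : ∀ a ∈ A, ![0, 1] ∉ tangentCone C ![a, t]
  horizontal_notMem : ∀ a ∈ A, ![1, 0] ∉ tangentCone C ![a, t]

/-- The value at `t` of the monic polynomial with roots `y₁, …, yₘ`. -/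
def fibreProd {m : ℕ} (t : K) (v : Unit ⊕ Fin m → K) : K := ∏ i, (t - v (Sum.inr i))

/-- The value at `x` of the monic polynomial with roots in `A`. -/
def levelProd {m : ℕ} (A : Finset K) (v : Unit ⊕ Fin m → K) : K := ∏ a ∈ A, (v (Sum.inl ()) - a)

section FibreProduct

variable {C : Set (Fin 2 → K)} {m : ℕ} {E : Set (Unit ⊕ Fin m → K)} {F : Set K} {t : K}
  {A : Finset K} {D : Set (Fin 2 ⊕ Fin m → K)}

theorem exists_vec_eq_smul {K : Type*} [Field K] {d : Fin 2 → K} (hd : d ≠ 0) {a b : K}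
    (h : a * d 1 = b * d 0) : ∃ s : K, ![a, b] = s • d := by
  by_cases hd₀ : d 0 = 0
  · have hd₁ : d 1 ≠ 0 := fun hd₁ => hd (by funext k; fin_cases k <;> assumption)
    have ha : a = 0 := by simpa [hd₀, hd₁] using h
    exact ⟨b / d 1, by funext k; fin_cases k <;> simp [hd₀, hd₁, ha]⟩
  · exact ⟨a / d 0, by funext k; fin_cases k <;> simp [hd₀, div_mul_eq_mul_div, h]⟩

theorem levelProd_ne_zero {K : Type*} [Field K] {m : ℕ} {A : Finset K} {v : Unit ⊕ Fin m → K}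
    (hv : v (Sum.inl ()) ∉ A) : levelProd A v ≠ 0 :=
  Finset.prod_ne_zero_iff.2 fun _ ha h => hv (sub_eq_zero.1 h ▸ ha)

theorem IsTransversalLevel.fibreProd_ne_zero (hA : IsTransversalLevel C t A)
    (hE : IsFibreEnumeration C E F) {v : Unit ⊕ Fin m → K} (hv : v ∈ E)
    (hx : v (Sum.inl ()) ∉ A) : fibreProd t v ≠ 0 := by
  refine Finset.prod_ne_zero_iff.2 fun i _ h => hx ((hA.mem_iff _).2 ?_)
  rw [sub_eq_zero.1 h]
  exact hE.mem_fibre v hv i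

theorem IsFibreEnumeration.vertical_mem_tangentCone (hE : IsFibreEnumeration C E F) {i j : Fin m}
    (hij : i ≠ j) {v : Unit ⊕ Fin m → K} (hv : v ∈ E) (h : v (Sum.inr i) = v (Sum.inr j)) :
    ![0, 1] ∈ tangentCone C ![v (Sum.inl ()), v (Sum.inr i)] := by
  refine hE.isIrredClosed.mem_tangentCone
    (Φ := fun v => ![v (Sum.inl ()), v (Sum.inr i)])
    (Ψ := fun v => ![v (Sum.inl ()), v (Sum.inr j)]) (Θ := fun _ => ![0, 1])
    ((isRegular_coord _).vec2 (isRegular_coord _)) ((isRegular_coord _).vec2 (isRegular_coord _))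
    (isRegularMap_const _) (fun w hw => hE.mem_fibre w hw i) (fun w hw => hE.mem_fibre w hw j)
    (fun heq => ?_) (fun w _ hne => ?_) hv (by rw [h])
  · obtain ⟨_, ⟨u, hu, rfl⟩, huF⟩ := (hE.infinite_image.sdiff hE.finite).nonempty
    exact hij (hE.injective u hu huF (congrFun (heq hu) 1))
  · exact exists_vec_eq_smul (sub_ne_zero.2 hne.symm) (by simp)

theorem IsTransversalLevel.prod_erase_ne_zero (hA : IsTransversalLevel C t A)
    (hE : IsFibreEnumeration C E F) {v : Unit ⊕ Fin m → K} (hv : v ∈ E) {i : Fin m}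
    (hi : v (Sum.inr i) = t) : ∏ j ∈ Finset.univ.erase i, (t - v (Sum.inr j)) ≠ 0 := by
  refine Finset.prod_ne_zero_iff.2 fun j hj h => ?_
  have htangent := hE.vertical_mem_tangentCone (Finset.ne_of_mem_erase hj).symm hv
    (hi.trans (sub_eq_zero.1 h))
  have hmem := hE.mem_fibre v hv i
  rw [hi] at htangent hmem
  exact hA.vertical_notMem _ ((hA.mem_iff _).2 hmem) htangent

theorem IsQuotientCurve.mem_tangentCone {α β : (Unit ⊕ Fin m → K) → K}
    (hD : IsQuotientCurve E α β D) (hE : IsFibreEnumeration C E F) {x : K} (hx : ![x, t] ∈ C)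
    (i : Fin m) {f g : (Fin 2 ⊕ Fin m → K) → K} (hf : IsRegular f) (hg : IsRegular g)
    (hfg : ∀ w ∈ D, f w * (w (Sum.inr i) - t) = g w * (w (Sum.inl 0) - x))
    {w : Fin 2 ⊕ Fin m → K} (hw : w ∈ D) (hwx : w (Sum.inl 0) = x) (hwt : w (Sum.inr i) = t) :
    ![f w, g w] ∈ tangentCone C ![x, t] := by
  refine hD.isIrredClosed.mem_tangentCone (Φ := fun _ => ![x, t])
    (Ψ := fun w => ![w (Sum.inl 0), w (Sum.inr i)]) (Θ := fun w => ![f w, g w])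
    (isRegularMap_const _) ((isRegular_coord _).vec2 (isRegular_coord _)) (hf.vec2 hg)
    (fun _ _ => hx) (fun w hw => hE.mem_fibre _ (hD.dropQuotient_mem w hw) i)
    (fun heq => ?_) (fun w hw hne => ?_) hw (by rw [hwx, hwt])
  · obtain ⟨_, ⟨a, ha, rfl⟩, _, ⟨b, hb, rfl⟩, hab⟩ := hD.nontrivial
    exact hab ((congrFun (heq ha) 0).symm.trans (congrFun (heq hb) 0))
  · exact exists_vec_eq_smul (sub_ne_zero.2 hne.symm) (hfg w hw)

variable [RefinesZariski K]

theorem isRegular_fibreProd : IsRegular (fibreProd t : (Unit ⊕ Fin m → K) → K) :=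
  .finsetProd _ fun _ _ => (isRegular_const t).sub (isRegular_coord _)

theorem isRegular_levelProd : IsRegular (levelProd A : (Unit ⊕ Fin m → K) → K) :=
  .finsetProd _ fun a _ => (isRegular_coord _).sub (isRegular_const a)

theorem IsTransversalLevel.ne_zero_of_mem_quotientGraph (hA : IsTransversalLevel C t A)
    (hE : IsFibreEnumeration C E F) (hC : ![0, 1] ∉ asymptoticCone C)
    (hD : IsQuotientCurve E (levelProd A) (fibreProd t) D) {e : Fin 2 → K}
    (he : e ∈ quotientGraph D) : e 1 ≠ 0 := by
  classical
  intro he₀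
  obtain ⟨y, hy⟩ := hD.exists_elim_mem hE.mem_fibre hC he
  have hzero : e 1 * _ = fibreProd t (dropQuotient (Sum.elim e y)) := hD.mul_eq _ hy
  rw [he₀, zero_mul] at hzero
  obtain ⟨i, -, hi⟩ := Finset.prod_eq_zero_iff.1 hzero.symm
  have hyi : y i = t := (sub_eq_zero.1 hi).symm
  have hmem : ![e 0, t] ∈ C := hyi ▸ hE.mem_fibre _ (hD.dropQuotient_mem _ hy) i
  have heA := (hA.mem_iff _).2 hmem
  have htangent := hD.mem_tangentCone hE hmem i
    (f := fun w => ∏ j ∈ Finset.univ.erase i, (t - w (Sum.inr j)))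
    (g := fun w => -(w (Sum.inl 1) * ∏ a ∈ A.erase (e 0), (w (Sum.inl 0) - a)))
    (.finsetProd _ fun _ _ => (isRegular_const t).sub (isRegular_coord _))
    (.neg (.mul (isRegular_coord _)
      (.finsetProd _ fun a _ => (isRegular_coord _).sub (isRegular_const a))))
    (fun w hw => ?_) hy rfl hyi
  · refine hA.horizontal_notMem _ heA ((smul_mem_tangentCone_iff
      (hA.prod_erase_ne_zero hE (hD.dropQuotient_mem _ hy) hyi)).1 ?_)
    convert! htangent using 1
    funext k
    fin_cases k <;> simp [dropQuotient, he₀]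
  · have hquot : w (Sum.inl 1) * ∏ a ∈ A, (w (Sum.inl 0) - a) = ∏ j, (t - w (Sum.inr j)) :=
      hD.mul_eq w hw
    rw [← Finset.mul_prod_erase _ _ heA, ← Finset.mul_prod_erase _ _ (Finset.mem_univ i)] at hquot
    linear_combination hquot

theorem IsTransversalLevel.ne_zero_of_mem_quotientGraph_swap (hA : IsTransversalLevel C t A)
    (hE : IsFibreEnumeration C E F) (hC : IsIrredClosed C) (hdim : 1 ≤ dim C)
    (hfin : ∀ x, (fibre C x).Finite) (hCasymp : ![0, 1] ∉ asymptoticCone C)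
    (hD : IsQuotientCurve E (fibreProd t) (levelProd A) D) {e : Fin 2 → K}
    (he : e ∈ quotientGraph D) : e 1 ≠ 0 := by
  classical
  intro he₀
  obtain ⟨y, hy⟩ := hD.exists_elim_mem hE.mem_fibre hCasymp he
  have hzero : e 1 * _ = levelProd A (dropQuotient (Sum.elim e y)) := hD.mul_eq _ hy
  rw [he₀, zero_mul] at hzero
  have heA : e 0 ∈ A := by_contra fun h => levelProd_ne_zero h hzero.symm
  have hmem := (hA.mem_iff _).1 heA
  obtain ⟨i, hyi⟩ := hE.exists_eq_of_mem_fibre hC hdim hfin (hD.dropQuotient_mem _ hy) hmem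
  have htangent := hD.mem_tangentCone hE hmem i
    (f := fun w => w (Sum.inl 1) * ∏ j ∈ Finset.univ.erase i, (t - w (Sum.inr j)))
    (g := fun w => -∏ a ∈ A.erase (e 0), (w (Sum.inl 0) - a))
    (.mul (isRegular_coord _)
      (.finsetProd _ fun _ _ => (isRegular_const t).sub (isRegular_coord _)))
    (.neg (.finsetProd _ fun a _ => (isRegular_coord _).sub (isRegular_const a)))
    (fun w hw => ?_) hy rfl hyi
  · have hne : -∏ a ∈ A.erase (e 0), (e 0 - a) ≠ 0 := neg_ne_zero.2 <|
      Finset.prod_ne_zero_iff.2 fun a ha => sub_ne_zero.2 (Finset.ne_of_mem_erase ha).symm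
    refine hA.vertical_notMem _ heA ((smul_mem_tangentCone_iff hne).1 ?_)
    convert! htangent using 1
    funext k
    fin_cases k <;> simp [he₀]
  · have hquot : w (Sum.inl 1) * ∏ j, (t - w (Sum.inr j)) = ∏ a ∈ A, (w (Sum.inl 0) - a) :=
      hD.mul_eq w hw
    rw [← Finset.mul_prod_erase _ _ heA, ← Finset.mul_prod_erase _ _ (Finset.mem_univ i)] at hquot
    linear_combination -hquot

theorem IsTransversalLevel.exists_fibreProd_eq (hA : IsTransversalLevel C t A)
    (hE : IsFibreEnumeration C E F) (hC : IsIrredClosed C) (hdim : 1 ≤ dim C)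
    (hfin : ∀ x, (fibre C x).Finite) (hCasymp : ![0, 1] ∉ asymptoticCone C) :
    ∃ (c : K) (B : Set K), B.Finite ∧
      ∀ v ∈ E, v (Sum.inl ()) ∉ B → fibreProd t v = c * levelProd A v := by
  obtain ⟨D, hD⟩ := exists_isQuotientCurve hE (isRegular_levelProd (A := A))
    (isRegular_fibreProd (t := t)) A.finite_toSet fun v _ hx => levelProd_ne_zero hx
  obtain ⟨D', hD'⟩ := exists_isQuotientCurve hE (isRegular_fibreProd (t := t))
    (isRegular_levelProd (A := A)) A.finite_toSet fun v hv hx => hA.fibreProd_ne_zero hE hv hx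
  let ratio (x : K) : K := (∏ᶠ y ∈ fibre C x, (t - y)) / ∏ a ∈ A, (x - a)
  have hratio (v) (hv : v ∈ E) (hx : v (Sum.inl ()) ∉ F ∪ A) :
      fibreProd t v = ratio (v (Sum.inl ())) * levelProd A v := by
    rw [fibreProd, hE.prod_eq_finprod_fibre hv (fun h => hx (Or.inl h)) fun y => t - y]
    exact (div_mul_cancel₀ _ (levelProd_ne_zero fun h => hx (Or.inr h))).symm
  have hratio_inv (v) (hv : v ∈ E) (hx : v (Sum.inl ()) ∉ F ∪ A) :
      fibreProd t v ≠ 0 ∧ levelProd A v = (ratio (v (Sum.inl ())))⁻¹ * fibreProd t v := by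
    have hne := hA.fibreProd_ne_zero hE hv fun h => hx (Or.inr h)
    have heq := hratio v hv hx
    refine ⟨hne, ?_⟩
    rw [heq, inv_mul_cancel_left₀ (left_ne_zero_of_mul (heq ▸ hne))]
  let B : Set K := F ∪ A ∪ (((fun w => w (Sum.inl 0)) '' D)ᶜ ∪ ((fun w => w (Sum.inl 0)) '' D')ᶜ)
  have hB : B.Finite := (hE.finite.union A.finite_toSet).union
    ((hD.isIrredClosed.finite_compl_image (isRegular_coord _) hD.nontrivial).union
      (hD'.isIrredClosed.finite_compl_image (isRegular_coord _) hD'.nontrivial))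
  obtain ⟨c, hc⟩ := exists_eq_const_of_no_zeros_no_poles hD.isIrredClosed_quotientGraph
    hD'.isIrredClosed_quotientGraph hD.dim_quotientGraph_le_one hD'.dim_quotientGraph_le_one hB
    (n := ratio)
    (fun x hx => hD.vec_mem_quotientGraph_iff hE.mem_fibre hCasymp
      (fun v hv hvx => ⟨levelProd_ne_zero fun h => hvx (Or.inr h), hratio v hv hvx⟩)
      (fun h => hx (Or.inl h)) (not_not.1 fun h => hx (Or.inr (Or.inl h))))
    (fun x hx => hD'.vec_mem_quotientGraph_iff (n := fun x => (ratio x)⁻¹) hE.mem_fibre hCasymp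
      hratio_inv (fun h => hx (Or.inl h)) (not_not.1 fun h => hx (Or.inr (Or.inr h))))
    (fun e he => hA.ne_zero_of_mem_quotientGraph hE hCasymp hD he)
    (fun e he => hA.ne_zero_of_mem_quotientGraph_swap hE hC hdim hfin hCasymp hD' he)
  refine ⟨c, B, hB, fun v hv hvB => ?_⟩
  rw [hratio v hv fun h => hvB (Or.inl h), hc _ hvB]

end FibreProduct

/-! ### Interpolation over the levels -/

section Interpolation

open Polynomial

theorem prod_X_sub_C_eq_nodal_add_interpolate {K σ : Type*} [Field K] [DecidableEq K] [Fintype σ]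
    {T : Finset K} (hT : T.card = Fintype.card σ) (y : σ → K) :
    ∏ i, (Polynomial.X - C (y i)) =
      Lagrange.nodal T id + Lagrange.interpolate T id fun t => ∏ i, (t - y i) := by
  have hmonic : (∏ i, (Polynomial.X - C (y i))).Monic := monic_prod_X_sub_C y Finset.univ
  have hdegree : (∏ i, (Polynomial.X - C (y i))).degree = (Lagrange.nodal T id).degree := by
    rw [Lagrange.degree_nodal, hT, degree_prod]
    simp
  rw [← sub_eq_iff_eq_add']
  refine Lagrange.eq_interpolate_of_eval_eq _ (Set.injOn_id _) ?_ fun t ht => ?_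
  · rw [← Lagrange.degree_nodal (v := id), ← hdegree]
    exact degree_sub_lt_left hdegree hmonic.ne_zero
      (by rw [hmonic.leadingCoeff, Lagrange.nodal_monic.leadingCoeff])
  · rw [eval_sub, Lagrange.eval_nodal_at_node ht, sub_zero, eval_prod]
    simp

theorem exists_mvPolynomial_eval_eq_prod {K σ : Type*} [Field K] [Fintype σ] {T : Finset K}
    (hT : T.card = Fintype.card σ) (P : K → K[X]) :
    ∃ f : MvPolynomial (Fin 2) K, ∀ (x : K) (y : σ → K),
      (∀ t ∈ T, ∏ i, (t - y i) = (P t).eval x) →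
        ∀ z, MvPolynomial.eval ![x, z] f = ∏ i, (z - y i) := by
  classical
  refine ⟨(Lagrange.nodal T id).toMvPolynomial 1 +
    ∑ t ∈ T, (P t).toMvPolynomial 0 * (Lagrange.basis T id t).toMvPolynomial 1,
    fun x y hxy z => ?_⟩
  have h := congrArg (eval z) (prod_X_sub_C_eq_nodal_add_interpolate hT y)
  simp only [eval_prod, eval_sub, eval_X, eval_C, eval_add, Lagrange.interpolate_apply,
    eval_finsetSum, eval_mul] at h
  simp only [map_add, map_sum, map_mul, MvPolynomial.eval_toMvPolynomial, h]
  exact congrArg _ (Finset.sum_congr rfl fun t ht => by rw [hxy t ht]; rfl)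

end Interpolation

/-! ### Curves in general position -/

/-- The vertical direction is not asymptotic to `C`, and only finitely many points of `C` have a
vertical or a horizontal tangent. -/
structure IsInGeneralPosition (C : Set (Fin 2 → K)) : Prop where
  vertical_notMem_asymptoticCone : ![0, 1] ∉ asymptoticCone C
  finite_vertical_tangents : {q ∈ C | ![0, 1] ∈ tangentCone C q}.Finite
  finite_horizontal_tangents : {q ∈ C | ![1, 0] ∈ tangentCone C q}.Finite

section GeneralPosition

variable {C : Set (Fin 2 → K)}

theorem IsInGeneralPosition.exists_isTransversalLevel (h : IsInGeneralPosition C)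
    (hC : IsIrredClosed C) (hdim : dim C ≤ 1) :
    ∃ B : Set K, B.Finite ∧ ∀ t ∉ B, ∃ A, IsTransversalLevel C t A := by
  obtain ⟨q, hq⟩ := hC.nonempty
  refine ⟨insert (q 1) ((fun p => p 1) '' ({p ∈ C | ![0, 1] ∈ tangentCone C p} ∪
    {p ∈ C | ![1, 0] ∈ tangentCone C p})),
    ((h.finite_vertical_tangents.union h.finite_horizontal_tangents).image _).insert _,
    fun t ht => ?_⟩
  have hlevel : (C ∩ {p | p 1 = t}).Finite :=
    hC.finite_inter hdim ((isRegular_coord 1).isClosed_eq (isRegular_const t))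
      fun hsub => ht (Or.inl (hsub hq).symm)
  have hfin : {a | ![a, t] ∈ C}.Finite :=
    (hlevel.image fun p => p 0).subset fun a ha => ⟨![a, t], ⟨ha, rfl⟩, rfl⟩
  exact ⟨hfin.toFinset, fun a => hfin.mem_toFinset,
    fun a ha hw => ht (Or.inr ⟨_, Or.inl ⟨hfin.mem_toFinset.1 ha, hw⟩, rfl⟩),
    fun a ha hw => ht (Or.inr ⟨_, Or.inr ⟨hfin.mem_toFinset.1 ha, hw⟩, rfl⟩)⟩

variable [RefinesZariski K]

theorem finite_fibre_of_vertical_notMem_asymptoticCone (hC : IsClosed C)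
    (hvert : ![0, 1] ∉ asymptoticCone C) (x : K) : (fibre C x).Finite := by
  have := infinite_of_nontrivial (X := K)
  refine (setOf_apply_mem_eq_univ_or_finite hC (Φ := fun y => ![x, y])
    ((isRegular_const x).vec2 (isRegular_coord ()))).resolve_left fun hline => hvert ?_
  -- The points `(s x, 1, s) = s (x, s⁻¹, 1)` converge to `(0, 1, 0)`.
  let γ (s : K) : Fin 2 ⊕ Unit → K := Sum.elim ![s * x, 1] fun _ => s
  have hγ : IsRegularMap fun v : Unit → K => γ (v ()) :=
    (((isRegular_coord ()).mul (isRegular_const x)).vec2 (isRegular_const 1)).sumElim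
      (isRegularMap_reindex _)
  have hmem (s : K) (hs : s ≠ 0) : γ s ∈ projectiveClosure C := by
    have hs' : ![x, s⁻¹] ∈ C := hline.ge (Set.mem_univ s⁻¹)
    convert! smul_mem_projectiveClosure hs' s using 2
    simp [hs]
  have huniv : {s | γ s ∈ projectiveClosure C} = Set.univ :=
    (setOf_apply_mem_eq_univ_or_finite isClosed_projectiveClosure hγ).resolve_right fun hfin =>
      (Set.finite_singleton (0 : K)).infinite_compl (hfin.subset hmem)
  have hzero : γ 0 ∈ projectiveClosure C := huniv.ge (Set.mem_univ 0)
  rwa [show γ 0 = Sum.elim ![0, 1] 0 by simp only [γ, zero_mul]; rfl] at hzero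

variable {m : ℕ} {E : Set (Unit ⊕ Fin m → K)} {F : Set K}

theorem IsInGeneralPosition.exists_polynomial_fibreProd_eq (h : IsInGeneralPosition C)
    (hC : IsIrredClosed C) (hdim : dim C = 1) (hE : IsFibreEnumeration C E F) :
    ∃ B : Set K, B.Finite ∧ ∀ t ∉ B, ∃ (P : Polynomial K) (B' : Set K), B'.Finite ∧
      ∀ v ∈ E, v (Sum.inl ()) ∉ B' → fibreProd t v = P.eval (v (Sum.inl ())) := by
  obtain ⟨B, hB, hlevel⟩ := h.exists_isTransversalLevel hC hdim.le
  refine ⟨B, hB, fun t ht => ?_⟩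
  obtain ⟨A, hA⟩ := hlevel t ht
  obtain ⟨c, B', hB', hprod⟩ := hA.exists_fibreProd_eq hE hC hdim.ge
    (finite_fibre_of_vertical_notMem_asymptoticCone hC.isClosed h.vertical_notMem_asymptoticCone)
    h.vertical_notMem_asymptoticCone
  refine ⟨.C c * ∏ a ∈ A, (.X - .C a), B', hB', fun v hv hx => ?_⟩
  rw [hprod v hv hx, levelProd]
  simp [Polynomial.eval_prod]

theorem IsInGeneralPosition.exists_mvPolynomial_eval_eq_fibreProd (h : IsInGeneralPosition C)
    (hC : IsIrredClosed C) (hdim : dim C = 1) (hE : IsFibreEnumeration C E F) :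
    ∃ (f : MvPolynomial (Fin 2) K) (B : Set K), B.Finite ∧
      ∀ v ∈ E, v (Sum.inl ()) ∉ B →
        ∀ z, MvPolynomial.eval ![v (Sum.inl ()), z] f = fibreProd z v := by
  have := infinite_of_nontrivial (X := K)
  obtain ⟨B, hB, hlevel⟩ := h.exists_polynomial_fibreProd_eq hC hdim hE
  choose! P B' hB' hP using hlevel
  obtain ⟨T, hTB, hT⟩ := hB.infinite_compl.exists_subset_card_eq m
  obtain ⟨f, hf⟩ := exists_mvPolynomial_eval_eq_prod (σ := Fin m) (by rwa [Fintype.card_fin]) P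
  exact ⟨f, ⋃ t ∈ T, B' t, T.finite_toSet.biUnion fun t ht => hB' t (hTB ht), fun v hv hx z =>
    hf _ _ (fun t ht => hP t (hTB ht) v hv fun hxt => hx (Set.mem_biUnion ht hxt)) z⟩

theorem IsInGeneralPosition.exists_mvPolynomial_eval_eq_zero (h : IsInGeneralPosition C)
    (hC : IsIrredClosed C) (hdim : dim C = 1) :
    ∃ f : MvPolynomial (Fin 2) K, f ≠ 0 ∧ ∀ v ∈ C, MvPolynomial.eval v f = 0 := by
  have := infinite_of_nontrivial (X := K)
  have hfin := finite_fibre_of_vertical_notMem_asymptoticCone hC.isClosed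
    h.vertical_notMem_asymptoticCone
  obtain ⟨m, E, F, hE⟩ := exists_isFibreEnumeration hC.isClosed hfin
  obtain ⟨f, B, hB, hf⟩ := h.exists_mvPolynomial_eval_eq_fibreProd hC hdim hE
  refine ⟨f, ?_, ?_⟩
  · rintro rfl
    obtain ⟨x, hx⟩ := (hE.finite.union hB).infinite_compl.nonempty
    obtain ⟨u, hu, rfl⟩ := hE.exists_mem x fun hxF => hx (Or.inl hxF)
    obtain ⟨z, hz⟩ := (Set.finite_range (u ∘ Sum.inr)).infinite_compl.nonempty
    have hprod := hf u hu (fun hxB => hx (Or.inr hxB)) z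
    rw [map_zero] at hprod
    obtain ⟨i, -, hi⟩ := Finset.prod_eq_zero_iff.1 hprod.symm
    exact hz ⟨i, (sub_eq_zero.1 hi).symm⟩
  · refine hC.subset_of_finite_exceptions (isRegular_coord 0)
      (hC.nontrivial_image_of_finite_fibre hdim.ge hfin) (hE.finite.union hB)
      ((isRegular_eval f).isClosed_eq (isRegular_const 0)) fun v hv hx => ?_
    obtain ⟨u, hu, hux⟩ := hE.exists_mem (v 0) fun hxF => hx (Or.inl hxF)
    have hprod := hf u hu (fun hxB => hx (Or.inr (hux ▸ hxB))) (v 1)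
    rw [hux, vec2_eta] at hprod
    obtain ⟨i, hi⟩ := hE.exists_eq_of_mem_fibre hC hdim.ge hfin hu (y := v 1)
      (by rwa [hux, mem_fibre_iff])
    exact hprod.trans (Finset.prod_eq_zero (Finset.mem_univ i) (sub_eq_zero.2 hi.symm))

end GeneralPosition

/-! ### Reduction to general position -/

section CoordinateChange

theorem exists_linearEquiv_vec_apply_eq {K : Type*} [Field K] {u w : Fin 2 → K}
    (huw : u 0 * w 1 ≠ w 0 * u 1) :
    ∃ L : (Fin 2 → K) ≃ₗ[K] Fin 2 → K, L ![1, 0] = u ∧ L ![0, 1] = w := by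
  have hdet : IsUnit (!![u 0, w 0; u 1, w 1]).det := by
    rw [Matrix.det_fin_two_of]
    exact (sub_ne_zero.2 huw).isUnit
  refine ⟨Matrix.toLinearEquiv' _ (Matrix.invertibleOfIsUnitDet _ hdet), ?_, ?_⟩ <;>
    funext k <;> fin_cases k <;> simp [Matrix.toLinearEquiv']

theorem exists_mvPolynomial_eval_eq_eval_map {K ι κ : Type*} [Field K] [Finite ι]
    (L : (ι → K) →ₗ[K] κ → K) (f : MvPolynomial κ K) :
    ∃ g : MvPolynomial ι K, ∀ v, MvPolynomial.eval v g = MvPolynomial.eval (L v) f := by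
  classical
  have := Fintype.ofFinite ι
  refine ⟨MvPolynomial.bind₁ L.toMatrix'.toMvPolynomial f, fun v => ?_⟩
  have hL : L v = fun k => MvPolynomial.eval v (L.toMatrix'.toMvPolynomial k) := by
    funext k
    rw [Matrix.toMvPolynomial_eval_eq_apply, LinearMap.toMatrix'_mulVec]
  rw [hL, ← MvPolynomial.coe_aeval_eq_eval, ← MvPolynomial.coe_aeval_eq_eval]
  exact MvPolynomial.aeval_bind₁ _ _ _

theorem exists_notMem_and_notMem [Finite ι] {A B : Set (ι → X)} (hA : IsClosed A)
    (hB : IsClosed B) (hA' : ∃ v, v ∉ A) (hB' : ∃ v, v ∉ B) : ∃ v, v ∉ A ∧ v ∉ B := by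
  by_contra! hcover
  obtain ⟨a, ha⟩ := hA'
  obtain ⟨b, hb⟩ := hB'
  rcases isIrredClosed_univ.subset_or_subset hA hB
    fun v _ => or_iff_not_imp_left.2 (hcover v) with h | h
  · exact ha (h trivial)
  · exact hb (h trivial)

variable [RefinesZariski K] [Finite ι] [Finite κ]

theorem IsIrredClosed.preimage_linearEquiv {C : Set (κ → K)} (hC : IsIrredClosed C)
    (L : (ι → K) ≃ₗ[K] κ → K) : IsIrredClosed (L ⁻¹' C) :=
  hC.preimage_of_leftInverse (isRegularMap_linearMap L.toLinearMap)
    (isRegularMap_linearMap L.symm.toLinearMap) L.symm_apply_apply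
    (by simp [L.surjective.range_eq])

theorem IsIrredClosed.dim_preimage_linearEquiv {C : Set (κ → K)} (hC : IsIrredClosed C)
    (L : (ι → K) ≃ₗ[K] κ → K) : dim (L ⁻¹' C) = dim C := by
  have hL := isRegularMap_linearMap L.toLinearMap
  have hL' := isRegularMap_linearMap L.symm.toLinearMap
  have hpre := hC.preimage_linearEquiv L
  refine le_antisymm
    (hpre.dim_le_of_leftInvOn hC hL hL' (fun v _ => L.symm_apply_apply v) fun _ hv => hv)
    (hC.dim_le_of_leftInvOn hpre hL' hL (fun v _ => L.apply_symm_apply v) fun v hv => ?_)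
  simpa using hv

variable {C : Set (Fin 2 → K)}

theorem IsIrredClosed.finite_setOf_mem_tangentCone_preimage (hC : IsIrredClosed C)
    (hdim : dim C ≤ 1) (L : (Fin 2 → K) ≃ₗ[K] Fin 2 → K) {q w : Fin 2 → K} (hq : q ∈ C)
    (hw : L w ∉ tangentCone C q) : {p ∈ L ⁻¹' C | w ∈ tangentCone (L ⁻¹' C) p}.Finite := by
  have hfin : (C ∩ {p | L w ∈ tangentCone C p}).Finite :=
    hC.finite_inter hdim (isClosed_setOf_mem_tangentCone _) fun h => hw (h hq)
  exact (hfin.preimage L.injective.injOn).subset fun p hp =>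
    ⟨hp.1, map_mem_tangentCone L.toLinearMap hp.2⟩

theorem IsIrredClosed.exists_directions_notMem_cones (hC : IsIrredClosed C) (hdim : dim C = 1) :
    ∃ q ∈ C, ∃ u w : Fin 2 → K, u 0 * w 1 ≠ w 0 * u 1 ∧ w ∉ asymptoticCone C ∧
      u ∉ tangentCone C q ∧ w ∉ tangentCone C q := by
  have hlt : dim C < Nat.card (Fin 2) := by
    rw [hdim, Nat.card_fin]
    exact one_lt_two
  obtain ⟨q, hq, htangent⟩ := hC.exists_notMem_tangentCone hdim.ge hlt
  obtain ⟨w, hwasymp, hwq⟩ := exists_notMem_and_notMem isClosed_asymptoticCone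
    (isClosed_tangentCone q) (hC.exists_notMem_asymptoticCone hlt) htangent
  have hw : w ≠ 0 := by
    rintro rfl
    exact hwasymp (zero_mem_asymptoticCone hC.nonempty)
  have hline : IsClosed {u : Fin 2 → K | u 0 * w 1 = w 0 * u 1} :=
    ((isRegular_coord 0).mul (isRegular_const _)).isClosed_eq
      ((isRegular_const _).mul (isRegular_coord 1))
  have hline' : ∃ u, u ∉ {u : Fin 2 → K | u 0 * w 1 = w 0 * u 1} := by
    by_contra! hall
    have h₀ := hall ![0, 1]
    have h₁ := hall ![1, 0]
    refine hw (funext fun k => ?_)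
    fin_cases k
    · simpa [eq_comm] using h₀
    · simpa using h₁
  obtain ⟨u, huw, huq⟩ := exists_notMem_and_notMem hline (isClosed_tangentCone q) hline' htangent
  exact ⟨q, hq, u, w, huw, hwasymp, huq, hwq⟩

theorem IsIrredClosed.exists_linearEquiv_isInGeneralPosition (hC : IsIrredClosed C)
    (hdim : dim C = 1) :
    ∃ L : (Fin 2 → K) ≃ₗ[K] Fin 2 → K, IsInGeneralPosition (L ⁻¹' C) := by
  obtain ⟨q, hq, u, w, huw, hwasymp, huq, hwq⟩ := hC.exists_directions_notMem_cones hdim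
  obtain ⟨L, rfl, rfl⟩ := exists_linearEquiv_vec_apply_eq huw
  exact ⟨L, fun h => hwasymp (map_mem_asymptoticCone L.toLinearMap h),
    hC.finite_setOf_mem_tangentCone_preimage hdim.le L hq hwq,
    hC.finite_setOf_mem_tangentCone_preimage hdim.le L hq huq⟩

theorem IsIrredClosed.exists_mvPolynomial_eval_eq_zero (hC : IsIrredClosed C) (hdim : dim C = 1) :
    ∃ f : MvPolynomial (Fin 2) K, f ≠ 0 ∧ ∀ v ∈ C, MvPolynomial.eval v f = 0 := by
  have := infinite_of_nontrivial (X := K)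
  obtain ⟨L, hL⟩ := hC.exists_linearEquiv_isInGeneralPosition hdim
  obtain ⟨f, hf, hzero⟩ := hL.exists_mvPolynomial_eval_eq_zero (hC.preimage_linearEquiv L)
    ((hC.dim_preimage_linearEquiv L).trans hdim)
  obtain ⟨g, hg⟩ := exists_mvPolynomial_eval_eq_eval_map L.symm.toLinearMap f
  refine ⟨g, ?_, fun v hv => (hg v).trans (hzero _ (by simpa using hv))⟩
  rintro rfl
  refine hf (MvPolynomial.funext fun v => ?_)
  simpa using (hg (L v)).symm

end CoordinateChange

end ZariskiGeometry

/-- Key lemma of Theorem 3: every plane curve of a Zariski geometry refining the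
Zariski topology on an algebraically closed field (a `τ_2`-closed irreducible subset of
`K²` of dimension 1) is contained in the zero set of a nonzero polynomial in `K[X,Y]`. -/
theorem plane_curve_contained_in_algebraic_curve
    {K : Type*} [Field K] [IsAlgClosed K] (Z : ZariskiGeometry K)
    (hrefine : ∀ (n : ℕ) (C : Set (Fin n → K)), ZariskiClosedSet K C → IsClosed[Z.τ n] C)
    (C : Set (Fin 2 → K)) (hCcl : IsClosed[Z.τ 2] C)
    (hCirr : @IsIrreducible _ (Z.τ 2) C)
    (hCdim : setKrullDim (Z.τ 2) C = 1) :
    ∃ f : MvPolynomial (Fin 2) K, f ≠ 0 ∧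
      C ⊆ {p : Fin 2 → K | MvPolynomial.eval p f = 0} := by
  let _ : ZariskiGeometry.HasZariskiGeometry K := ⟨Z⟩
  have : ZariskiGeometry.RefinesZariski K := ⟨hrefine⟩
  have hτ : ZariskiGeometry.instTopologicalSpacePower = Z.τ 2 :=
    ZariskiGeometry.instTopologicalSpacePower_fin 2
  rw [← hτ] at hCcl hCirr hCdim
  have hC : ZariskiGeometry.IsIrredClosed C := ⟨hCcl, hCirr⟩
  have hdim : ZariskiGeometry.dim C = 1 := by
    exact_mod_cast hC.topologicalKrullDim_eq_dim.symm.trans hCdim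
  exact hC.exists_mvPolynomial_eval_eq_zero hdim
end

section
/- Let K be an algebraically closed field and let f, g ∈ K[X,Y] be nonzero polynomials with no common irreducible factor, of total degrees d and e respectively. Then the set {p ∈ K² : f(p) = 0 and g(p) = 0} of common zeros of f and g is finite and has at most d·e elements. -/
/-!
Let `V n` be the space of polynomials of total degree at most `n`, and let `S` be a finite set of
common zeros of the coprime polynomials `f` and `g` of degrees `d` and `e`. For every `n` the space
`f * V (n + e) + g * V (n + d)` lies in `V (n + d + e)` and vanishes on `S`, and by coprimality the
two summands meet exactly in `f * g * V n`. As soon as `#S ≤ n`, the points of `S` impose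
independent conditions on polynomials of degree `n + d + e`, whence
`dim V (n + e) + dim V (n + d) - dim V n ≤ dim V (n + d + e) - #S`.
In two variables `dim V n = (n + 2).choose 2`, and the inequality reads `#S ≤ d * e`.
-/

open MvPolynomial Module
open scoped Finset

theorem encard_le_of_forall_finset_card_le {α : Type*} {s : Set α} {n : ℕ}
    (h : ∀ t : Finset α, ↑t ⊆ s → #t ≤ n) : s.encard ≤ n := by
  by_contra! hlt
  obtain ⟨t, hts, htn⟩ := Set.exists_subset_encard_eq (Order.add_one_le_of_lt hlt)
  lift t to Finset α using Set.finite_of_encard_eq_coe (k := n + 1) (mod_cast htn)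
  rw [Set.encard_coe_eq_coe_finsetCard] at htn
  have hcard : #t = n + 1 := mod_cast htn
  have := h t hts
  lia

theorem finrank_map_add_finrank_inf_ker {K V W : Type*} [DivisionRing K] [AddCommGroup V]
    [Module K V] [AddCommGroup W] [Module K W] (φ : V →ₗ[K] W) (P : Submodule K V)
    [FiniteDimensional K P] :
    finrank K (P.map φ) + finrank K (P ⊓ φ.ker : Submodule K V) = finrank K P := by
  rw [← (φ.domRestrict P).finrank_range_add_finrank_ker, LinearMap.range_domRestrict,
    LinearMap.ker_domRestrict, ← Submodule.finrank_map_subtype_eq, Submodule.map_comap_subtype]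

theorem choose_two_add_choose_two (n d e : ℕ) :
    (n + d + e + 2).choose 2 + (n + 2).choose 2 =
      (n + d + 2).choose 2 + (n + e + 2).choose 2 + d * e := by
  have choose_two (k : ℕ) : ((k + 2).choose 2 : ℚ) = (k + 2) * (k + 1) / 2 := by
    rw [Nat.cast_choose_two]
    push_cast
    ring
  qify
  simp only [choose_two]
  push_cast
  ring

section Dimension

variable (σ : Type*) [Fintype σ]

theorem card_finsupp_sum_le (n : ℕ) :
    Nat.card {s : σ →₀ ℕ | (s.sum fun _ k ↦ k) ≤ n} =
      (n + Fintype.card σ).choose (Fintype.card σ) := by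
  classical
  have hunion : {s : σ →₀ ℕ | (s.sum fun _ k ↦ k) ≤ n} =
      (Finset.range (n + 1)).biUnion (Finset.finsuppAntidiag (Finset.univ : Finset σ)) := by
    ext s
    simp [Finsupp.sum_fintype]
  have hdisj : (Finset.range (n + 1) : Set ℕ).PairwiseDisjoint
      (Finset.finsuppAntidiag (Finset.univ : Finset σ)) := by
    intro i _ j _ hij
    refine Finset.disjoint_left.mpr fun s hi hj ↦ hij ?_
    rw [← (Finset.mem_finsuppAntidiag.mp hi).1, (Finset.mem_finsuppAntidiag.mp hj).1]
  rw [hunion, Nat.card_coe_set_eq, Set.ncard_coe_finset, Finset.card_biUnion hdisj]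
  simp only [Finset.card_finsuppAntidiag_nat_eq_multichoose, Finset.card_univ,
    Nat.sum_range_multichoose]

theorem finrank_restrictTotalDegree (R : Type*) [CommRing R] [Nontrivial R] (n : ℕ) :
    finrank R (restrictTotalDegree σ R n) =
      (n + Fintype.card σ).choose (Fintype.card σ) :=
  (finrank_eq_nat_card_basis (basisRestrictSupport R _)).trans (card_finsupp_sum_le σ n)

end Dimension

section Interpolation

variable {σ R K : Type*} [CommSemiring R] [Field K]

/-- Simultaneous evaluation of polynomials at the points of the finite set `S`. -/
noncomputable def evalOn (S : Finset (σ → R)) : MvPolynomial σ R →ₗ[R] (S → R) :=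
  LinearMap.pi fun p ↦ (aeval (p : σ → R)).toLinearMap

@[simp]
theorem evalOn_apply (S : Finset (σ → R)) (h : MvPolynomial σ R) (p : S) :
    evalOn S h p = eval (p : σ → R) h := by
  simp [evalOn, aeval_eq_eval]

theorem exists_totalDegree_le_one_eval_eq_one_eval_eq_zero {p q : σ → K} (hpq : p ≠ q) :
    ∃ l : MvPolynomial σ K, l.totalDegree ≤ 1 ∧ eval p l = 1 ∧ eval q l = 0 := by
  obtain ⟨i, hi⟩ := Function.ne_iff.mp hpq
  refine ⟨(p i - q i)⁻¹ • (X i - C (q i)), ?_, ?_, ?_⟩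
  · calc
      _ ≤ (X i - C (q i)).totalDegree := totalDegree_smul_le _ _
      _ ≤ (X i : MvPolynomial σ K).totalDegree := totalDegree_sub_C_le _ _
      _ = 1 := totalDegree_X i
  · simp [smul_eval, inv_mul_cancel₀ (sub_ne_zero.mpr hi)]
  · simp [smul_eval]

theorem exists_totalDegree_le_card_eval_eq_one_eval_eq_zero {S : Finset (σ → K)} {p : σ → K}
    (hp : p ∉ S) :
    ∃ h : MvPolynomial σ K, h.totalDegree ≤ #S ∧ eval p h = 1 ∧ ∀ q ∈ S, eval q h = 0 := by
  have hne (q : S) : p ≠ q := fun hpq ↦ hp (hpq ▸ q.2)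
  choose l hdeg hone hzero using
    fun q : S ↦ exists_totalDegree_le_one_eval_eq_one_eval_eq_zero (hne q)
  refine ⟨∏ q, l q, ?_, ?_, fun q hq ↦ ?_⟩
  · calc
      _ ≤ ∑ q, (l q).totalDegree := totalDegree_finsetProd _ _
      _ ≤ ∑ _q : S, 1 := Finset.sum_le_sum fun q _ ↦ hdeg q
      _ = #S := by simp
  · simp [hone]
  · rw [map_prod]
    exact Finset.prod_eq_zero (i := ⟨q, hq⟩) (Finset.mem_univ _) (hzero _)

theorem map_evalOn_restrictTotalDegree {S : Finset (σ → K)} {n : ℕ} (hS : #S ≤ n) :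
    (restrictTotalDegree σ K n).map (evalOn S) = ⊤ := by
  classical
  rw [eq_top_iff, ← (Pi.basisFun K S).span_eq, Submodule.span_le]
  rintro _ ⟨p, rfl⟩
  obtain ⟨h, hdeg, hone, hzero⟩ :=
    exists_totalDegree_le_card_eval_eq_one_eval_eq_zero (Finset.notMem_erase p.1 S)
  refine ⟨h, (mem_restrictTotalDegree _ _ _).mpr ?_, ?_⟩
  · exact hdeg.trans (Finset.card_erase_le.trans hS)
  · ext q
    rcases eq_or_ne q p with rfl | hqp
    · simp [hone]
    · simp [hqp, hzero q (Finset.mem_erase.mpr ⟨Subtype.coe_ne_coe.mpr hqp, q.2⟩)]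

theorem card_add_finrank_restrictTotalDegree_inf_ker_evalOn [Finite σ] {S : Finset (σ → K)} {n : ℕ}
    (hS : #S ≤ n) :
    #S + finrank K (restrictTotalDegree σ K n ⊓ (evalOn S).ker : Submodule K _) =
      finrank K (restrictTotalDegree σ K n) := by
  rw [← finrank_map_add_finrank_inf_ker (evalOn S) (restrictTotalDegree σ K n),
    map_evalOn_restrictTotalDegree hS, finrank_top, finrank_pi, Fintype.card_coe]

end Interpolation

section BoundedMultiples

variable {σ R K : Type*} [CommRing R] [Field K]

/-- The submodule `f * V n` of the multiples of `f` whose cofactor can be chosen of total degree at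
most `n`; note that `n` bounds the cofactor and not the multiple. -/
noncomputable def boundedMultiples (f : MvPolynomial σ R) (n : ℕ) :
    Submodule R (MvPolynomial σ R) :=
  (restrictTotalDegree σ R n).map (LinearMap.mulLeft R f)

theorem mem_boundedMultiples {f h : MvPolynomial σ R} {n : ℕ} :
    h ∈ boundedMultiples f n ↔ ∃ a : MvPolynomial σ R, a.totalDegree ≤ n ∧ f * a = h := by
  simp [boundedMultiples, mem_restrictTotalDegree]

instance [Finite σ] (f : MvPolynomial σ R) (n : ℕ) : Module.Finite R (boundedMultiples f n) :=
  inferInstanceAs (Module.Finite R ((restrictTotalDegree σ R n).map _))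

theorem finrank_boundedMultiples [IsDomain R] {f : MvPolynomial σ R} (hf : f ≠ 0) (n : ℕ) :
    finrank R (boundedMultiples f n) = finrank R (restrictTotalDegree σ R n) :=
  (Submodule.equivMapOfInjective _ (mul_right_injective₀ hf) _).finrank_eq.symm

theorem boundedMultiples_le_restrictTotalDegree {f : MvPolynomial σ R} {n N : ℕ}
    (hN : f.totalDegree + n ≤ N) : boundedMultiples f n ≤ restrictTotalDegree σ R N := by
  intro h hh
  obtain ⟨a, ha, rfl⟩ := mem_boundedMultiples.mp hh
  rw [mem_restrictTotalDegree]
  exact (totalDegree_mul f a).trans (by lia)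

theorem boundedMultiples_le_ker_evalOn {f : MvPolynomial σ R} {S : Finset (σ → R)}
    (hS : ∀ p ∈ S, eval p f = 0) (n : ℕ) : boundedMultiples f n ≤ (evalOn S).ker := by
  intro h hh
  obtain ⟨a, -, rfl⟩ := mem_boundedMultiples.mp hh
  ext p
  simp [hS p p.2]

theorem boundedMultiples_inf_boundedMultiples [IsDomain R] [UniqueFactorizationMonoid R]
    {f g : MvPolynomial σ R} (hg : g ≠ 0) (hfg : IsRelPrime f g) (n : ℕ) :
    boundedMultiples f (n + g.totalDegree) ⊓ boundedMultiples g (n + f.totalDegree) =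
      boundedMultiples (f * g) n := by
  ext h
  simp only [Submodule.mem_inf, mem_boundedMultiples]
  constructor
  · rintro ⟨⟨a, ha, rfl⟩, b, -, hb⟩
    obtain ⟨c, rfl⟩ : g ∣ a := hfg.symm.dvd_of_dvd_mul_left ⟨b, hb.symm⟩
    refine ⟨c, ?_, mul_assoc f g c⟩
    rcases eq_or_ne c 0 with rfl | hc
    · simp
    · rw [totalDegree_mul_of_isDomain hg hc] at ha
      lia
  · rintro ⟨c, hc, rfl⟩
    have hgc := totalDegree_mul g c
    have hfc := totalDegree_mul f c
    exact ⟨⟨g * c, by lia, by ring⟩, f * c, by lia, by ring⟩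

variable [Finite σ]

theorem finrank_boundedMultiples_sup_boundedMultiples {f g : MvPolynomial σ K} (hf : f ≠ 0)
    (hg : g ≠ 0) (hfg : IsRelPrime f g) (n : ℕ) :
    finrank K (boundedMultiples f (n + g.totalDegree) ⊔
        boundedMultiples g (n + f.totalDegree) : Submodule K _) +
      finrank K (restrictTotalDegree σ K n) =
    finrank K (restrictTotalDegree σ K (n + g.totalDegree)) +
      finrank K (restrictTotalDegree σ K (n + f.totalDegree)) := by
  rw [← finrank_boundedMultiples (mul_ne_zero hf hg),
    ← boundedMultiples_inf_boundedMultiples hg hfg, Submodule.finrank_sup_add_finrank_inf_eq,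
    finrank_boundedMultiples hf, finrank_boundedMultiples hg]

theorem card_add_finrank_boundedMultiples_sup_le {f g : MvPolynomial σ K} {S : Finset (σ → K)}
    (hSf : ∀ p ∈ S, eval p f = 0) (hSg : ∀ p ∈ S, eval p g = 0) {n : ℕ}
    (hn : #S ≤ n + f.totalDegree + g.totalDegree) :
    #S + finrank K (boundedMultiples f (n + g.totalDegree) ⊔
        boundedMultiples g (n + f.totalDegree) : Submodule K _) ≤
      finrank K (restrictTotalDegree σ K (n + f.totalDegree + g.totalDegree)) := by
  rw [← card_add_finrank_restrictTotalDegree_inf_ker_evalOn hn]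
  gcongr
  have : FiniteDimensional K (restrictTotalDegree σ K (n + f.totalDegree + g.totalDegree) ⊓
      (evalOn S).ker : Submodule K _) := Submodule.finiteDimensional_inf_left _ _
  exact Submodule.finrank_mono <| sup_le
    (le_inf (boundedMultiples_le_restrictTotalDegree (by lia))
      (boundedMultiples_le_ker_evalOn hSf _))
    (le_inf (boundedMultiples_le_restrictTotalDegree (by lia))
      (boundedMultiples_le_ker_evalOn hSg _))

end BoundedMultiples

section Bezout

variable {K : Type*} [Field K] {f g : MvPolynomial (Fin 2) K}

theorem card_le_totalDegree_mul_totalDegree (hf : f ≠ 0) (hg : g ≠ 0) (hfg : IsRelPrime f g)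
    {S : Finset (Fin 2 → K)} (hSf : ∀ p ∈ S, eval p f = 0) (hSg : ∀ p ∈ S, eval p g = 0) :
    #S ≤ f.totalDegree * g.totalDegree := by
  have hsup := finrank_boundedMultiples_sup_boundedMultiples hf hg hfg #S
  have hle := card_add_finrank_boundedMultiples_sup_le (n := #S) hSf hSg (by lia)
  simp only [finrank_restrictTotalDegree, Fintype.card_fin] at hsup hle
  have hchoose := choose_two_add_choose_two #S f.totalDegree g.totalDegree
  lia

theorem bezout_bound_general (hf : f ≠ 0) (hg : g ≠ 0) (hfg : IsRelPrime f g) :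
    {p : Fin 2 → K | eval p f = 0 ∧ eval p g = 0}.Finite ∧
      {p : Fin 2 → K | eval p f = 0 ∧ eval p g = 0}.ncard ≤ f.totalDegree * g.totalDegree :=
  Set.encard_le_coe_iff_finite_ncard_le.mp <| encard_le_of_forall_finset_card_le fun _ hS ↦
    card_le_totalDegree_mul_totalDegree hf hg hfg (fun _ hp ↦ (hS hp).1) fun _ hp ↦ (hS hp).2

end Bezout

/-- The classical Bezout bound: if `f, g ∈ K[X,Y]` are nonzero polynomials over an
algebraically closed field with no common irreducible factor, of total degrees `d` and
`e`, then their set of common zeros in `K²` is finite, with at most `d * e` points. -/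
theorem bezout_bound {K : Type*} [Field K] [IsAlgClosed K]
    (f g : MvPolynomial (Fin 2) K) (hf : f ≠ 0) (hg : g ≠ 0)
    (hcoprime : ∀ q : MvPolynomial (Fin 2) K, Irreducible q → q ∣ f → ¬ q ∣ g)
    (d e : ℕ) (hd : f.totalDegree = d) (he : g.totalDegree = e) :
    ({p : Fin 2 → K | MvPolynomial.eval p f = 0 ∧ MvPolynomial.eval p g = 0}).Finite ∧
    ({p : Fin 2 → K | MvPolynomial.eval p f = 0 ∧ MvPolynomial.eval p g = 0}).ncard
      ≤ d * e := by
  subst hd he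
  exact bezout_bound_general hf hg <|
    WfDvdMonoid.isRelPrime_of_no_irreducible_factors (fun h ↦ hf h.1) hcoprime
end
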